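/- arXiv:2410.12907 — 2 statements merged into one kernel-verified Lean document; each statement's English description precedes it below -/
import Mathlib

section
/- The eleven meromorphic Jacobi forms a_0, a_2, a_3, a_4, b_0, b_1, b_2, b_3, b_4, b_5, b_6, viewed as meromorphic functions on ℍ × ℂ^8, are algebraically independent over ℂ. -/
noncomputable section

open Complex Finset

namespace E8Jacobi

/-- π as a complex number. -/
def πC : ℂ := Real.pi

/-- The E8 lattice as a subset of ℝ^8. -/
def E8Lattice : Set (Fin 8 → ℝ) :=
  {x | ((∀ i, ∃ n : ℤ, x i = n) ∨ (∀ i, ∃ n : ℤ, x i = n + 1/2)) ∧ ∃ m : ℤ, ∑ i, x i = 2 * m}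

/-- Complexification of a real vector. -/
def cv (x : Fin 8 → ℝ) : Fin 8 → ℂ := fun i => (x i : ℂ)

/-- The dot product on ℝ^8. -/
def dotR (x y : Fin 8 → ℝ) : ℝ := ∑ i, x i * y i

/-- The dot product on ℂ^8. -/
def dotC (z w : Fin 8 → ℂ) : ℂ := ∑ i, z i * w i

/-- The Weyl group W(E8): orthogonal matrices preserving the E8 lattice. -/
def WeylE8 : Set (Matrix (Fin 8) (Fin 8) ℝ) :=
  {M | (∀ x y, dotR (M.mulVec x) (M.mulVec y) = dotR x y) ∧
       (∀ x ∈ E8Lattice, M.mulVec x ∈ E8Lattice) ∧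
       (∀ x ∈ E8Lattice, ∃ y ∈ E8Lattice, M.mulVec y = x)}

/-- The complexified (ℂ-linear) action of a real matrix on ℂ^8. -/
def actC (M : Matrix (Fin 8) (Fin 8) ℝ) (z : Fin 8 → ℂ) : Fin 8 → ℂ :=
  fun i => ∑ j, (M i j : ℂ) * z j

/-- A W(E8)-invariant weak Jacobi form of weight `k` and index `m`. -/
structure IsWeakJacobiFormE8 (k : ℤ) (m : ℕ) (φ : ℂ → (Fin 8 → ℂ) → ℂ) : Prop where
  holo : DifferentiableOn ℂ (fun p : ℂ × (Fin 8 → ℂ) => φ p.1 p.2) {p | 0 < p.1.im}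
  weyl_inv : ∀ M ∈ WeylE8, ∀ τ : ℂ, 0 < τ.im → ∀ z, φ τ (actC M z) = φ τ z
  quasi_periodic : ∀ α ∈ E8Lattice, ∀ β ∈ E8Lattice, ∀ τ : ℂ, 0 < τ.im → ∀ z,
    φ τ (fun i => z i + τ * (α i : ℂ) + (β i : ℂ)) =
      Complex.exp (-(m : ℂ) * πC * I * (τ * dotC (cv α) (cv α) + 2 * dotC z (cv α))) * φ τ z
  modular : ∀ a b c d : ℤ, a * d - b * c = 1 → ∀ τ : ℂ, 0 < τ.im → ∀ z,
    φ (((a : ℂ) * τ + (b : ℂ)) / ((c : ℂ) * τ + (d : ℂ))) (fun i => z i / ((c : ℂ) * τ + (d : ℂ))) =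
      ((c : ℂ) * τ + (d : ℂ)) ^ k *
        Complex.exp ((m : ℂ) * πC * I * (c : ℂ) / ((c : ℂ) * τ + (d : ℂ)) * dotC z z) * φ τ z
  fourier : ∃ co : ℕ → E8Lattice → ℂ, ∀ τ : ℂ, 0 < τ.im → ∀ z,
    φ τ z = ∑' (n : ℕ) (w : E8Lattice), co n w *
      Complex.exp (2 * πC * I * dotC (cv w.1) z) * Complex.exp (2 * πC * I * τ) ^ n

/-- Membership in the ring J^{E8}_{*,*} of W(E8)-invariant weak Jacobi forms:
a finite sum of weak Jacobi forms of various weights and indices. -/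
def MemJE8 (φ : ℂ → (Fin 8 → ℂ) → ℂ) : Prop :=
  ∃ (n : ℕ) (k : Fin n → ℤ) (m : Fin n → ℕ) (ψ : Fin n → ℂ → (Fin 8 → ℂ) → ℂ),
    (∀ i, IsWeakJacobiFormE8 (k i) (m i) (ψ i)) ∧
    ∀ τ : ℂ, 0 < τ.im → ∀ z, φ τ z = ∑ i, ψ i τ z

/-- The nome q = e^{2πiτ}. -/
def qExp (τ : ℂ) : ℂ := Complex.exp (2 * πC * I * τ)

/-- The Eisenstein series E4. -/
def E4 (τ : ℂ) : ℂ :=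
  1 + 240 * ∑' n : ℕ+, (n : ℂ) ^ 3 * qExp τ ^ (n : ℕ) / (1 - qExp τ ^ (n : ℕ))

/-- The Eisenstein series E6. -/
def E6 (τ : ℂ) : ℂ :=
  1 - 504 * ∑' n : ℕ+, (n : ℂ) ^ 5 * qExp τ ^ (n : ℕ) / (1 - qExp τ ^ (n : ℕ))

/-- The modular discriminant Δ. -/
def Dl (τ : ℂ) : ℂ := (E4 τ ^ 3 - E6 τ ^ 2) / 1728

/-- The Dedekind eta function. -/
def etaF (τ : ℂ) : ℂ := Complex.exp (2 * πC * I * τ / 24) * ∏' n : ℕ, (1 - qExp τ ^ (n + 1))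

/-- The theta function of the E8 lattice. -/
def Theta (τ : ℂ) (z : Fin 8 → ℂ) : ℂ :=
  ∑' w : E8Lattice, Complex.exp (πC * I * τ * dotC (cv w.1) (cv w.1) + 2 * πC * I * dotC z (cv w.1))

/-- The Jacobi theta function θ1. -/
def th1 (z τ : ℂ) : ℂ :=
  I * ∑' n : ℤ, (-1 : ℂ) ^ n * Complex.exp (2 * πC * I * z * ((n : ℂ) - 1/2)) *
    Complex.exp (πC * I * τ * ((n : ℂ) - 1/2) ^ 2)

/-- The Jacobi theta function θ2. -/
def th2 (z τ : ℂ) : ℂ :=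
  ∑' n : ℤ, Complex.exp (2 * πC * I * z * ((n : ℂ) - 1/2)) *
    Complex.exp (πC * I * τ * ((n : ℂ) - 1/2) ^ 2)

/-- The Jacobi theta function θ3. -/
def th3 (z τ : ℂ) : ℂ :=
  ∑' n : ℤ, Complex.exp (2 * πC * I * z * (n : ℂ)) * Complex.exp (πC * I * τ * (n : ℂ) ^ 2)

/-- The Jacobi theta function θ4. -/
def th4 (z τ : ℂ) : ℂ :=
  ∑' n : ℤ, (-1 : ℂ) ^ n * Complex.exp (2 * πC * I * z * (n : ℂ)) *
    Complex.exp (πC * I * τ * (n : ℂ) ^ 2)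

/-- A1 = Θ(τ,z). -/
def A1 (τ : ℂ) (z : Fin 8 → ℂ) : ℂ := Theta τ z

/-- A_m for m = 2, 3, 5. -/
def AM (m : ℕ) (τ : ℂ) (z : Fin 8 → ℂ) : ℂ :=
  ((m : ℂ) ^ 3 / ((m : ℂ) ^ 3 + 1)) *
    (Theta ((m : ℂ) * τ) (fun i => (m : ℂ) * z i) +
      ((m : ℂ) ^ 4)⁻¹ * ∑ k ∈ Finset.range m, Theta ((τ + (k : ℂ)) / (m : ℂ)) z)

def A2 : ℂ → (Fin 8 → ℂ) → ℂ := AM 2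
def A3 : ℂ → (Fin 8 → ℂ) → ℂ := AM 3
def A5 : ℂ → (Fin 8 → ℂ) → ℂ := AM 5

/-- A4 = Θ(τ,2z). -/
def A4 (τ : ℂ) (z : Fin 8 → ℂ) : ℂ := Theta τ (fun i => 2 * z i)

def ee1 (τ : ℂ) : ℂ := (th3 0 τ ^ 4 + th4 0 τ ^ 4) / 12
def ee2 (τ : ℂ) : ℂ := (th2 0 τ ^ 4 - th4 0 τ ^ 4) / 12
def ee3 (τ : ℂ) : ℂ := (-th2 0 τ ^ 4 - th3 0 τ ^ 4) / 12
def h0 (τ : ℂ) : ℂ := th3 0 (2*τ) * th3 0 (6*τ) + th2 0 (2*τ) * th2 0 (6*τ)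

def B2 (τ : ℂ) (z : Fin 8 → ℂ) : ℂ :=
  (32/5) * (ee1 τ * Theta (2*τ) (fun i => 2 * z i)
    + (1/2^4) * ee3 τ * Theta (τ/2) z + (1/2^4) * ee2 τ * Theta ((τ+1)/2) z)

def B3 (τ : ℂ) (z : Fin 8 → ℂ) : ℂ :=
  (81/80) * (h0 τ ^ 2 * Theta (3*τ) (fun i => 3 * z i)
    - (1/3^5) * ∑ k ∈ Finset.range 3, h0 ((τ + (k:ℂ))/3) ^ 2 * Theta ((τ + (k:ℂ))/3) z)

def B4 (τ : ℂ) (z : Fin 8 → ℂ) : ℂ :=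
  (16/15) * (th4 0 (2*τ) ^ 4 * Theta (4*τ) (fun i => 4 * z i)
    - (1/2^4) * th4 0 (2*τ) ^ 4 * Theta (τ + 1/2) (fun i => 2 * z i)
    - (1/(2^2 * 4^4)) * ∑ k ∈ Finset.range 4, th2 0 ((τ + (k:ℂ))/2) ^ 4 * Theta ((τ + (k:ℂ))/4) z)

def B6 (τ : ℂ) (z : Fin 8 → ℂ) : ℂ :=
  (9/10) * (h0 τ ^ 2 * Theta (6*τ) (fun i => 6 * z i)
    + (1/2^4) * ∑ k ∈ Finset.range 2, h0 (τ + (k:ℂ)) ^ 2 * Theta ((3*τ + 3*(k:ℂ))/2) (fun i => 3 * z i)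
    - (1/(3 * 3^4)) * ∑ k ∈ Finset.range 3, h0 ((τ + (k:ℂ))/3) ^ 2 * Theta ((2*τ + 2*(k:ℂ))/3) (fun i => 2 * z i)
    - (1/(3 * 6^4)) * ∑ k ∈ Finset.range 6, h0 ((τ + (k:ℂ))/3) ^ 2 * Theta ((τ + (k:ℂ))/6) z)

/-- The nine basic W(E8)-invariant holomorphic Jacobi forms A1,…,A5,B2,…,B6. -/
def nineForms : Fin 9 → ℂ → (Fin 8 → ℂ) → ℂ := ![A1, A2, A3, A4, A5, B2, B3, B4, B6]

/- The basic meromorphic Jacobi forms a_i, b_j (Appendix A of the paper). -/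

def a0f (τ : ℂ) (_z : Fin 8 → ℂ) : ℂ := E4 τ / 12

def a2f (τ : ℂ) (z : Fin 8 → ℂ) : ℂ :=
  6 / (E4 τ * Dl τ) * (-(E4 τ) * A2 τ z + A1 τ z ^ 2)

def a3f (τ : ℂ) (z : Fin 8 → ℂ) : ℂ :=
  1 / (9 * E4 τ ^ 2 * Dl τ ^ 2) *
    (-7 * E4 τ ^ 2 * E6 τ * A3 τ z - 20 * E4 τ ^ 3 * B3 τ z
      - 9 * E4 τ * E6 τ * A1 τ z * A2 τ z + 30 * E4 τ ^ 2 * A1 τ z * B2 τ z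
      + 6 * E6 τ * A1 τ z ^ 3)

def a4f (τ : ℂ) (z : Fin 8 → ℂ) : ℂ :=
  1 / (288 * E4 τ ^ 3 * Dl τ ^ 3) *
    (576 * E4 τ ^ 3 * Dl τ * A4 τ z + 32256 * E4 τ ^ 2 * Dl τ * A1 τ z * A3 τ z
      - 9 * E4 τ ^ 5 * A2 τ z ^ 2 - 30 * E4 τ ^ 3 * E6 τ * A2 τ z * B2 τ z
      - 25 * E4 τ ^ 4 * B2 τ z ^ 2
      + (60 * E4 τ ^ 4 - 12 * E4 τ * E6 τ ^ 2) * A1 τ z ^ 2 * A2 τ z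
      + 80 * E4 τ ^ 2 * E6 τ * A1 τ z ^ 2 * B2 τ z
      + (-70 * E4 τ ^ 3 + 6 * E6 τ ^ 2) * A1 τ z ^ 4)

def b0f (τ : ℂ) (_z : Fin 8 → ℂ) : ℂ := E6 τ / 216

def b1f (τ : ℂ) (z : Fin 8 → ℂ) : ℂ := -4 / E4 τ * A1 τ z

def b2f (τ : ℂ) (z : Fin 8 → ℂ) : ℂ :=
  5 / (6 * E4 τ ^ 2 * Dl τ) * (E4 τ ^ 2 * B2 τ z - E6 τ * A1 τ z ^ 2)

def b3f (τ : ℂ) (z : Fin 8 → ℂ) : ℂ :=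
  1 / (108 * E4 τ ^ 3 * Dl τ ^ 2) *
    (-7 * E4 τ ^ 5 * A3 τ z - 20 * E4 τ ^ 3 * E6 τ * B3 τ z
      - 9 * E4 τ ^ 4 * A1 τ z * A2 τ z + 30 * E4 τ ^ 2 * E6 τ * A1 τ z * B2 τ z
      + (16 * E4 τ ^ 3 - 10 * E6 τ ^ 2) * A1 τ z ^ 3)

def b4f (τ : ℂ) (z : Fin 8 → ℂ) : ℂ :=
  1 / (1728 * E4 τ ^ 4 * Dl τ ^ 3) *
    (-8640 * E4 τ ^ 4 * Dl τ * B4 τ z + 138240 * E4 τ ^ 3 * Dl τ * A1 τ z * B3 τ z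
      + 9 * E4 τ ^ 5 * E6 τ * A2 τ z ^ 2 + 30 * E4 τ ^ 6 * A2 τ z * B2 τ z
      + 25 * E4 τ ^ 4 * E6 τ * B2 τ z ^ 2
      - 48 * E4 τ ^ 4 * E6 τ * A1 τ z ^ 2 * A2 τ z
      + (-140 * E4 τ ^ 5 + 60 * E4 τ ^ 2 * E6 τ ^ 2) * A1 τ z ^ 2 * B2 τ z
      + (74 * E4 τ ^ 3 * E6 τ - 10 * E6 τ ^ 3) * A1 τ z ^ 4)

def b5f (τ : ℂ) (z : Fin 8 → ℂ) : ℂ :=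
  1 / (72 * E4 τ ^ 5 * Dl τ ^ 3) *
    (-36288 * E4 τ ^ 4 * Dl τ * A5 τ z - 294 * E4 τ ^ 6 * A2 τ z * A3 τ z
      - 770 * E4 τ ^ 4 * E6 τ * B2 τ z * A3 τ z - 840 * E4 τ ^ 4 * E6 τ * A2 τ z * B3 τ z
      - 2200 * E4 τ ^ 5 * B2 τ z * B3 τ z + 168 * E4 τ ^ 5 * A1 τ z ^ 2 * A3 τ z
      + 480 * E4 τ ^ 3 * E6 τ * A1 τ z ^ 2 * B3 τ z - 621 * E4 τ ^ 5 * A1 τ z * A2 τ z ^ 2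
      + 3525 * E4 τ ^ 4 * A1 τ z * B2 τ z ^ 2 + 1224 * E4 τ ^ 4 * A1 τ z ^ 3 * A2 τ z
      - 240 * E4 τ ^ 2 * E6 τ * A1 τ z ^ 3 * B2 τ z
      + (-456 * E4 τ ^ 3 + 24 * E6 τ ^ 2) * A1 τ z ^ 5)

def b6f (τ : ℂ) (z : Fin 8 → ℂ) : ℂ :=
  1 / (4478976 * E4 τ ^ 6 * Dl τ ^ 5) *
    (-19906560 * E4 τ ^ 6 * Dl τ ^ 2 * B6 τ z
      - 188116992 * E4 τ ^ 4 * E6 τ * Dl τ ^ 2 * A1 τ z * A5 τ z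
      - 5184 * E4 τ ^ 7 * E6 τ * Dl τ * A2 τ z * A4 τ z
      - 8640 * E4 τ ^ 8 * Dl τ * B2 τ z * A4 τ z
      - 103680 * E4 τ ^ 8 * Dl τ * A2 τ z * B4 τ z
      - 172800 * E4 τ ^ 6 * E6 τ * Dl τ * B2 τ z * B4 τ z
      + 12672 * E4 τ ^ 6 * E6 τ * Dl τ * A1 τ z ^ 2 * A4 τ z
      + 17280 * (5 * E4 τ ^ 7 + 9 * E4 τ ^ 4 * E6 τ ^ 2) * Dl τ * A1 τ z ^ 2 * B4 τ z
      + 112896 * E4 τ ^ 7 * E6 τ * Dl τ * A3 τ z ^ 2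
      + 645120 * E4 τ ^ 8 * Dl τ * A3 τ z * B3 τ z
      + 921600 * E4 τ ^ 6 * E6 τ * Dl τ * B3 τ z ^ 2
      - 1717632 * E4 τ ^ 6 * E6 τ * Dl τ * A1 τ z * A2 τ z * A3 τ z
      - 362880 * (4 * E4 τ ^ 7 + 11 * E4 τ ^ 4 * E6 τ ^ 2) * Dl τ * A1 τ z * B2 τ z * A3 τ z
      + 483840 * (4 * E4 τ ^ 7 - 9 * E4 τ ^ 4 * E6 τ ^ 2) * Dl τ * A1 τ z * A2 τ z * B3 τ z
      - 11404800 * E4 τ ^ 5 * E6 τ * Dl τ * A1 τ z * B2 τ z * B3 τ z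
      + 1161216 * E4 τ ^ 5 * E6 τ * Dl τ * A1 τ z ^ 3 * A3 τ z
      - 92160 * (37 * E4 τ ^ 6 - 9 * E4 τ ^ 3 * E6 τ ^ 2) * Dl τ * A1 τ z ^ 3 * B3 τ z
      + (135 * E4 τ ^ 9 * E6 τ + 54 * E4 τ ^ 6 * E6 τ ^ 3) * A2 τ z ^ 3
      + (405 * E4 τ ^ 10 + 540 * E4 τ ^ 7 * E6 τ ^ 2) * A2 τ z ^ 2 * B2 τ z
      + 1575 * E4 τ ^ 8 * E6 τ * A2 τ z * B2 τ z ^ 2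
      + (375 * E4 τ ^ 9 + 500 * E4 τ ^ 6 * E6 τ ^ 2) * B2 τ z ^ 3
      + (-3159 * E4 τ ^ 8 * E6 τ + 1701 * E4 τ ^ 5 * E6 τ ^ 3) * A1 τ z ^ 2 * A2 τ z ^ 2
      + (-3060 * E4 τ ^ 9 - 1800 * E4 τ ^ 6 * E6 τ ^ 2) * A1 τ z ^ 2 * A2 τ z * B2 τ z
      + (6975 * E4 τ ^ 7 * E6 τ - 11025 * E4 τ ^ 4 * E6 τ ^ 3) * A1 τ z ^ 2 * B2 τ z ^ 2
      + (6768 * E4 τ ^ 7 * E6 τ - 3024 * E4 τ ^ 4 * E6 τ ^ 3) * A1 τ z ^ 4 * A2 τ z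
      + (4260 * E4 τ ^ 8 + 1800 * E4 τ ^ 5 * E6 τ ^ 2 + 180 * E4 τ ^ 2 * E6 τ ^ 4) * A1 τ z ^ 4 * B2 τ z
      + (-3692 * E4 τ ^ 6 * E6 τ + 504 * E4 τ ^ 3 * E6 τ ^ 3 - 12 * E6 τ ^ 5) * A1 τ z ^ 6)

/-- The Seiberg–Witten coefficients a_0, …, a_4 (a_1 = 0). -/
def aSW : ℕ → ℂ → (Fin 8 → ℂ) → ℂ
  | 0 => a0f
  | 2 => a2f
  | 3 => a3f
  | 4 => a4f
  | _ => fun _ _ => 0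

/-- The Seiberg–Witten coefficients b_0, …, b_6. -/
def bSW : ℕ → ℂ → (Fin 8 → ℂ) → ℂ
  | 0 => b0f
  | 1 => b1f
  | 2 => b2f
  | 3 => b3f
  | 4 => b4f
  | 5 => b5f
  | 6 => b6f
  | _ => fun _ _ => 0

/-- The translation parameter −b₁/(6b₀). -/
def uShift (τ : ℂ) (z : Fin 8 → ℂ) : ℂ := -(bSW 1 τ z) / (6 * bSW 0 τ z)

/-- The coefficients c_i. -/
def cSW (i : ℕ) (τ : ℂ) (z : Fin 8 → ℂ) : ℂ :=
  ∑ j ∈ Finset.range (i+1), aSW j τ z * (Nat.choose (4-j) (4-i) : ℂ) * uShift τ z ^ (i-j)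

/-- The coefficients d_j. -/
def dSW (j : ℕ) (τ : ℂ) (z : Fin 8 → ℂ) : ℂ :=
  ∑ l ∈ Finset.range (j+1), bSW l τ z * (Nat.choose (6-l) (6-j) : ℂ) * uShift τ z ^ (j-l)

/-- Points of the upper half-plane avoiding the zeros of E4, E6 and Δ
(where all the meromorphic Jacobi forms above are defined). -/
def GoodTau (τ : ℂ) : Prop := 0 < τ.im ∧ E4 τ ≠ 0 ∧ E6 τ ≠ 0 ∧ Dl τ ≠ 0

/-- The eleven generators a_0, a_2, a_3, a_4, b_0, …, b_6 of R. -/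
def abGens : Fin 11 → ℂ → (Fin 8 → ℂ) → ℂ :=
  ![aSW 0, aSW 2, aSW 3, aSW 4, bSW 0, bSW 1, bSW 2, bSW 3, bSW 4, bSW 5, bSW 6]

/-- The eleven generators c_0, …, c_4, d_0, d_2, …, d_6 of R̃. -/
def cdGens : Fin 11 → ℂ → (Fin 8 → ℂ) → ℂ :=
  ![cSW 0, cSW 1, cSW 2, cSW 3, cSW 4, dSW 0, dSW 2, dSW 3, dSW 4, dSW 5, dSW 6]

/-- Membership in the polynomial ring R = ℂ[a_0,a_2,a_3,a_4,b_0,…,b_6]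
(as meromorphic functions on ℍ × ℂ^8). -/
def MemR (φ : ℂ → (Fin 8 → ℂ) → ℂ) : Prop :=
  ∃ P : MvPolynomial (Fin 11) ℂ, ∀ τ : ℂ, GoodTau τ → ∀ z,
    φ τ z = MvPolynomial.eval (fun i => abGens i τ z) P

/-- Membership in the polynomial ring R̃ = ℂ[c_0,…,c_4,d_0,d_2,…,d_6]
(as meromorphic functions on ℍ × ℂ^8). -/
def MemRt (φ : ℂ → (Fin 8 → ℂ) → ℂ) : Prop :=
  ∃ P : MvPolynomial (Fin 11) ℂ, ∀ τ : ℂ, GoodTau τ → ∀ z,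
    φ τ z = MvPolynomial.eval (fun i => cdGens i τ z) P

/- Invariant theory of binary forms. -/

/-- `BinTrans n T α α'` says that `α'` is the coefficient family of the degree-`n`
binary form with coefficients `α` transformed by `T ∈ SL2(ℂ)`. -/
def BinTrans (n : ℕ) (T : Matrix (Fin 2) (Fin 2) ℂ) (α α' : ℕ → ℂ) : Prop :=
  ∀ u v : ℂ,
    ∑ j ∈ Finset.range (n+1), α' j * u ^ (n - j) * v ^ j
      = ∑ i ∈ Finset.range (n+1), α i * (T 0 0 * u + T 0 1 * v) ^ (n - i) *
          (T 1 0 * u + T 1 1 * v) ^ i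

/-- Variables for polynomials in the coefficients of a binary quartic and sextic. -/
abbrev SV := Fin 5 ⊕ Fin 7

/-- Evaluation of a polynomial in the coefficients of the quartic and sextic. -/
def evalSV (Φ : MvPolynomial SV ℂ) (α β : ℕ → ℂ) : ℂ :=
  MvPolynomial.eval (Sum.elim (fun i : Fin 5 => α i.1) (fun j : Fin 7 => β j.1)) Φ

/-- Membership in the ring of joint semiinvariants ℂ[V4 ⊕ V6]^{U2(ℂ)}. -/
def IsSemiinvRingElem (Φ : MvPolynomial SV ℂ) : Prop :=
  ∀ κ : ℂ, ∀ α α' β β' : ℕ → ℂ,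
    BinTrans 4 !![1, κ; 0, 1] α α' → BinTrans 6 !![1, κ; 0, 1] β β' →
      evalSV Φ α' β' = evalSV Φ α β

/-- Membership in the ring of joint invariants ℂ[V4 ⊕ V6]^{SL2(ℂ)}. -/
def IsInvRingElem (Φ : MvPolynomial SV ℂ) : Prop :=
  ∀ T : Matrix (Fin 2) (Fin 2) ℂ, T.det = 1 → ∀ α α' β β' : ℕ → ℂ,
    BinTrans 4 T α α' → BinTrans 6 T β β' → evalSV Φ α' β' = evalSV Φ α β

/-- Variables for joint covariants: coefficients of the two forms together with (u,v). -/
abbrev CVV := (Fin 5 ⊕ Fin 7) ⊕ Fin 2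

/-- Evaluation of a polynomial in the coefficients and (u,v). -/
def evalCov (Ψ : MvPolynomial CVV ℂ) (α β : ℕ → ℂ) (u v : ℂ) : ℂ :=
  MvPolynomial.eval
    (Sum.elim (Sum.elim (fun i : Fin 5 => α i.1) (fun j : Fin 7 => β j.1))
      (fun p : Fin 2 => if p = 0 then u else v)) Ψ

/-- Membership in the ring of joint covariants ℂ[V4 ⊕ V6 ⊕ ℂ²]^{SL2(ℂ)}. -/
def IsCovRingElem (Ψ : MvPolynomial CVV ℂ) : Prop :=
  ∀ T : Matrix (Fin 2) (Fin 2) ℂ, T.det = 1 → ∀ α α' β β' : ℕ → ℂ,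
    BinTrans 4 T α α' → BinTrans 6 T β β' → ∀ u v : ℂ,
      evalCov Ψ α' β' u v = evalCov Ψ α β (T 0 0 * u + T 0 1 * v) (T 1 0 * u + T 1 1 * v)

/-- â_i in ℂ[α, β, α₀⁻¹]. -/
def ahat (α : ℕ → ℂ) (i : ℕ) : ℂ :=
  ∑ j ∈ Finset.range (i+1), α j * (Nat.choose (4-j) (4-i) : ℂ) * (-(α 1)/(4 * α 0)) ^ (i-j)

/-- b̂_i in ℂ[α, β, α₀⁻¹]. -/
def bhat (α β : ℕ → ℂ) (i : ℕ) : ℂ :=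
  ∑ j ∈ Finset.range (i+1), β j * (Nat.choose (6-j) (6-i) : ℂ) * (-(α 1)/(4 * α 0)) ^ (i-j)

/-- ĉ_i in ℂ[α, β, β₀⁻¹]. -/
def chat (α β : ℕ → ℂ) (i : ℕ) : ℂ :=
  ∑ j ∈ Finset.range (i+1), α j * (Nat.choose (4-j) (4-i) : ℂ) * (-(β 1)/(6 * β 0)) ^ (i-j)

/-- d̂_i in ℂ[α, β, β₀⁻¹]. -/
def dhat (β : ℕ → ℂ) (i : ℕ) : ℂ :=
  ∑ j ∈ Finset.range (i+1), β j * (Nat.choose (6-j) (6-i) : ℂ) * (-(β 1)/(6 * β 0)) ^ (i-j)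

/-- The images of the eleven generators of R under ψ. -/
def hatGens (α β : ℕ → ℂ) : Fin 11 → ℂ :=
  ![ahat α 0, ahat α 2, ahat α 3, ahat α 4, bhat α β 0, bhat α β 1, bhat α β 2,
    bhat α β 3, bhat α β 4, bhat α β 5, bhat α β 6]

/-- The images of the eleven generators of R̃ under ψ̃. -/
def cdhatGens (α β : ℕ → ℂ) : Fin 11 → ℂ :=
  ![chat α β 0, chat α β 1, chat α β 2, chat α β 3, chat α β 4, dhat β 0, dhat β 2,
    dhat β 3, dhat β 4, dhat β 5, dhat β 6]

/-- Weights picking out the a-variables among the eleven generators. -/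
def wA : Fin 11 → ℕ := ![1, 1, 1, 1, 0, 0, 0, 0, 0, 0, 0]

/-- Weights picking out the b-variables among the eleven generators. -/
def wB : Fin 11 → ℕ := ![0, 0, 0, 0, 1, 1, 1, 1, 1, 1, 1]

/-- Weights picking out the α-variables. -/
def wSVα : SV → ℕ := Sum.elim (fun _ => 1) (fun _ => 0)

/-- Weights picking out the β-variables. -/
def wSVβ : SV → ℕ := Sum.elim (fun _ => 0) (fun _ => 1)

/-- A joint semiinvariant of the quartic and sextic, of degrees (da, db) and order ω. -/
def IsSemiinvOf (Φ : MvPolynomial SV ℂ) (da db : ℕ) (ω : ℤ) : Prop :=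
  MvPolynomial.IsWeightedHomogeneous wSVα Φ da ∧
  MvPolynomial.IsWeightedHomogeneous wSVβ Φ db ∧
  IsSemiinvRingElem Φ ∧
  ∀ l : ℂ, l ≠ 0 → ∀ α α' β β' : ℕ → ℂ,
    BinTrans 4 !![l, 0; 0, l⁻¹] α α' → BinTrans 6 !![l, 0; 0, l⁻¹] β β' →
      evalSV Φ α' β' = l ^ ω * evalSV Φ α β

/-- Substitution α_i ↦ a_i (with a_1 = 0), β_j ↦ b_j into a polynomial in (α, β). -/
def subAB (Φ : MvPolynomial SV ℂ) : ℂ → (Fin 8 → ℂ) → ℂ :=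
  fun τ z => MvPolynomial.eval
    (Sum.elim (fun i : Fin 5 => aSW i.1 τ z) (fun j : Fin 7 => bSW j.1 τ z)) Φ

/-- The graph of the map ψ_J : a Jacobi form φ = Q(a_i, b_j) is sent to the
polynomial Φ = Q(â_i, b̂_j). -/
def PsiJRel (φ : ℂ → (Fin 8 → ℂ) → ℂ) (Φ : MvPolynomial SV ℂ) : Prop :=
  ∃ Q : MvPolynomial (Fin 11) ℂ,
    (∀ τ : ℂ, GoodTau τ → ∀ z, φ τ z = MvPolynomial.eval (fun i => abGens i τ z) Q) ∧
    (∀ α β : ℕ → ℂ, α 0 ≠ 0 → evalSV Φ α β = MvPolynomial.eval (hatGens α β) Q)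

/-!
At a fixed `τ`, the Jacobi forms of positive index are obtained from the nine Sakai forms by a
triangular system of equations, solved for one or two of the nine at a time, in which the leading
coefficients or the determinant of the pair are nonzero multiples of products of powers of `E4` and
`Δ`. So they are algebraically independent along with the Sakai forms. The remaining forms `a_0` and
`b_0` are multiples of `E4` and `E6` and depend on `τ` only.

The quasi-periods of the Sakai forms multiply a form of index `m` by `t ^ m` for unboundedly many
`t`, so that a polynomial relation at `τ` holds on the image of `(t, z) ↦ t ^ m * φ z`. By the
inverse function theorem this image has interior, and the relation is trivial, as soon as the
Jacobian determinant of this map of `ℂ ^ 9` is nonzero somewhere. That is proved at one point by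
numerics with rigorous error bounds: the Jacobian matrix times an approximate inverse is close to
the unit matrix, hence strictly diagonally dominant. The point is chosen with all nomes of small
height, so that theta functions can be evaluated from rational data and one root of unity.

For `E4` and `E6` the factor `(τ + n) ^ k` of a modular transformation plays the role of `t ^ m`:
a relation splits into weighted-homogeneous parts, and these vanish since `E6 ^ 2 / E4 ^ 3` takes
infinitely many values.
-/

/-! ### Disc arithmetic -/

/-- A disc in `ℂ` given by natural numbers, used for rigorous numerics: in units of `2⁻⁶⁴` its
centre is `(a - b) + (c - d) * I` and its radius is `err`. Operations whose bounds need a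
smallness assumption clear the flag `valid` when it fails, and an invalid disc contains every
complex number. -/
structure Disc where
  valid : Bool
  a : ℕ
  b : ℕ
  c : ℕ
  d : ℕ
  err : ℕ

namespace Disc

/-- The number of units in `1`. -/
def scale : ℕ := 2 ^ 64

section Arithmetic

/- The kernel evaluates `Nat.add` and its relatives on literals by bignum arithmetic; having to
unfold the instances behind `+` first would more than double the time of the numerical checks. -/
local notation:65 m:65 "+ₙ" n:66 => Nat.add m n
local notation:65 m:65 "-ₙ" n:66 => Nat.sub m n
local notation:70 m:70 "*ₙ" n:71 => Nat.mul m n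
local notation:70 m:70 "/ₙ" n:71 => Nat.div m n

/-- An upper bound, in units, for the absolute value of the centre. -/
def mag (x : Disc) : ℕ := x.a +ₙ x.b +ₙ x.c +ₙ x.d

/-- The radius zero disc at a Gaussian integer. -/
def ofGaussian (g : GaussianInt) : Disc :=
  ⟨true, g.re.toNat * scale, (-g.re).toNat * scale, g.im.toNat * scale, (-g.im).toNat * scale, 0⟩

/-- A disc around the fraction `m / n`. -/
def frac (m n : ℕ) : Disc := ⟨true, m * scale / n, 0, 0, 0, 1⟩

instance : NatCast Disc := ⟨fun n => ofGaussian ⟨n, 0⟩⟩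

instance : Zero Disc := ⟨((0 : ℕ) : Disc)⟩

instance : One Disc := ⟨((1 : ℕ) : Disc)⟩

instance : Add Disc := ⟨fun x y =>
  ⟨x.valid && y.valid, x.a +ₙ y.a, x.b +ₙ y.b, x.c +ₙ y.c, x.d +ₙ y.d, x.err +ₙ y.err⟩⟩

instance : Neg Disc := ⟨fun x => ⟨x.valid, x.b, x.a, x.d, x.c, x.err⟩⟩

instance : Sub Disc := ⟨fun x y => x + -y⟩

-- Rounding the quotients by `scale` accounts for the three extra units of error.
instance : Mul Disc := ⟨fun x y =>
  let p := x.a *ₙ y.a +ₙ x.b *ₙ y.b +ₙ x.c *ₙ y.d +ₙ x.d *ₙ y.c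
  let n := x.a *ₙ y.b +ₙ x.b *ₙ y.a +ₙ x.c *ₙ y.c +ₙ x.d *ₙ y.d
  let r := x.a *ₙ y.c +ₙ x.c *ₙ y.a +ₙ x.b *ₙ y.d +ₙ x.d *ₙ y.b
  let s := x.a *ₙ y.d +ₙ x.d *ₙ y.a +ₙ x.b *ₙ y.c +ₙ x.c *ₙ y.b
  ⟨x.valid && y.valid, (p -ₙ n) /ₙ scale, (n -ₙ p) /ₙ scale, (r -ₙ s) /ₙ scale, (s -ₙ r) /ₙ scale,
    (x.mag *ₙ y.err +ₙ y.mag *ₙ x.err +ₙ x.err *ₙ y.err) /ₙ scale +ₙ 3⟩⟩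

end Arithmetic

/-- The power `x ^ n` by repeated squaring, for `n < 2 ^ k`. -/
def powSq : ℕ → Disc → ℕ → Disc
  | 0, _, _ => 1
  | k + 1, x, n =>
    let y := powSq k (x * x) (n / 2)
    if n % 2 = 0 then y else y * x

instance : NPow Disc := ⟨fun n x => powSq (n.log2 + 1) x n⟩

/-- The sum of the first `n` terms of a sequence of discs. -/
def sum : ℕ → (ℕ → Disc) → Disc
  | 0, _ => 0
  | n + 1, f => sum n f + f n

/-- A test implying that every point of the disc is within `1 / 20` of `n`. -/
def near (x : Disc) (n : ℕ) : Prop :=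
  let y := x - n
  y.valid ∧ 20 * ((y.a - y.b) + (y.b - y.a) + (y.c - y.d) + (y.d - y.c) + y.err) ≤ scale

instance (x : Disc) (n : ℕ) : Decidable (x.near n) := by unfold near; infer_instance

/-- The centre of a disc, in units. -/
def centre (x : Disc) : ℂ := (x.a - x.b : ℝ) + (x.c - x.d : ℝ) * I

instance : Membership ℂ Disc :=
  ⟨fun x z => x.valid → ‖z * scale - x.centre‖ ≤ x.err⟩

lemma scale_pos : (0 : ℝ) < scale := by simp [scale]

lemma scale_ne_zero : (scale : ℂ) ≠ 0 := by simp [scale]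

lemma norm_le_abs_add_abs (x y : ℝ) : ‖(x + y * I : ℂ)‖ ≤ |x| + |y| := by
  simpa using norm_le_abs_re_add_abs_im (x + y * I : ℂ)

lemma norm_centre_le (x : Disc) : ‖x.centre‖ ≤ x.mag := by
  refine (norm_le_abs_add_abs _ _).trans ?_
  have hab := abs_sub (x.a : ℝ) x.b
  have hcd := abs_sub (x.c : ℝ) x.d
  simp only [Nat.abs_cast] at hab hcd
  simp only [mag, Nat.add_eq, Nat.cast_add]
  linarith

lemma norm_mul_scale_le {x : Disc} {z : ℂ} (hz : z ∈ x) (hx : x.valid) :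
    ‖z‖ * scale ≤ x.mag + x.err :=
  calc ‖z‖ * scale = ‖x.centre + (z * scale - x.centre)‖ := by
        rw [add_sub_cancel, norm_mul, norm_natCast]
    _ ≤ x.mag + x.err := (norm_add_le _ _).trans (add_le_add x.norm_centre_le (hz hx))

lemma toNat_sub_toNat_neg (n : ℤ) : ((n.toNat : ℝ) - (-n).toNat) = n := by
  exact_mod_cast Int.toNat_sub_toNat_neg n

lemma mem_ofGaussian (g : GaussianInt) : g.toComplex ∈ ofGaussian g := fun _ => by
  have hcentre : (ofGaussian g).centre = g.toComplex * scale := by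
    simp only [centre, ofGaussian, Nat.cast_mul, ← sub_mul, toNat_sub_toNat_neg,
      GaussianInt.toComplex_def]
    push_cast
    ring
  rw [hcentre, sub_self, norm_zero]
  exact Nat.cast_nonneg _

lemma mem_natCast (n : ℕ) : (n : ℂ) ∈ (n : Disc) := by
  have h := mem_ofGaussian ⟨n, 0⟩
  rwa [GaussianInt.toComplex_def, Int.cast_natCast, Int.cast_zero, zero_mul, add_zero] at h

lemma mem_zero : (0 : ℂ) ∈ (0 : Disc) := Nat.cast_zero (R := ℂ) ▸ mem_natCast 0

lemma mem_one : (1 : ℂ) ∈ (1 : Disc) := Nat.cast_one (R := ℂ) ▸ mem_natCast 1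

lemma abs_div_sub_natDiv_le (m n : ℕ) : |(m / n : ℝ) - (m / n : ℕ)| ≤ 1 := by
  have h₁ := Nat.floor_le (show (0 : ℝ) ≤ m / n by positivity)
  have h₂ := Nat.lt_floor_add_one (m / n : ℝ)
  rw [Nat.floor_div_eq_div] at h₁ h₂
  rw [abs_le]
  constructor <;> linarith

lemma mem_frac (m n : ℕ) : (m / n : ℂ) ∈ frac m n := fun _ => by
  have h := abs_div_sub_natDiv_le (m * scale) n
  simp only [frac, centre, Nat.cast_zero, sub_zero, Nat.cast_one, ofReal_zero, zero_mul, add_zero]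
  rw [← Real.norm_eq_abs, ← norm_real] at h
  convert h using 2
  push_cast
  ring

lemma mem_neg {x : Disc} {z : ℂ} (hz : z ∈ x) : -z ∈ -x := fun hx => by
  have hcentre : (-x).centre = -x.centre := by
    change ((x.b - x.a : ℝ) + (x.d - x.c : ℝ) * I : ℂ) = -((x.a - x.b : ℝ) + (x.c - x.d : ℝ) * I)
    push_cast
    ring
  rw [hcentre, neg_mul, ← neg_sub', norm_neg]
  exact hz hx

variable {x y : Disc} {z w : ℂ}

lemma valid_of_add (h : (x + y).valid) : x.valid ∧ y.valid := (Bool.and_eq_true _ _).mp h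

lemma valid_of_mul (h : (x * y).valid) : x.valid ∧ y.valid := (Bool.and_eq_true _ _).mp h

lemma centre_add (x y : Disc) : (x + y).centre = x.centre + y.centre := by
  change (((x.a + y.a : ℕ) - (x.b + y.b : ℕ) : ℝ) + ((x.c + y.c : ℕ) - (x.d + y.d : ℕ) : ℝ) * I : ℂ)
    = ((x.a - x.b : ℝ) + (x.c - x.d : ℝ) * I) + ((y.a - y.b : ℝ) + (y.c - y.d : ℝ) * I)
  push_cast
  ring

lemma mem_add (hz : z ∈ x) (hw : w ∈ y) : z + w ∈ x + y := fun h => by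
  obtain ⟨hx, hy⟩ := valid_of_add h
  have herr : ((x + y).err : ℝ) = x.err + y.err := Nat.cast_add _ _
  rw [centre_add, herr, add_mul, add_sub_add_comm]
  exact (norm_add_le _ _).trans (add_le_add (hz hx) (hw hy))

lemma mem_sub (hz : z ∈ x) (hw : w ∈ y) : z - w ∈ x - y :=
  sub_eq_add_neg z w ▸ mem_add hz (mem_neg hw)

lemma abs_sub_div_sub_le (p n k : ℕ) :
    |((p - n : ℝ) / k) - (((p - n) / k : ℕ) - ((n - p) / k : ℕ))| ≤ 1 := by
  rcases le_total n p with h | h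
  · have := abs_div_sub_natDiv_le (p - n) k
    simpa [Nat.sub_eq_zero_of_le h, Nat.cast_sub h] using this
  · have := abs_div_sub_natDiv_le (n - p) k
    rw [Nat.cast_sub h, abs_sub_comm] at this
    rw [Nat.sub_eq_zero_of_le h, Nat.zero_div, Nat.cast_zero, zero_sub, sub_neg_eq_add,
      ← neg_sub (n : ℝ), neg_div, neg_add_eq_sub]
    exact this

lemma norm_centre_mul_centre_sub_le (x y : Disc) :
    ‖x.centre * y.centre / scale - (x * y).centre‖ ≤ 2 := by
  set p := x.a * y.a + x.b * y.b + x.c * y.d + x.d * y.c with hp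
  set n := x.a * y.b + x.b * y.a + x.c * y.c + x.d * y.d with hn
  set r := x.a * y.c + x.c * y.a + x.b * y.d + x.d * y.b with hr
  set s := x.a * y.d + x.d * y.a + x.b * y.c + x.c * y.b with hs
  have hcentre : (x * y).centre = ((((p - n) / scale : ℕ) - ((n - p) / scale : ℕ) : ℝ) : ℂ)
      + ((((r - s) / scale : ℕ) - ((s - r) / scale : ℕ) : ℝ) : ℂ) * I := rfl
  have hprod : x.centre * y.centre = (p - n : ℝ) + (r - s : ℝ) * I := by
    simp only [centre, hp, hn, hr, hs]
    push_cast
    linear_combination ((x.c : ℂ) - x.d) * (y.c - y.d) * I_sq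
  have hsplit : x.centre * y.centre / scale - (x * y).centre
      = ((p - n : ℝ) / scale - (((p - n) / scale : ℕ) - ((n - p) / scale : ℕ)) : ℝ)
        + ((r - s : ℝ) / scale - (((r - s) / scale : ℕ) - ((s - r) / scale : ℕ)) : ℝ) * I := by
    rw [hcentre, hprod]
    push_cast
    ring
  rw [hsplit]
  linarith [norm_le_abs_add_abs
    ((p - n : ℝ) / scale - (((p - n) / scale : ℕ) - ((n - p) / scale : ℕ)))
    ((r - s : ℝ) / scale - (((r - s) / scale : ℕ) - ((s - r) / scale : ℕ))),
    abs_sub_div_sub_le p n scale, abs_sub_div_sub_le r s scale]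

lemma norm_mul_sub_centre_mul_centre_le (hz : z ∈ x) (hw : w ∈ y) (hx : x.valid) (hy : y.valid) :
    ‖z * scale * (w * scale) - x.centre * y.centre‖
      ≤ x.mag * y.err + y.mag * x.err + x.err * y.err :=
  calc _ = ‖x.centre * (w * scale - y.centre) + y.centre * (z * scale - x.centre)
            + (z * scale - x.centre) * (w * scale - y.centre)‖ := by ring_nf
    _ ≤ _ := by
      refine norm_add₃_le.trans ?_
      simp only [norm_mul]
      gcongr
      exacts [x.norm_centre_le, hw hy, y.norm_centre_le, hz hx, hz hx, hw hy]

lemma mem_mul (hz : z ∈ x) (hw : w ∈ y) : z * w ∈ x * y := fun h => by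
  obtain ⟨hx, hy⟩ := valid_of_mul h
  set e := x.mag * y.err + y.mag * x.err + x.err * y.err
  have herr : ((x * y).err : ℝ) = (e / scale : ℕ) + 3 := by
    change ((e / scale + 3 : ℕ) : ℝ) = _
    push_cast
    rfl
  have hround := (abs_le.mp (abs_div_sub_natDiv_le e scale)).2
  have hdist : ‖(z * scale * (w * scale) - x.centre * y.centre) / scale‖ ≤ e / scale := by
    rw [norm_div, norm_natCast]
    gcongr
    exact_mod_cast norm_mul_sub_centre_mul_centre_le hz hw hx hy
  calc ‖z * w * scale - (x * y).centre‖
      = ‖(z * scale * (w * scale) - x.centre * y.centre) / scale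
          + (x.centre * y.centre / scale - (x * y).centre)‖ := by
        rw [sub_div, sub_add_sub_cancel, mul_mul_mul_comm, ← mul_assoc,
          mul_div_cancel_right₀ _ scale_ne_zero]
    _ ≤ e / scale + 2 :=
        (norm_add_le _ _).trans (add_le_add hdist (norm_centre_mul_centre_sub_le x y))
    _ ≤ (x * y).err := by linarith

lemma mem_powSq (hz : z ∈ x) {k n : ℕ} (hn : n < 2 ^ k) : z ^ n ∈ powSq k x n := by
  induction k generalizing z x n with
  | zero =>
    rw [Nat.lt_one_iff.mp hn, pow_zero]
    exact mem_one
  | succ k ih =>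
    have hy := ih (mem_mul hz hz) (Nat.div_lt_of_lt_mul (pow_succ' 2 k ▸ hn))
    rw [← sq, ← pow_mul] at hy
    rw [powSq]
    split_ifs with h
    · rwa [Nat.mul_div_cancel' (Nat.dvd_of_mod_eq_zero h)] at hy
    · have hodd : Odd n := Nat.odd_iff.mpr (Nat.mod_two_ne_zero.mp h)
      simpa only [← pow_succ, Nat.two_mul_div_two_add_one_of_odd hodd] using mem_mul hy hz

lemma mem_pow (hz : z ∈ x) (n : ℕ) : z ^ n ∈ x ^ n := mem_powSq hz Nat.lt_log2_self

lemma mem_sum {f : ℕ → ℂ} {F : ℕ → Disc} {n : ℕ} (h : ∀ i < n, f i ∈ F i) :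
    ∑ i ∈ range n, f i ∈ sum n F := by
  induction n with
  | zero => exact mem_zero
  | succ n ih =>
    rw [sum_range_succ]
    exact mem_add (ih fun i hi => h i (by omega)) (h n n.lt_succ_self)

lemma norm_sub_natCast_le_of_near {n : ℕ} (hz : z ∈ x) (h : x.near n) : ‖z - n‖ ≤ 1 / 20 := by
  set y := x - n
  obtain ⟨hvalid, hsmall⟩ : y.valid ∧
    20 * ((y.a - y.b) + (y.b - y.a) + (y.c - y.d) + (y.d - y.c) + y.err) ≤ scale := h
  have habs (k l : ℕ) : |(k - l : ℝ)| = ((k - l : ℕ) + (l - k : ℕ) : ℕ) := by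
    rcases le_total k l with h | h
    · simp [abs_sub_comm (k : ℝ), Nat.sub_eq_zero_of_le h, Nat.cast_sub h, h]
    · simp [Nat.sub_eq_zero_of_le h, Nat.cast_sub h, h]
  have hcentre : ‖y.centre‖ ≤ |(y.a - y.b : ℝ)| + |(y.c - y.d : ℝ)| := norm_le_abs_add_abs _ _
  have hbound : ‖z - n‖ * scale ≤ ‖y.centre‖ + y.err := by
    calc ‖z - n‖ * scale = ‖y.centre + ((z - n) * scale - y.centre)‖ := by
          rw [add_sub_cancel, norm_mul, norm_natCast]
      _ ≤ _ := (norm_add_le _ _).trans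
        (add_le_add_right (mem_sub hz (mem_natCast n) hvalid) _)
  rw [habs, habs] at hcentre
  have hsmall' : (20 * ((y.a - y.b) + (y.b - y.a) + (y.c - y.d) + (y.d - y.c) + y.err : ℕ) : ℝ)
      ≤ scale := by exact_mod_cast hsmall
  rw [← mul_le_mul_iff_left₀ scale_pos]
  push_cast at hsmall' hcentre
  linarith

end Disc

/-! ### Theta functions of one variable -/

/-- The general term of `partialTheta`. -/
def partialThetaTerm (p u : ℂ) (n : ℕ) : ℂ := p ^ n.choose 2 * u ^ n

/-- The partial theta series `∑ p ^ (n (n - 1) / 2) u ^ n` over the natural numbers. -/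
def partialTheta (p u : ℂ) : ℂ := ∑' n, partialThetaTerm p u n

/-- The image of the partial theta series under the Euler operator `u d/du`. -/
def partialThetaEuler (p u : ℂ) : ℂ := ∑' n : ℕ, n * partialThetaTerm p u n

section PartialTheta

variable {p u : ℂ}

lemma partialThetaTerm_succ (p u : ℂ) (n : ℕ) :
    partialThetaTerm p u (n + 1) = u * partialThetaTerm p (u * p) n := by
  simp only [partialThetaTerm, Nat.choose_succ_succ' n 1, Nat.choose_one_right]
  ring

lemma partialThetaTerm_succ' (p u : ℂ) (n : ℕ) :
    partialThetaTerm p u (n + 1) = partialThetaTerm p u n * (u * p ^ n) := by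
  simp only [partialThetaTerm, Nat.choose_succ_succ' n 1, Nat.choose_one_right]
  ring

lemma norm_partialThetaTerm_le (hp : ‖p‖ < 1) (n : ℕ) : ‖partialThetaTerm p u n‖ ≤ ‖u‖ ^ n := by
  rw [partialThetaTerm, norm_mul, norm_pow, norm_pow]
  exact mul_le_of_le_one_left (by positivity) (pow_le_one₀ (norm_nonneg _) hp.le)

lemma summable_partialThetaEuler (hp : ‖p‖ < 1) (u : ℂ) :
    Summable fun n : ℕ => n * partialThetaTerm p u n := by
  have hratio : Filter.Tendsto (fun n : ℕ => ‖u * p ^ n‖) Filter.atTop (nhds 0) := by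
    simpa using ((tendsto_pow_atTop_nhds_zero_of_norm_lt_one hp).const_mul u).norm
  refine summable_of_ratio_norm_eventually_le (r := 1 / 2) (by norm_num) ?_
  filter_upwards [hratio.eventually (gt_mem_nhds (show (0 : ℝ) < 1 / 4 by norm_num)),
    Filter.eventually_ge_atTop 1] with n hn hn1
  have hsucc : ‖((n + 1 : ℕ) : ℂ)‖ ≤ 2 * ‖(n : ℂ)‖ := by
    rw [norm_natCast, norm_natCast]
    exact_mod_cast (by omega : n + 1 ≤ 2 * n)
  calc ‖((n + 1 : ℕ) : ℂ) * partialThetaTerm p u (n + 1)‖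
      = ‖((n + 1 : ℕ) : ℂ)‖ * (‖partialThetaTerm p u n‖ * ‖u * p ^ n‖) := by
        rw [partialThetaTerm_succ', norm_mul, norm_mul (partialThetaTerm p u n)]
    _ ≤ (2 * ‖(n : ℂ)‖) * (‖partialThetaTerm p u n‖ * (1 / 4)) := by gcongr
    _ = 1 / 2 * ‖(n : ℂ) * partialThetaTerm p u n‖ := by rw [norm_mul]; ring

lemma summable_partialTheta (hp : ‖p‖ < 1) (u : ℂ) : Summable (partialThetaTerm p u) := by
  refine Summable.of_norm_bounded_eventually_nat (summable_partialThetaEuler hp u).norm ?_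
  filter_upwards [Filter.eventually_ge_atTop 1] with n hn
  rw [norm_mul, norm_natCast]
  exact le_mul_of_one_le_left (norm_nonneg _) (by exact_mod_cast hn)

lemma partialTheta_eq_one_add (hp : ‖p‖ < 1) (u : ℂ) :
    partialTheta p u = 1 + u * partialTheta p (u * p) := by
  rw [partialTheta, (summable_partialTheta hp u).tsum_eq_zero_add]
  simp only [partialThetaTerm_succ, tsum_mul_left]
  simp [partialThetaTerm, partialTheta]

lemma partialThetaEuler_eq_mul (hp : ‖p‖ < 1) (u : ℂ) :
    partialThetaEuler p u = u * (partialTheta p (u * p) + partialThetaEuler p (u * p)) := by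
  rw [partialThetaEuler, (summable_partialThetaEuler hp u).tsum_eq_zero_add, partialTheta,
    partialThetaEuler, ← (summable_partialTheta hp (u * p)).tsum_add
    (summable_partialThetaEuler hp (u * p)), ← tsum_mul_left, Nat.cast_zero, zero_mul, zero_add]
  refine tsum_congr fun n => ?_
  rw [partialThetaTerm_succ]
  push_cast
  ring

lemma norm_partialThetaEuler_le (hp : ‖p‖ < 1) (hu : ‖u‖ ≤ 1 / 4) :
    ‖partialThetaEuler p u‖ ≤ 2 * ‖u‖ := by
  have hgeom := hasSum_coe_mul_geometric_of_norm_lt_one (r := ‖u‖)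
    (by rw [norm_norm]; linarith)
  have hle : ‖partialThetaEuler p u‖ ≤ ‖u‖ / (1 - ‖u‖) ^ 2 := by
    refine tsum_of_norm_bounded hgeom fun n => ?_
    rw [norm_mul, norm_natCast]
    gcongr
    exact norm_partialThetaTerm_le hp n
  refine hle.trans ?_
  have hsq : (9 / 16 : ℝ) ≤ (1 - ‖u‖) ^ 2 := by nlinarith
  rw [div_le_iff₀ (by linarith)]
  nlinarith [norm_nonneg u]

lemma norm_partialTheta_sub_one_le (hp : ‖p‖ < 1) (hu : ‖u‖ ≤ 1 / 4) :
    ‖partialTheta p u - 1‖ ≤ 2 * ‖u‖ := by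
  have hgeom := (hasSum_geometric_of_norm_lt_one (ξ := ‖u‖)
    (by rw [norm_norm]; linarith)).mul_left ‖u‖
  have hle : ‖∑' n, partialThetaTerm p u (n + 1)‖ ≤ ‖u‖ * (1 - ‖u‖)⁻¹ :=
    tsum_of_norm_bounded hgeom fun n =>
      (norm_partialThetaTerm_le hp _).trans_eq (pow_succ' _ _)
  have hzero : partialThetaTerm p u 0 = 1 := by simp [partialThetaTerm]
  rw [partialTheta, (summable_partialTheta hp u).tsum_eq_zero_add, hzero, add_sub_cancel_left]
  refine hle.trans ?_
  rw [← div_eq_mul_inv, div_le_iff₀ (by linarith)]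
  nlinarith [norm_nonneg u]

end PartialTheta

/-- The nome `exp (π i τ)`. -/
def nome (τ : ℂ) : ℂ := cexp (Real.pi * I * τ)

lemma nome_zero : nome 0 = 1 := by simp [nome]

lemma nome_add (a b : ℂ) : nome (a + b) = nome a * nome b := by
  rw [nome, mul_add, exp_add, nome, nome]

lemma nome_natCast_mul (n : ℕ) (a : ℂ) : nome (n * a) = nome a ^ n := by
  rw [nome, nome, ← exp_nat_mul, mul_left_comm]

lemma nome_neg (a : ℂ) : nome (-a) = (nome a)⁻¹ := by
  rw [nome, nome, mul_neg, exp_neg]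

lemma nome_one : nome 1 = -1 := by rw [nome, mul_one, exp_pi_mul_I]

lemma norm_nome (τ : ℂ) : ‖nome τ‖ = Real.exp (-Real.pi * τ.im) := by
  simp [nome, norm_exp]

lemma norm_nome_lt_one {τ : ℂ} (hτ : 0 < τ.im) : ‖nome τ‖ < 1 := by
  rw [norm_nome, Real.exp_lt_one_iff]
  nlinarith [Real.pi_pos]

lemma norm_nome_sq_lt_one {τ : ℂ} (hτ : 0 < τ.im) : ‖nome τ ^ 2‖ < 1 := by
  rw [norm_pow]
  exact pow_lt_one₀ (norm_nonneg _) (norm_nome_lt_one hτ) two_ne_zero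

lemma two_mul_choose_two_add (n : ℕ) : 2 * n.choose 2 + n = n * n := by
  rw [Nat.choose_two_right, Nat.mul_div_cancel' (Nat.even_mul_pred_self n).two_dvd]
  cases n <;> simp [Nat.mul_succ]

lemma jacobiTheta₂_term_natCast (n : ℕ) (z τ : ℂ) :
    jacobiTheta₂_term n z τ = partialThetaTerm (nome τ ^ 2) (nome (τ + 2 * z)) n := by
  rw [partialThetaTerm, nome_add, mul_pow, ← pow_mul, ← mul_assoc, ← pow_add,
    two_mul_choose_two_add, ← nome_natCast_mul, ← nome_natCast_mul, ← nome_add,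
    jacobiTheta₂_term, nome]
  congr 1
  push_cast
  ring

lemma jacobiTheta₂_term_neg (n : ℤ) (z τ : ℂ) :
    jacobiTheta₂_term (-n) z τ = jacobiTheta₂_term n (-z) τ := by
  simp only [jacobiTheta₂_term, Int.cast_neg]
  ring_nf

lemma jacobiTheta₂_eq_partialTheta {τ : ℂ} (hτ : 0 < τ.im) (z : ℂ) :
    jacobiTheta₂ z τ = partialTheta (nome τ ^ 2) (nome (τ + 2 * z))
      + partialTheta (nome τ ^ 2) (nome (τ + 2 * -z)) - 1 := by
  have hp := norm_nome_sq_lt_one hτ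
  have hsum := HasSum.of_nat_of_neg (f := fun n : ℤ => jacobiTheta₂_term n z τ)
    (by simpa only [jacobiTheta₂_term_natCast] using (summable_partialTheta hp _).hasSum)
    (by simpa only [jacobiTheta₂_term_neg, jacobiTheta₂_term_natCast] using
      (summable_partialTheta hp _).hasSum)
  refine ((hasSum_jacobiTheta₂_term z hτ).unique hsum).trans ?_
  simp [jacobiTheta₂_term, partialTheta]

lemma jacobiTheta₂'_eq_partialThetaEuler {τ : ℂ} (hτ : 0 < τ.im) (z : ℂ) :
    jacobiTheta₂' z τ = 2 * Real.pi * I * (partialThetaEuler (nome τ ^ 2) (nome (τ + 2 * z))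
        - partialThetaEuler (nome τ ^ 2) (nome (τ + 2 * -z))) := by
  have hp := norm_nome_sq_lt_one hτ
  have hterm (n : ℕ) : jacobiTheta₂'_term n z τ
      = 2 * Real.pi * I * (n * partialThetaTerm (nome τ ^ 2) (nome (τ + 2 * z)) n) := by
    rw [jacobiTheta₂'_term, jacobiTheta₂_term_natCast, Int.cast_natCast]
    ring
  have hterm_neg (n : ℕ) : jacobiTheta₂'_term (-(n : ℤ)) z τ
      = -(2 * Real.pi * I) * (n * partialThetaTerm (nome τ ^ 2) (nome (τ + 2 * -z)) n) := by
    rw [jacobiTheta₂'_term, jacobiTheta₂_term_neg, jacobiTheta₂_term_natCast]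
    push_cast
    ring
  have hsum := HasSum.of_nat_of_neg (f := fun n : ℤ => jacobiTheta₂'_term n z τ)
    (by simpa only [hterm] using (summable_partialThetaEuler hp _).hasSum.mul_left _)
    (by simpa only [hterm_neg] using (summable_partialThetaEuler hp _).hasSum.mul_left _)
  refine ((hasSum_jacobiTheta₂'_term z hτ).unique hsum).trans ?_
  simp [jacobiTheta₂'_term, partialThetaEuler]
  ring

namespace Disc

/-- Discs for `partialTheta p u` and `partialThetaEuler p u`, from `k` applications of the
functional equations relating `u` to `u * p`. -/
def partialTheta : ℕ → Disc → Disc → Disc × Disc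
  | 0, _, u =>
    let small := u.valid && decide (4 * (u.mag + u.err) ≤ scale)
    (⟨small, scale, 0, 0, 0, 2 * (u.mag + u.err)⟩, ⟨small, 0, 0, 0, 0, 2 * (u.mag + u.err)⟩)
  | k + 1, p, u =>
    let r := partialTheta k p (u * p)
    (1 + u * r.1, u * (r.1 + r.2))

/-- Discs for a Jacobi theta function and its logarithmic derivative, where `p = u * v` is the
square of the nome. -/
def theta (p u v : Disc) : Disc × Disc :=
  let r := partialTheta 8 p u
  let s := partialTheta 8 p v
  (r.1 + s.1 - 1, r.2 - s.2)

lemma mem_partialTheta {p u : ℂ} {P U : Disc} (hp : ‖p‖ < 1) (hP : p ∈ P) (hU : u ∈ U) (k : ℕ) :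
    E8Jacobi.partialTheta p u ∈ (partialTheta k P U).1 ∧
      partialThetaEuler p u ∈ (partialTheta k P U).2 := by
  induction k generalizing u U with
  | zero =>
    have hsmall (h : (U.valid && decide (4 * (U.mag + U.err) ≤ scale)) = true) :
        ‖u‖ ≤ 1 / 4 ∧ ‖u‖ * scale ≤ U.mag + U.err := by
      rw [Bool.and_eq_true, decide_eq_true_iff] at h
      have hnorm := norm_mul_scale_le hU h.1
      have hscale : (4 : ℝ) * (U.mag + U.err) ≤ scale := by exact_mod_cast h.2
      exact ⟨le_of_mul_le_mul_right (by linarith) scale_pos, hnorm⟩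
    have herr : ((2 * (U.mag + U.err) : ℕ) : ℝ) = 2 * (U.mag + U.err) := by push_cast; rfl
    constructor <;> intro h <;> obtain ⟨hu, hnorm⟩ := hsmall h <;>
      refine le_of_le_of_eq ?_ herr.symm
    · have hle := norm_partialTheta_sub_one_le hp hu
      have hcentre : (partialTheta 0 P U).1.centre = scale := by simp [partialTheta, centre]
      rw [hcentre, ← sub_one_mul, norm_mul, norm_natCast]
      nlinarith [scale_pos]
    · have hle := norm_partialThetaEuler_le hp hu
      have hcentre : (partialTheta 0 P U).2.centre = 0 := by simp [partialTheta, centre]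
      rw [hcentre, sub_zero, norm_mul, norm_natCast]
      nlinarith [scale_pos]
  | succ k ih =>
    obtain ⟨h, h'⟩ := ih (mem_mul hU hP)
    rw [partialTheta_eq_one_add hp, partialThetaEuler_eq_mul hp]
    exact ⟨mem_add mem_one (mem_mul hU h), mem_mul hU (mem_add h h')⟩

lemma mem_theta {τ z : ℂ} {P U V : Disc} (hτ : 0 < τ.im) (hP : E8Jacobi.nome τ ^ 2 ∈ P)
    (hU : E8Jacobi.nome (τ + 2 * z) ∈ U) (hV : E8Jacobi.nome (τ + 2 * -z) ∈ V) :
    jacobiTheta₂ z τ ∈ (theta P U V).1 ∧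
      jacobiTheta₂' z τ / (2 * Real.pi * I) ∈ (theta P U V).2 := by
  have hp := norm_nome_sq_lt_one hτ
  obtain ⟨hu, hu'⟩ := mem_partialTheta hp hP hU 8
  obtain ⟨hv, hv'⟩ := mem_partialTheta hp hP hV 8
  rw [jacobiTheta₂_eq_partialTheta hτ, jacobiTheta₂'_eq_partialThetaEuler hτ,
    mul_div_cancel_left₀ _ two_pi_I_ne_zero]
  exact ⟨mem_sub (mem_add hu hv) mem_one, mem_sub hu' hv'⟩

end Disc

/-! ### The E8 theta function as a sum of products -/

lemma hasSum_prod_of_summable {α : Type*} {m : ℕ} {f : Fin m → α → ℂ} (hf : ∀ i, Summable (f i)) :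
    HasSum (fun x : Fin m → α => ∏ i, f i (x i)) (∏ i, ∑' k, f i k) := by
  induction m with
  | zero => simp
  | succ m ih =>
    have htail := ih fun i => hf i.succ
    have hsummable : Summable fun p : α × (Fin m → α) => f 0 p.1 * ∏ i, f i.succ (p.2 i) := by
      apply summable_mul_of_summable_norm (hf 0).norm htail.summable.norm
    have hmul := (hf 0).hasSum.mul htail hsummable
    rw [← (Fin.consEquiv fun _ => α).hasSum_iff, Fin.prod_univ_succ]
    exact hmul.congr_fun fun x => by
      simp [Fin.prod_univ_succ, Fin.consEquiv]

lemma hasSum_prod_of_even_sum {m : ℕ} {f : Fin m → ℤ → ℂ} (hf : ∀ i, Summable (f i)) :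
    HasSum (fun n : {n : Fin m → ℤ | Even (∑ i, n i)} => ∏ i, f i (n.1 i))
      (1 / 2 * ∑ b ∈ range 2, ∏ i, ∑' k : ℤ, (-1) ^ (b * k) * f i k) := by
  have hsigned (b : ℕ) (i) : Summable fun k : ℤ => (-1 : ℂ) ^ (b * k) * f i k :=
    .of_norm (by simpa [norm_mul, norm_zpow] using (hf i).norm)
  have hsum := (hasSum_sum fun b (_ : b ∈ range 2) =>
    hasSum_prod_of_summable (hsigned b)).mul_left (1 / 2)
  refine (hasSum_subtype_iff_indicator (s := {n : Fin m → ℤ | Even (∑ i, n i)})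
    (f := fun n : Fin m → ℤ => ∏ i, f i (n i))).mpr ?_
  refine hsum.congr_fun fun n => ?_
  have hsign : ∏ i, (-1 : ℂ) ^ n i = (-1) ^ ∑ i, n i := by
    simp only [← exp_pi_mul_I, ← exp_int_mul, ← exp_sum, ← sum_mul, Int.cast_sum]
  by_cases hn : Even (∑ i, n i)
  · rw [Set.indicator_of_mem (by exact hn)]
    simp [sum_range_succ, prod_mul_distrib, hsign, hn.neg_one_zpow]
    ring
  · rw [Set.indicator_of_notMem (by exact hn)]
    simp [sum_range_succ, prod_mul_distrib, hsign, (Int.not_even_iff_odd.mp hn).neg_one_zpow]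

/-- The vector all of whose coordinates are those of `n` lowered by `a / 2`. -/
def halfShift (a : ℕ) (n : Fin 8 → ℤ) : Fin 8 → ℝ := fun i => n i - a / 2

lemma halfShift_injective (a : ℕ) : Function.Injective (halfShift a) := fun m n h =>
  funext fun i => by simpa [halfShift] using congrFun h i

lemma halfShift_mem_E8Lattice {a : ℕ} (ha : a < 2) {n : Fin 8 → ℤ} (hn : Even (∑ i, n i)) :
    halfShift a n ∈ E8Lattice := by
  obtain ⟨k, hk⟩ := hn
  have hsum : ∑ i, halfShift a n i = 2 * (k - 2 * a : ℤ) := by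
    have hk' : ∑ i, (n i : ℝ) = k + k := by exact_mod_cast hk
    simp only [halfShift, sum_sub_distrib, hk']
    push_cast [sum_const, card_univ, Fintype.card_fin, nsmul_eq_mul]
    ring
  refine ⟨?_, _, hsum⟩
  interval_cases a
  · exact .inl fun i => ⟨n i, by simp [halfShift]⟩
  · exact .inr fun i => ⟨n i - 1, by simp [halfShift]; ring⟩

lemma exists_halfShift_of_mem_E8Lattice {x : Fin 8 → ℝ} (hx : x ∈ E8Lattice) :
    ∃ a < 2, ∃ n : Fin 8 → ℤ, Even (∑ i, n i) ∧ halfShift a n = x := by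
  obtain ⟨h | h, m, hm⟩ := hx <;> choose n hn using h
  · refine ⟨0, two_pos, n, even_iff_two_dvd.mpr ⟨m, ?_⟩, funext fun i => by simp [halfShift, hn]⟩
    simp only [hn] at hm
    exact_mod_cast hm
  · refine ⟨1, one_lt_two, fun i => n i + 1, even_iff_two_dvd.mpr ⟨m + 2, ?_⟩,
      funext fun i => by simp only [halfShift, hn]; push_cast; ring⟩
    have hsum : (∑ i, (n i + 1 : ℝ)) = 2 * (m + 2) := by
      simp only [hn, sum_add_distrib, sum_const, card_univ, Fintype.card_fin] at hm ⊢
      norm_num at hm ⊢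
      linarith
    exact_mod_cast hsum

lemma E8Lattice_eq_iUnion :
    E8Lattice = ⋃ a ∈ range 2, halfShift a '' {n | Even (∑ i, n i)} := by
  ext x
  simp only [Set.mem_iUnion, mem_range, exists_prop]
  constructor
  · exact exists_halfShift_of_mem_E8Lattice
  · rintro ⟨a, ha, n, hn, rfl⟩
    exact halfShift_mem_E8Lattice ha hn

lemma pairwiseDisjoint_halfShift (s : Set (Fin 8 → ℤ)) :
    (range 2 : Set ℕ).PairwiseDisjoint fun a => halfShift a '' s := by
  intro a ha b hb hab
  refine Set.disjoint_left.mpr ?_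
  rintro _ ⟨n, -, rfl⟩ ⟨m, -, h⟩
  have h0 : (m 0 - b / 2 : ℝ) = n 0 - a / 2 := congrFun h 0
  have h1 : 2 * m 0 - b = 2 * n 0 - a := by
    have : ((2 * m 0 - b : ℤ) : ℝ) = (2 * n 0 - a : ℤ) := by push_cast; linarith
    exact_mod_cast this
  simp only [coe_range, Set.mem_Iio] at ha hb
  omega

/-- The theta function of one variable with half-integral characteristics `a / 2` and `b / 2`,
normalised so that its expansion involves only integral powers of `nome τ` and `nome x`. -/
def thetaChar (a b : ℕ) (τ x : ℂ) : ℂ :=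
  nome (-(a * x)) * jacobiTheta₂ (x + b / 2 - a * (τ / 2)) τ

lemma thetaChar_eq_tsum (a b : ℕ) (τ x : ℂ) : thetaChar a b τ x =
    ∑' k : ℤ, (-1) ^ (b * k) * (nome (-(a * x)) * jacobiTheta₂_term k (x - a * (τ / 2)) τ) := by
  rw [thetaChar, jacobiTheta₂, ← tsum_mul_left]
  refine tsum_congr fun k => ?_
  rw [mul_left_comm, ← exp_pi_mul_I, ← exp_int_mul, jacobiTheta₂_term, jacobiTheta₂_term,
    ← exp_add]
  congr 2
  push_cast
  ring

lemma exp_halfShift (a : ℕ) (τ : ℂ) (z : Fin 8 → ℂ) (n : Fin 8 → ℤ) :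
    cexp (πC * I * τ * dotC (cv (halfShift a n)) (cv (halfShift a n))
        + 2 * πC * I * dotC z (cv (halfShift a n)))
      = nome τ ^ (2 * a ^ 2) *
        ∏ i, (nome (-(a * z i)) * jacobiTheta₂_term (n i) (z i - a * (τ / 2)) τ) := by
  rw [← nome_natCast_mul]
  simp only [jacobiTheta₂_term, nome, πC, dotC, cv, halfShift, ← exp_add,
    ← exp_sum, Fin.sum_univ_eight]
  congr 1
  push_cast
  ring

theorem Theta_eq_sum_prod_thetaChar {τ : ℂ} (hτ : 0 < τ.im) (z : Fin 8 → ℂ) :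
    Theta τ z = 1 / 2 * ∑ a ∈ range 2, ∑ b ∈ range 2,
      nome τ ^ (2 * a ^ 2) * ∏ i, thetaChar a b τ (z i) := by
  set F : (Fin 8 → ℝ) → ℂ := fun w =>
    cexp (πC * I * τ * dotC (cv w) (cv w) + 2 * πC * I * dotC z (cv w))
  have hcoset (a : ℕ) : HasSum (F ∘ (↑) : (halfShift a '' {n | Even (∑ i, n i)}) → ℂ)
      (nome τ ^ (2 * a ^ 2) * (1 / 2 * ∑ b ∈ range 2, ∏ i, thetaChar a b τ (z i))) := by
    have hsum (i : Fin 8) : Summable fun k : ℤ =>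
        nome (-(a * z i)) * jacobiTheta₂_term k (z i - a * (τ / 2)) τ :=
      ((summable_jacobiTheta₂_term_iff _ _).mpr hτ).mul_left _
    have h := (hasSum_prod_of_even_sum hsum).mul_left (nome τ ^ (2 * a ^ 2))
    rw [← (Equiv.Set.image _ _ (halfShift_injective a)).hasSum_iff]
    simp only [thetaChar_eq_tsum]
    exact h.congr_fun fun n => exp_halfShift a τ z n
  have h := hasSum_sum_disjoint _ (pairwiseDisjoint_halfShift _) fun a _ => hcoset a
  rw [← E8Lattice_eq_iUnion] at h
  simp only [Theta, mul_sum] at h ⊢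
  refine h.tsum_eq.trans (sum_congr rfl fun a _ => sum_congr rfl fun b _ => ?_)
  ring

/-! ### Quasi-periodicity -/

/-- The lattice vector `(2 n, 0, …, 0)`. -/
def axisVec (n : ℤ) : Fin 8 → ℝ := Pi.single 0 (2 * n)

lemma halfShift_add_axisVec (a : ℕ) (n : Fin 8 → ℤ) (k : ℤ) :
    halfShift a n + axisVec k = halfShift a (n + Pi.single 0 (2 * k)) := by
  ext i
  rcases eq_or_ne i 0 with rfl | hi
  · simp only [halfShift, axisVec, Pi.add_apply, Pi.single_eq_same]
    push_cast
    ring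
  · simp [halfShift, axisVec, hi]

lemma add_axisVec_mem_E8Lattice {x : Fin 8 → ℝ} (hx : x ∈ E8Lattice) (k : ℤ) :
    x + axisVec k ∈ E8Lattice := by
  obtain ⟨a, ha, n, hn, rfl⟩ := exists_halfShift_of_mem_E8Lattice hx
  rw [halfShift_add_axisVec]
  refine halfShift_mem_E8Lattice ha ?_
  simpa [sum_add_distrib] using hn.add (even_two_mul k)

/-- Translation of the lattice by `(2 n, 0, …, 0)`. -/
def axisEquiv (n : ℤ) : E8Lattice ≃ E8Lattice where
  toFun w := ⟨w.1 + axisVec n, add_axisVec_mem_E8Lattice w.2 n⟩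
  invFun w := ⟨w.1 + axisVec (-n), add_axisVec_mem_E8Lattice w.2 (-n)⟩
  left_inv w := Subtype.ext (by simp [axisVec, add_assoc, ← Pi.single_add])
  right_inv w := Subtype.ext (by simp [axisVec, add_assoc, ← Pi.single_add])

/-- The vector `z + (2 s, 0, …, 0)`. Quasi-periodicity of Jacobi forms is used only for the
translations by `s = k` and `s = n τ` with integers `k` and `n`. -/
def axisShift (s : ℂ) (z : Fin 8 → ℂ) : Fin 8 → ℂ := z + Pi.single 0 (2 * s)

lemma exists_two_mul_eq_intCast {x : Fin 8 → ℝ} (hx : x ∈ E8Lattice) (i : Fin 8) :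
    ∃ n : ℤ, 2 * x i = n := by
  obtain ⟨a, -, n, -, rfl⟩ := exists_halfShift_of_mem_E8Lattice hx
  exact ⟨2 * n i - a, by simp only [halfShift]; push_cast; ring⟩

lemma Theta_axisShift_intCast (τ : ℂ) (z : Fin 8 → ℂ) (k : ℤ) :
    Theta τ (axisShift k z) = Theta τ z := by
  refine tsum_congr fun w => ?_
  obtain ⟨n, hn⟩ := exists_two_mul_eq_intCast w.2 0
  have hn' : (2 * w.1 0 : ℂ) = n := by exact_mod_cast hn
  have hdot : dotC (axisShift k z) (cv w.1) = dotC z (cv w.1) + (k * n : ℤ) := by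
    push_cast
    rw [← hn']
    simp [dotC, axisShift, cv, Fin.sum_univ_eight]
    ring
  rw [exp_eq_exp_iff_exists_int]
  exact ⟨k * n, by rw [hdot, πC]; ring⟩

lemma Theta_axisShift_intCast_mul (τ : ℂ) (z : Fin 8 → ℂ) (n : ℤ) :
    Theta τ (axisShift (n * τ) z) = nome (-(4 * n ^ 2 * τ + 4 * n * z 0)) * Theta τ z := by
  rw [Theta, Theta, ← (axisEquiv (-n)).tsum_eq, ← tsum_mul_left]
  refine tsum_congr fun w => ?_
  rw [nome, ← exp_add]
  congr 1
  simp [dotC, axisShift, cv, axisEquiv, axisVec, Fin.sum_univ_eight, πC]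
  ring

/-! ### The base point -/

/-- Gaussian integers whose halves are the numbers `exp (π i z_j)` at the base point `z`. -/
def baseData : ℕ → GaussianInt
  | 0 => ⟨1, 4⟩
  | 1 => ⟨-3, -2⟩
  | 2 => ⟨0, -1⟩
  | 3 => ⟨-4, 2⟩
  | 4 => ⟨-2, 4⟩
  | 5 => ⟨-2, 3⟩
  | 6 => ⟨4, 1⟩
  | _ => ⟨-4, -2⟩

lemma baseData_ne_zero (j : ℕ) : baseData j ≠ 0 := by
  unfold baseData
  split <;> decide

/-- The number `exp (π i z_j)` at the base point `z`. -/
def baseY (j : ℕ) : ℂ := (1 : ℕ) / (2 : ℕ) * (baseData j).toComplex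

lemma baseY_ne_zero (j : ℕ) : baseY j ≠ 0 :=
  mul_ne_zero (by norm_num) (by simpa using baseData_ne_zero j)

lemma inv_baseY (j : ℕ) : (baseY j)⁻¹ =
    (2 : ℕ) / ((baseData j).norm.natAbs : ℕ) * (star (baseData j)).toComplex := by
  have hnorm : (((baseData j).norm.natAbs : ℕ) : ℂ)
      = (baseData j).toComplex * (star (baseData j)).toComplex := by
    rw [← map_mul, ← Zsqrtd.norm_eq_mul_conj, map_intCast, ← Int.cast_natCast,
      Int.natAbs_of_nonneg (GaussianInt.norm_nonneg _)]
  have hY : (baseData j).toComplex ≠ 0 := by simpa using baseData_ne_zero j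
  have hV : (star (baseData j)).toComplex ≠ 0 := by simpa using baseData_ne_zero j
  rw [hnorm, baseY]
  push_cast
  field_simp

/-- The base point in `ℂ ^ 8`, at which the Jacobian of the nine forms is computed. -/
def basePt : Fin 8 → ℂ := fun j => log (baseY j) / (Real.pi * I)

lemma nome_basePt (j : Fin 8) : nome (basePt j) = baseY j := by
  rw [nome, basePt, mul_div_cancel₀ _ (mul_ne_zero (by exact_mod_cast Real.pi_ne_zero) I_ne_zero),
    exp_log (baseY_ne_zero j)]

/-- The base point in the upper half-plane. -/
def baseTau : ℂ := ((60 * -Real.log (61 / 64) / Real.pi : ℝ) : ℂ) * I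

lemma baseTau_im_pos : 0 < baseTau.im := by
  have hlog : Real.log (61 / 64) < 0 := Real.log_neg (by norm_num) (by norm_num)
  rw [baseTau, im_ofReal_mul, I_im, mul_one]
  exact div_pos (by linarith) Real.pi_pos

lemma nome_baseTau_div : nome (baseTau / 60) = (61 : ℕ) / (64 : ℕ) := by
  have hexponent : Real.pi * I * (baseTau / 60) = ((Real.log (61 / 64) : ℝ) : ℂ) := by
    have hpi : (Real.pi : ℂ) ≠ 0 := by exact_mod_cast Real.pi_ne_zero
    rw [baseTau]
    push_cast
    field_simp
    rw [I_sq]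
    ring
  rw [nome, hexponent, ← ofReal_exp, Real.exp_log (by norm_num)]
  norm_num

namespace Disc

lemma mem_of_norm_sub_mul_scale_le {z w : ℂ} {x : Disc} {e : ℕ} (hw : w ∈ x)
    (h : ‖z - w‖ * scale ≤ e) : z ∈ { x with err := x.err + e } := fun hx => by
  change ‖z * scale - x.centre‖ ≤ (x.err + e : ℕ)
  calc ‖z * scale - x.centre‖ = ‖(w * scale - x.centre) + (z - w) * scale‖ := by ring_nf
    _ ≤ x.err + e := by
      refine (norm_add_le _ _).trans (add_le_add (hw hx) ?_)
      rwa [norm_mul, norm_natCast]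
    _ = (x.err + e : ℕ) := by push_cast; rfl

/-- A disc around `π i`. -/
def piI : Disc := ⟨true, 0, 0, 57952155664616982739, 0, 2⟩

lemma mem_piI : Real.pi * I ∈ piI := fun _ => by
  have hcentre : (Real.pi * I * scale - piI.centre : ℂ)
      = ((Real.pi * scale - 57952155664616982739 : ℝ) : ℂ) * I := by
    simp only [piI, centre]
    push_cast
    ring
  have hlower := Real.pi_gt_d20
  have hupper := Real.pi_lt_d20
  rw [hcentre, norm_mul, norm_I, mul_one, norm_real, Real.norm_eq_abs, abs_le]
  norm_num [piI, scale] at hlower hupper ⊢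
  constructor <;> linarith

/-- A disc around `exp (π i / 60)`, from twelve terms of the exponential series. -/
def zeta : Disc :=
  let x := sum 12 fun n => (frac 1 60 * piI) ^ n * frac 1 n.factorial
  { x with err := x.err + 1 }

lemma mem_zeta : E8Jacobi.nome (1 / 60) ∈ zeta := by
  set x : ℂ := (1 : ℕ) / (60 : ℕ) * (Real.pi * I) with hx
  have hsum : ∑ n ∈ range 12, x ^ n * ((1 : ℕ) / (n.factorial : ℕ)) ∈
      sum 12 fun n => (frac 1 60 * piI) ^ n * frac 1 n.factorial :=
    mem_sum fun n _ => mem_mul (mem_pow (mem_mul (mem_frac 1 60) mem_piI) n) (mem_frac 1 _)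
  have hnome : E8Jacobi.nome (1 / 60) = cexp x := by
    rw [E8Jacobi.nome, hx]
    push_cast
    ring_nf
  have hnorm : ‖x‖ ≤ 1 / 19 := by
    simp only [hx, norm_mul, norm_div, norm_natCast, norm_real, norm_I, Real.norm_eq_abs,
      abs_of_pos Real.pi_pos]
    push_cast
    linarith [Real.pi_lt_d4]
  have hbound := exp_bound (x := x) (hnorm.trans (by norm_num)) (n := 12) (by norm_num)
  have hpow : ‖x‖ ^ 12 ≤ (1 / 19) ^ 12 := pow_le_pow_left₀ (norm_nonneg _) hnorm 12
  refine mem_of_norm_sub_mul_scale_le hsum ?_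
  rw [hnome]
  simp only [Nat.cast_one, mul_one_div]
  norm_num [Nat.factorial, scale] at hbound hpow ⊢
  nlinarith

/-- A disc around `nome ((c * τ + B) / N)` at the base point `τ`, where `N` divides `60`. -/
def nome (c N B : ℕ) : Disc := frac 61 64 ^ (60 * c / N) * zeta ^ (60 * B / N)

lemma mem_nome (c B : ℕ) {N : ℕ} (hN : N ∣ 60) :
    E8Jacobi.nome ((c * baseTau + B) / N) ∈ nome c N B := by
  obtain ⟨d, hd⟩ := hN
  have hNd : (N : ℂ) ≠ 0 ∧ (d : ℂ) ≠ 0 := by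
    constructor <;> rintro h <;> simp_all
  have hsplit : (c * baseTau + B) / N
      = ((d * c : ℕ) : ℂ) * (baseTau / 60) + ((d * B : ℕ) : ℂ) * (1 / 60) := by
    have h60 : (60 : ℂ) = N * d := by exact_mod_cast hd
    rw [h60]
    push_cast
    field_simp [hNd.1, hNd.2]
  have hdiv (m : ℕ) : 60 * m / N = d * m := by
    rw [hd, mul_assoc, Nat.mul_div_cancel_left _ (Nat.cast_ne_zero.mp hNd.1).bot_lt]
  rw [hsplit, nome_add, nome_natCast_mul, nome_natCast_mul, nome_baseTau_div, nome, hdiv, hdiv]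
  exact mem_mul (mem_pow (mem_frac 61 64) _) (mem_pow mem_zeta _)

/-- A disc around the `j`-th coordinate `baseY j`. -/
def baseY (j : ℕ) : Disc := frac 1 2 * ofGaussian (baseData j)

/-- A disc around the inverse of `baseY j`. -/
def baseV (j : ℕ) : Disc :=
  frac 2 (baseData j).norm.natAbs * ofGaussian (star (baseData j))

lemma mem_baseY (j : ℕ) : E8Jacobi.baseY j ∈ baseY j :=
  mem_mul (mem_frac 1 2) (mem_ofGaussian _)

lemma mem_baseV (j : ℕ) : (E8Jacobi.baseY j)⁻¹ ∈ baseV j :=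
  inv_baseY j ▸ mem_mul (mem_frac 2 _) (mem_ofGaussian _)

/-- A disc around `jacobiTheta₂ (-τ / 2) τ` when `q` encloses the nome of `τ`. -/
def theta2 (q : Disc) : Disc := (theta (q ^ 2) 1 (q ^ 2)).1

/-- A disc around `th3 0 τ` when `q` encloses the nome of `τ`. -/
def theta3 (q : Disc) : Disc := (theta (q ^ 2) q q).1

/-- A disc around `th4 0 τ` when `q` encloses the nome of `τ`. -/
def theta4 (q : Disc) : Disc := (theta (q ^ 2) (-q) (-q)).1

end Disc

lemma th2_zero (τ : ℂ) : th2 0 τ = nome (τ / 4) * jacobiTheta₂ (-(τ / 2)) τ := by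
  rw [th2, jacobiTheta₂, ← tsum_mul_left]
  refine tsum_congr fun n => ?_
  rw [jacobiTheta₂_term, nome, ← exp_add, ← exp_add, πC]
  ring_nf

lemma th3_zero (τ : ℂ) : th3 0 τ = jacobiTheta₂ 0 τ := by
  refine tsum_congr fun n => ?_
  rw [jacobiTheta₂_term, ← exp_add, πC]
  ring_nf

lemma th4_zero (τ : ℂ) : th4 0 τ = jacobiTheta₂ (1 / 2) τ := by
  refine tsum_congr fun n => ?_
  rw [jacobiTheta₂_term, ← exp_pi_mul_I, ← exp_int_mul, ← exp_add, ← exp_add, πC]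
  congr 1
  ring

/-- A function that is continuous at `baseTau`, with a disc containing its value there. -/
structure EnclosedAt (f : ℂ → ℂ) (F : Disc) : Prop where
  continuousAt : ContinuousAt f baseTau
  mem : f baseTau ∈ F

namespace EnclosedAt

variable {f g : ℂ → ℂ} {F G : Disc}

lemma congr (h : EnclosedAt f F) (hfg : ∀ τ, f τ = g τ) : EnclosedAt g F := funext hfg ▸ h

lemma const {c : ℂ} (h : c ∈ F) : EnclosedAt (fun _ => c) F := ⟨continuousAt_const, h⟩

lemma add (hf : EnclosedAt f F) (hg : EnclosedAt g G) : EnclosedAt (fun τ => f τ + g τ) (F + G) :=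
  ⟨hf.1.add hg.1, Disc.mem_add hf.2 hg.2⟩

lemma sub (hf : EnclosedAt f F) (hg : EnclosedAt g G) : EnclosedAt (fun τ => f τ - g τ) (F - G) :=
  ⟨hf.1.sub hg.1, Disc.mem_sub hf.2 hg.2⟩

lemma mul (hf : EnclosedAt f F) (hg : EnclosedAt g G) : EnclosedAt (fun τ => f τ * g τ) (F * G) :=
  ⟨hf.1.mul hg.1, Disc.mem_mul hf.2 hg.2⟩

lemma pow (hf : EnclosedAt f F) (n : ℕ) : EnclosedAt (fun τ => f τ ^ n) (F ^ n) :=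
  ⟨hf.1.pow n, Disc.mem_pow hf.2 n⟩

lemma sum {n : ℕ} {f : ℕ → ℂ → ℂ} {F : ℕ → Disc} (h : ∀ i < n, EnclosedAt (f i) (F i)) :
    EnclosedAt (fun τ => ∑ i ∈ range n, f i τ) (Disc.sum n F) :=
  ⟨tendsto_finsetSum _ fun i hi => (h i (mem_range.mp hi)).1, Disc.mem_sum fun i hi => (h i hi).2⟩

end EnclosedAt

lemma continuous_nome : Continuous nome := by unfold nome; fun_prop

/-- The arguments `(c * τ + B) / N` of the theta functions in the nine forms. -/
def heckeArg (c N B : ℕ) (τ : ℂ) : ℂ := (c * τ + B) / N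

lemma continuous_heckeArg (c N B : ℕ) : Continuous (heckeArg c N B) := by
  unfold heckeArg; fun_prop

lemma heckeArg_im_pos {c N : ℕ} (hc : 0 < c) (hN : 0 < N) (B : ℕ) {τ : ℂ} (hτ : 0 < τ.im) :
    0 < (heckeArg c N B τ).im := by
  have him : (heckeArg c N B τ).im = c * τ.im / N := by
    rw [heckeArg, div_natCast_im]
    simp
  rw [him]
  positivity

lemma enclosedAt_nome_heckeArg (c B : ℕ) {N : ℕ} (hN : N ∣ 60) :
    EnclosedAt (fun τ => nome (heckeArg c N B τ)) (Disc.nome c N B) :=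
  ⟨(continuous_nome.comp (continuous_heckeArg c N B)).continuousAt, Disc.mem_nome c B hN⟩

section ThetaConstants

variable {t : ℂ → ℂ} {Q : Disc}

lemma enclosedAt_jacobiTheta₂ {w : ℂ → ℂ} {U V : Disc} (ht : ContinuousAt t baseTau)
    (him : 0 < (t baseTau).im) (hw : ContinuousAt w baseTau) (hQ : nome (t baseTau) ∈ Q)
    (hU : nome (t baseTau + 2 * w baseTau) ∈ U) (hV : nome (t baseTau + 2 * -w baseTau) ∈ V) :
    EnclosedAt (fun τ => jacobiTheta₂ (w τ) (t τ)) (Disc.theta (Q ^ 2) U V).1 ∧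
      EnclosedAt (fun τ => jacobiTheta₂' (w τ) (t τ) / (2 * Real.pi * I))
        (Disc.theta (Q ^ 2) U V).2 := by
  obtain ⟨hmem, hmem'⟩ := Disc.mem_theta him (Disc.mem_pow hQ 2) hU hV
  have hpair : ContinuousAt (fun τ => (w τ, t τ)) baseTau := hw.prodMk ht
  have hcont := (continuousAt_jacobiTheta₂ (w baseTau) him).comp_of_eq hpair rfl
  have hcont' := (continuousAt_jacobiTheta₂' (w baseTau) him).comp_of_eq hpair rfl
  exact ⟨⟨hcont, hmem⟩, ⟨hcont'.div_const _, hmem'⟩⟩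

lemma enclosedAt_jacobiTheta₂_neg_half (ht : ContinuousAt t baseTau) (him : 0 < (t baseTau).im)
    (hQ : nome (t baseTau) ∈ Q) :
    EnclosedAt (fun τ => jacobiTheta₂ (-(t τ / 2)) (t τ)) (Disc.theta2 Q) := by
  refine (enclosedAt_jacobiTheta₂ (w := fun τ => -(t τ / 2)) ht him (ht.div_const 2).neg hQ
    ?_ ?_).1
  · rw [mul_neg, mul_div_cancel₀ _ two_ne_zero, add_neg_cancel, nome_zero]
    exact Disc.mem_one
  · rw [neg_neg, mul_div_cancel₀ _ two_ne_zero, nome_add, ← sq]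
    exact Disc.mem_pow hQ 2

lemma enclosedAt_th3_zero (ht : ContinuousAt t baseTau) (him : 0 < (t baseTau).im)
    (hQ : nome (t baseTau) ∈ Q) : EnclosedAt (fun τ => th3 0 (t τ)) (Disc.theta3 Q) := by
  simp only [th3_zero]
  exact (enclosedAt_jacobiTheta₂ ht him continuousAt_const hQ (by simpa using hQ)
    (by simpa using hQ)).1

lemma enclosedAt_th4_zero (ht : ContinuousAt t baseTau) (him : 0 < (t baseTau).im)
    (hQ : nome (t baseTau) ∈ Q) : EnclosedAt (fun τ => th4 0 (t τ)) (Disc.theta4 Q) := by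
  simp only [th4_zero]
  have hQ' := Disc.mem_neg hQ
  refine (enclosedAt_jacobiTheta₂ ht him continuousAt_const hQ ?_ ?_).1
  · rwa [mul_one_div_cancel two_ne_zero, nome_add, nome_one, mul_neg_one]
  · rwa [mul_neg, mul_one_div_cancel two_ne_zero, nome_add, nome_neg, nome_one, inv_neg_one,
      mul_neg_one]

lemma enclosedAt_th2_zero_pow (ht : ContinuousAt t baseTau) (him : 0 < (t baseTau).im)
    (hQ : EnclosedAt (fun τ => nome (t τ)) Q) :
    EnclosedAt (fun τ => th2 0 (t τ) ^ 4) (Q * Disc.theta2 Q ^ 4) := by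
  refine (hQ.mul ((enclosedAt_jacobiTheta₂_neg_half ht him hQ.mem).pow 4)).congr fun τ => ?_
  rw [th2_zero, mul_pow, ← nome_natCast_mul]
  push_cast
  rw [mul_div_cancel₀ _ (by norm_num)]

end ThetaConstants

/-- A disc around `h0 ((c * τ + B) / N)` at the base point `τ`. -/
def Disc.h0 (c N B : ℕ) : Disc :=
  let q := nome (2 * c) N (2 * B)
  let r := nome (6 * c) N (6 * B)
  theta3 q * theta3 r + q * (theta2 q * theta2 r)

lemma enclosedAt_h0 {c N : ℕ} (hc : 0 < c) (hN : N ∣ 60) (B : ℕ) :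
    EnclosedAt (fun τ => h0 (heckeArg c N B τ)) (Disc.h0 c N B) := by
  have hcont (k : ℕ) := (continuous_heckeArg (k * c) N (k * B)).continuousAt (x := baseTau)
  have him {k : ℕ} (hk : 0 < k) : 0 < (heckeArg (k * c) N (k * B) baseTau).im :=
    heckeArg_im_pos (by positivity) (Nat.pos_of_dvd_of_pos hN (by norm_num)) _ baseTau_im_pos
  have hq (k : ℕ) := enclosedAt_nome_heckeArg (k * c) (k * B) hN
  have h3 {k : ℕ} (hk : 0 < k) := enclosedAt_th3_zero (hcont k) (him hk) (hq k).mem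
  have h2 {k : ℕ} (hk : 0 < k) := enclosedAt_jacobiTheta₂_neg_half (hcont k) (him hk) (hq k).mem
  refine (((h3 two_pos).mul (h3 (k := 6) (by norm_num))).add
    ((hq 2).mul ((h2 two_pos).mul (h2 (k := 6) (by norm_num))))).congr fun τ => ?_
  have harg (k : ℕ) : heckeArg (k * c) N (k * B) τ = k * heckeArg c N B τ := by
    simp only [heckeArg]
    push_cast
    ring
  simp only [harg, h0, th2_zero]
  rw [mul_mul_mul_comm (nome _), ← nome_add]
  push_cast
  ring_nf

/-! ### Jets of the nine forms -/

lemma nome_two_mul_intCast (n : ℤ) : nome (2 * n) = 1 :=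
  exp_eq_one_iff.mpr ⟨n, by ring⟩

lemma hasDerivAt_nome (τ : ℂ) : HasDerivAt nome (Real.pi * I * nome τ) τ := by
  have h := ((hasDerivAt_id' τ).const_mul (Real.pi * I)).cexp
  rwa [mul_one, mul_comm (cexp _)] at h

/-- The derivative of `thetaChar a b τ`, divided by `π i`. -/
def thetaChar' (a b : ℕ) (τ x : ℂ) : ℂ :=
  nome (-(a * x)) * (2 * (jacobiTheta₂' (x + b / 2 - a * (τ / 2)) τ / (2 * Real.pi * I))
    - a * jacobiTheta₂ (x + b / 2 - a * (τ / 2)) τ)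

lemma hasStrictDerivAt_thetaChar (a b : ℕ) {τ : ℂ} (hτ : 0 < τ.im) (x : ℂ) :
    HasStrictDerivAt (thetaChar a b τ) (Real.pi * I * thetaChar' a b τ x) x := by
  have hderiv (y : ℂ) :
      HasDerivAt (thetaChar a b τ) (Real.pi * I * thetaChar' a b τ y) y := by
    have hlin : HasDerivAt (fun y : ℂ => -(a * y)) (-(a * 1)) y :=
      ((hasDerivAt_id' y).const_mul (a : ℂ)).fun_neg
    have htheta := (hasDerivAt_jacobiTheta₂_fst (y + (b / 2 - a * (τ / 2))) hτ).comp_add_const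
    have hmul := ((hasDerivAt_nome _).comp y hlin).mul htheta
    simp only [← add_sub_assoc] at hmul
    refine hmul.congr_deriv ?_
    have hpi : (Real.pi : ℂ) ≠ 0 := by exact_mod_cast Real.pi_ne_zero
    simp only [thetaChar', Function.comp_apply]
    field_simp
    ring
  have hdiff : Differentiable ℂ (thetaChar a b τ) := fun y => (hderiv y).differentiableAt
  exact (hdiff.analyticAt x).hasStrictDerivAt.congr_deriv (hderiv x).deriv

/-- The linear functional with coefficients `π i v 1, …, π i v n`; the entry `v 0` is reserved
for the value of a function whose derivative is `jetMap v`. -/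
def jetMap {n : ℕ} (v : ℕ → ℂ) : (Fin n → ℂ) →L[ℂ] ℂ :=
  ∑ i : Fin n, (Real.pi * I * v (i + 1)) • ContinuousLinearMap.proj i

section JetMap

variable {n : ℕ}

lemma jetMap_apply (v : ℕ → ℂ) (x : Fin n → ℂ) :
    jetMap v x = ∑ i : Fin n, Real.pi * I * v (i + 1) * x i := by
  simp [jetMap]

lemma jetMap_add (v w : ℕ → ℂ) : jetMap (n := n) (fun k => v k + w k) = jetMap v + jetMap w := by
  ext x
  simp only [jetMap_apply, add_apply, ← sum_add_distrib]
  exact sum_congr rfl fun i _ => by ring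

lemma jetMap_sub (v w : ℕ → ℂ) : jetMap (n := n) (fun k => v k - w k) = jetMap v - jetMap w := by
  ext x
  simp only [jetMap_apply, sub_apply, ← sum_sub_distrib]
  exact sum_congr rfl fun i _ => by ring

lemma jetMap_mul (c : ℂ) (v : ℕ → ℂ) : jetMap (n := n) (fun k => c * v k) = c • jetMap v := by
  ext x
  simp only [jetMap_apply, smul_apply, smul_eq_mul, mul_sum]
  exact sum_congr rfl fun i _ => by ring

/-- The coefficients of the `1`-jet of `z ↦ ∏ j, f j (z j)`, where `v j` and `d j` are the value
of `f j` and its derivative divided by `π i`. -/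
def prodRow (v d : Fin n → ℂ) (k : ℕ) : ℂ := ∏ j : Fin n, if k = j + 1 then d j else v j

lemma prodRow_zero (v d : Fin n → ℂ) : prodRow v d 0 = ∏ j, v j := by simp [prodRow]

lemma prodRow_succ (v d : Fin n → ℂ) (i : Fin n) :
    prodRow v d (i + 1) = (∏ j ∈ univ.erase i, v j) * d i := by
  rw [prodRow, ← mul_prod_erase univ _ (mem_univ i), if_pos rfl, mul_comm]
  congr 1
  refine prod_congr rfl fun j hj => if_neg fun h => ne_of_mem_erase hj (Fin.ext ?_)
  omega

lemma hasStrictFDerivAt_prod {f : Fin n → ℂ → ℂ} {d x : Fin n → ℂ}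
    (h : ∀ j, HasStrictDerivAt (f j) (Real.pi * I * d j) (x j)) :
    HasStrictFDerivAt (fun z : Fin n → ℂ => ∏ j, f j (z j))
      (jetMap (prodRow (fun j => f j (x j)) d)) x := by
  have hcoord (j : Fin n) : HasStrictFDerivAt (fun z : Fin n → ℂ => f j (z j))
      ((Real.pi * I * d j) • ContinuousLinearMap.proj (R := ℂ) (φ := fun _ : Fin n => ℂ) j) x :=
    (h j).comp_hasStrictFDerivAt x (hasStrictFDerivAt_apply j x)
  refine (HasStrictFDerivAt.finsetProd fun j _ => hcoord j).congr_fderiv ?_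
  refine sum_congr rfl fun i _ => ?_
  rw [prodRow_succ, smul_smul]
  congr 1
  ring

end JetMap

/-- The `1`-jet of `φ τ` at `basePt`, for `τ` in the upper half-plane, has coefficients that are
continuous in `τ` at `baseTau` and whose values there lie in the discs `r 0, r 1, …`. -/
def EnclosedJet (φ : ℂ → (Fin 8 → ℂ) → ℂ) (r : ℕ → Disc) : Prop :=
  ∃ g : ℕ → ℂ → ℂ, (∀ k, EnclosedAt (g k) (r k)) ∧ ∀ τ : ℂ, 0 < τ.im →
    φ τ basePt = g 0 τ ∧ HasStrictFDerivAt (φ τ) (jetMap fun k => g k τ) basePt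

namespace EnclosedJet

variable {φ ψ : ℂ → (Fin 8 → ℂ) → ℂ} {r s : ℕ → Disc}

lemma congr (h : EnclosedJet φ r) (hφ : ∀ τ : ℂ, 0 < τ.im → ∀ z, ψ τ z = φ τ z) :
    EnclosedJet ψ r := by
  obtain ⟨g, hg, hjet⟩ := h
  exact ⟨g, hg, fun τ hτ => funext (hφ τ hτ) ▸ hjet τ hτ⟩

lemma add (hφ : EnclosedJet φ r) (hψ : EnclosedJet ψ s) :
    EnclosedJet (fun τ z => φ τ z + ψ τ z) (fun k => r k + s k) := by
  obtain ⟨g, hg, hφ⟩ := hφ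
  obtain ⟨h, hh, hψ⟩ := hψ
  refine ⟨fun k τ => g k τ + h k τ, fun k => (hg k).add (hh k), fun τ hτ => ⟨?_, ?_⟩⟩
  · exact congrArg₂ _ (hφ τ hτ).1 (hψ τ hτ).1
  · rw [jetMap_add]
    exact (hφ τ hτ).2.add (hψ τ hτ).2

lemma sub (hφ : EnclosedJet φ r) (hψ : EnclosedJet ψ s) :
    EnclosedJet (fun τ z => φ τ z - ψ τ z) (fun k => r k - s k) := by
  obtain ⟨g, hg, hφ⟩ := hφ
  obtain ⟨h, hh, hψ⟩ := hψ
  refine ⟨fun k τ => g k τ - h k τ, fun k => (hg k).sub (hh k), fun τ hτ => ⟨?_, ?_⟩⟩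
  · exact congrArg₂ _ (hφ τ hτ).1 (hψ τ hτ).1
  · rw [jetMap_sub]
    exact (hφ τ hτ).2.sub (hψ τ hτ).2

lemma mul {c : ℂ → ℂ} {C : Disc} (hφ : EnclosedJet φ r) (hc : EnclosedAt c C) :
    EnclosedJet (fun τ z => c τ * φ τ z) (fun k => C * r k) := by
  obtain ⟨g, hg, hφ⟩ := hφ
  refine ⟨fun k τ => c τ * g k τ, fun k => hc.mul (hg k), fun τ hτ => ⟨?_, ?_⟩⟩
  · exact congrArg _ (hφ τ hτ).1
  · rw [jetMap_mul]
    exact (hφ τ hτ).2.const_mul (c τ)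

lemma sum {n : ℕ} {φ : ℕ → ℂ → (Fin 8 → ℂ) → ℂ} {r : ℕ → ℕ → Disc}
    (h : ∀ i < n, EnclosedJet (φ i) (r i)) :
    EnclosedJet (fun τ z => ∑ i ∈ range n, φ i τ z) (fun k => Disc.sum n fun i => r i k) := by
  induction n with
  | zero =>
    refine ⟨fun _ _ => 0, fun _ => .const Disc.mem_zero, fun τ _ => ⟨rfl, ?_⟩⟩
    refine (hasStrictFDerivAt_const 0 basePt).congr_fderiv ?_
    ext
    simp [jetMap_apply]
  | succ n ih =>
    simp only [sum_range_succ]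
    exact (ih fun i hi => h i (by omega)).add (h n (by omega))

end EnclosedJet

/-- The quasi-periodicity of a Jacobi form of index `m`, along the lattice vectors
`(2 n, 0, …, 0)`. -/
def HasIndex (m : ℕ) (φ : ℂ → (Fin 8 → ℂ) → ℂ) : Prop :=
  ∀ τ : ℂ, 0 < τ.im → ∀ (z : Fin 8 → ℂ) (n : ℤ),
    φ τ (axisShift (n * τ) z) = nome (-(4 * n ^ 2 * τ + 4 * n * z 0)) ^ m * φ τ z

namespace HasIndex

variable {m : ℕ} {φ ψ : ℂ → (Fin 8 → ℂ) → ℂ}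

lemma congr (h : HasIndex m φ) (hφ : ∀ τ : ℂ, 0 < τ.im → ∀ z, ψ τ z = φ τ z) : HasIndex m ψ :=
  fun τ hτ z n => by rw [hφ τ hτ, hφ τ hτ, h τ hτ]

lemma add (hφ : HasIndex m φ) (hψ : HasIndex m ψ) : HasIndex m fun τ z => φ τ z + ψ τ z :=
  fun τ hτ z n => by simp only [hφ τ hτ, hψ τ hτ, mul_add]

lemma sub (hφ : HasIndex m φ) (hψ : HasIndex m ψ) : HasIndex m fun τ z => φ τ z - ψ τ z :=
  fun τ hτ z n => by simp only [hφ τ hτ, hψ τ hτ, mul_sub]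

lemma mul (c : ℂ → ℂ) (hφ : HasIndex m φ) : HasIndex m fun τ z => c τ * φ τ z :=
  fun τ hτ z n => by simp only [hφ τ hτ, mul_left_comm]

lemma sum {n : ℕ} {φ : ℕ → ℂ → (Fin 8 → ℂ) → ℂ} (h : ∀ i < n, HasIndex m (φ i)) :
    HasIndex m fun τ z => ∑ i ∈ range n, φ i τ z := fun τ hτ z k => by
  rw [mul_sum]
  exact sum_congr rfl fun i hi => h i (mem_range.mp hi) τ hτ z k

end HasIndex

/-- A function of index `m` whose `1`-jet at the base point is enclosed by `r`. -/
structure EnclosedForm (m : ℕ) (φ : ℂ → (Fin 8 → ℂ) → ℂ) (r : ℕ → Disc) : Prop where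
  hasIndex : HasIndex m φ
  jet : EnclosedJet φ r

namespace EnclosedForm

variable {m n : ℕ} {φ ψ : ℂ → (Fin 8 → ℂ) → ℂ} {r s : ℕ → Disc}

lemma congr (h : EnclosedForm m φ r) (hφ : ∀ τ : ℂ, 0 < τ.im → ∀ z, ψ τ z = φ τ z) :
    EnclosedForm m ψ r := ⟨h.1.congr hφ, h.2.congr hφ⟩

lemma add (hφ : EnclosedForm m φ r) (hψ : EnclosedForm m ψ s) :
    EnclosedForm m (fun τ z => φ τ z + ψ τ z) (fun k => r k + s k) :=
  ⟨hφ.1.add hψ.1, hφ.2.add hψ.2⟩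

lemma sub (hφ : EnclosedForm m φ r) (hψ : EnclosedForm m ψ s) :
    EnclosedForm m (fun τ z => φ τ z - ψ τ z) (fun k => r k - s k) :=
  ⟨hφ.1.sub hψ.1, hφ.2.sub hψ.2⟩

lemma mul {c : ℂ → ℂ} {C : Disc} (hφ : EnclosedForm m φ r) (hc : EnclosedAt c C) :
    EnclosedForm m (fun τ z => c τ * φ τ z) (fun k => C * r k) :=
  ⟨hφ.1.mul c, hφ.2.mul hc⟩

lemma sum {φ : ℕ → ℂ → (Fin 8 → ℂ) → ℂ} {r : ℕ → ℕ → Disc}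
    (h : ∀ i < n, EnclosedForm m (φ i) (r i)) :
    EnclosedForm m (fun τ z => ∑ i ∈ range n, φ i τ z) (fun k => Disc.sum n fun i => r i k) :=
  ⟨.sum fun i hi => (h i hi).1, .sum fun i hi => (h i hi).2⟩

end EnclosedForm

namespace Disc

/-- The factor `j` of a product is enclosed by `(f j).1`, except the factor `k - 1`, which is
enclosed by `(f j).2`. -/
def prodRow (f : ℕ → Disc × Disc) (k : ℕ) : ℕ → Disc
  | 0 => 1
  | n + 1 => prodRow f k n * if k = n + 1 then (f n).2 else (f n).1

/-- Discs for `thetaChar a b τ (c * z j)` and for its derivative with respect to `z j` divided by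
`π i`, when `q` encloses the nome of `τ`. -/
def thetaChar (a b c : ℕ) (q : Disc) (j : ℕ) : Disc × Disc :=
  let t := theta (q ^ 2) ((-1) ^ b * q ^ (1 - a) * baseY j ^ (2 * c))
    ((-1) ^ b * q ^ (1 + a) * baseV j ^ (2 * c))
  let e := baseV j ^ (a * c)
  (e * t.1, c * (e * (2 * t.2 - a * t.1)))

/-- Discs for the `1`-jet of `z ↦ Theta ((c * τ + B) / N) (c * z)`. -/
def thetaRow (c N B : ℕ) (k : ℕ) : Disc :=
  let q := nome c N B
  frac 1 2 * sum 2 fun a => sum 2 fun b => q ^ (2 * a ^ 2) * prodRow (thetaChar a b c q) k 8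

end Disc

lemma enclosedAt_prodRow {n : ℕ} {v d : Fin n → ℂ → ℂ} {F : ℕ → Disc × Disc}
    (hv : ∀ j, EnclosedAt (v j) (F j).1) (hd : ∀ j, EnclosedAt (d j) (F j).2) (k : ℕ) :
    EnclosedAt (fun τ => prodRow (fun j => v j τ) (fun j => d j τ) k) (Disc.prodRow F k n) := by
  unfold prodRow
  induction n with
  | zero => simpa [Disc.prodRow] using EnclosedAt.const Disc.mem_one
  | succ n ih =>
    simp only [Fin.prod_univ_castSucc]
    refine (ih (fun j => hv j.castSucc) (fun j => hd j.castSucc)).mul ?_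
    simp only [Fin.val_last]
    split
    · exact hd (Fin.last n)
    · exact hv (Fin.last n)

section ThetaJet

variable {t : ℂ → ℂ} {Q : Disc}

lemma enclosedAt_thetaChar {a : ℕ} (ha : a < 2) (b c : ℕ) (ht : ContinuousAt t baseTau)
    (him : 0 < (t baseTau).im) (hQ : nome (t baseTau) ∈ Q) (j : Fin 8) :
    EnclosedAt (fun τ => thetaChar a b (t τ) (c * basePt j)) (Disc.thetaChar a b c Q j).1 ∧
      EnclosedAt (fun τ => c * thetaChar' a b (t τ) (c * basePt j))
        (Disc.thetaChar a b c Q j).2 := by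
  have hY := Disc.mem_baseY j
  have hV := Disc.mem_baseV j
  have hadd (s : ℂ) : s + 2 * (c * basePt j + b / 2 - a * (s / 2))
      = b * 1 + (1 - a : ℕ) * s + (2 * c : ℕ) * basePt j := by
    push_cast [Nat.cast_sub (Nat.lt_succ_iff.mp ha)]
    ring
  have hsub (s : ℂ) : s + 2 * -(c * basePt j + b / 2 - a * (s / 2))
      = b * (-1) + (1 + a : ℕ) * s + (2 * c : ℕ) * -basePt j := by
    push_cast
    ring
  obtain ⟨h, h'⟩ := enclosedAt_jacobiTheta₂ (w := fun τ => c * basePt j + b / 2 - a * (t τ / 2))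
    (U := (-1) ^ b * Q ^ (1 - a) * Disc.baseY j ^ (2 * c))
    (V := (-1) ^ b * Q ^ (1 + a) * Disc.baseV j ^ (2 * c)) ht him (by fun_prop) hQ
    (by
      simp only [hadd, nome_add, nome_natCast_mul, nome_one, nome_basePt]
      exact Disc.mem_mul (Disc.mem_mul (Disc.mem_pow (Disc.mem_neg Disc.mem_one) _)
        (Disc.mem_pow hQ _)) (Disc.mem_pow hY _))
    (by
      simp only [hsub, nome_add, nome_natCast_mul, nome_neg, nome_one, inv_neg_one, nome_basePt]
      exact Disc.mem_mul (Disc.mem_mul (Disc.mem_pow (Disc.mem_neg Disc.mem_one) _)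
        (Disc.mem_pow hQ _)) (Disc.mem_pow hV _))
  have hE : EnclosedAt (fun _ => nome (-(a * (c * basePt j)))) (Disc.baseV j ^ (a * c)) := by
    have hexp : -(a * (c * basePt j)) = (a * c : ℕ) * -basePt j := by
      push_cast
      ring
    rw [hexp, nome_natCast_mul, nome_neg, nome_basePt]
    exact .const (Disc.mem_pow hV _)
  exact ⟨hE.mul h, (EnclosedAt.const (Disc.mem_natCast c)).mul
    (hE.mul (((EnclosedAt.const (Disc.mem_natCast 2)).mul h').sub
      ((EnclosedAt.const (Disc.mem_natCast a)).mul h)))⟩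

lemma enclosedJet_prod_thetaChar {a : ℕ} (ha : a < 2) (b c : ℕ) (ht : ContinuousAt t baseTau)
    (him : ∀ τ : ℂ, 0 < τ.im → 0 < (t τ).im) (hQ : nome (t baseTau) ∈ Q) :
    EnclosedJet (fun τ z => ∏ j, thetaChar a b (t τ) (c * z j))
      (fun k => Disc.prodRow (Disc.thetaChar a b c Q) k 8) := by
  have h := enclosedAt_thetaChar ha b c ht (him _ baseTau_im_pos) hQ
  refine ⟨fun k τ => prodRow (fun j => thetaChar a b (t τ) (c * basePt j))
    (fun j => c * thetaChar' a b (t τ) (c * basePt j)) k,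
    enclosedAt_prodRow (fun j => (h j).1) fun j => (h j).2,
    fun τ hτ => ⟨(prodRow_zero _ _).symm, ?_⟩⟩
  refine hasStrictFDerivAt_prod (f := fun _ x => thetaChar a b (t τ) (c * x)) fun j => ?_
  have hlin : HasStrictDerivAt (fun x : ℂ => c * x) (c * 1) (basePt j) :=
    (hasStrictDerivAt_id _).const_mul (c : ℂ)
  refine ((hasStrictDerivAt_thetaChar a b (him τ hτ) (c * basePt j)).comp _ hlin).congr_deriv ?_
  ring

end ThetaJet

lemma hasIndex_Theta (c : ℕ) {N : ℕ} (hN : N ≠ 0) (B : ℕ) :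
    HasIndex (c * N) fun τ z => Theta (heckeArg c N B τ) fun i => c * z i := by
  intro τ _ z n
  have hshift : (fun i => c * axisShift (n * τ) z i) = axisShift ((n * N : ℤ) * heckeArg c N B τ)
      (axisShift ((-(n * B) : ℤ)) fun i => c * z i) := by
    ext i
    rcases eq_or_ne i 0 with rfl | hi
    · simp only [axisShift, heckeArg, Pi.add_apply, Pi.single_eq_same]
      push_cast
      field_simp
      ring
    · simp [axisShift, hi]
  have hexp : -(4 * ((n * N : ℤ) : ℂ) ^ 2 * heckeArg c N B τ
        + 4 * ((n * N : ℤ) : ℂ) * axisShift ((-(n * B) : ℤ)) (fun i => c * z i) 0)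
      = (c * N : ℕ) * -(4 * n ^ 2 * τ + 4 * n * z 0) + 2 * (2 * n ^ 2 * N * B : ℤ) := by
    simp only [axisShift, heckeArg, Pi.add_apply, Pi.single_eq_same]
    push_cast
    field_simp
    ring
  beta_reduce
  rw [hshift, Theta_axisShift_intCast_mul, Theta_axisShift_intCast, hexp, nome_add,
    nome_natCast_mul, nome_two_mul_intCast, mul_one]

lemma enclosedJet_Theta {c N : ℕ} (hc : 0 < c) (hN : N ∣ 60) (B : ℕ) :
    EnclosedJet (fun τ z => Theta (heckeArg c N B τ) fun i => c * z i) (Disc.thetaRow c N B) := by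
  have him (τ : ℂ) (hτ : 0 < τ.im) : 0 < (heckeArg c N B τ).im :=
    heckeArg_im_pos hc (Nat.pos_of_dvd_of_pos hN (by norm_num)) B hτ
  have hq := enclosedAt_nome_heckeArg c B hN
  have hsum := EnclosedJet.sum fun a ha => EnclosedJet.sum fun b (_ : b < 2) =>
    (enclosedJet_prod_thetaChar ha b c (continuous_heckeArg c N B).continuousAt him hq.mem).mul
      (hq.pow (2 * a ^ 2))
  refine (hsum.mul (.const (Disc.mem_frac 1 2))).congr fun τ hτ z => ?_
  rw [Theta_eq_sum_prod_thetaChar (him τ hτ)]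
  push_cast
  rfl

lemma enclosedForm_Theta (c N B : ℕ) {m : ℕ} (hc : 0 < c) (hN : N ∣ 60) (hm : c * N = m) :
    EnclosedForm m (fun τ z => Theta (heckeArg c N B τ) fun i => c * z i)
      (Disc.thetaRow c N B) :=
  ⟨hm ▸ hasIndex_Theta c (ne_zero_of_dvd_ne_zero (by norm_num) hN) B, enclosedJet_Theta hc hN B⟩

namespace Disc

/-- Discs for the `1`-jet of `AM m`. -/
def rowA (m k : ℕ) : Disc :=
  frac (m ^ 3) (m ^ 3 + 1) *
    (thetaRow m 1 0 k + frac 1 (m ^ 4) * sum m fun j => thetaRow 1 m j k)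

/-- A disc around `th2 0 τ ^ 4` when `q` encloses the nome of `τ`. -/
def theta2Pow (q : Disc) : Disc := q * theta2 q ^ 4

/-- Discs for the `1`-jet of `B2`. -/
def rowB2 (k : ℕ) : Disc :=
  let q := nome 1 1 0
  frac 32 5 * (frac 1 12 * (theta3 q ^ 4 + theta4 q ^ 4) * thetaRow 2 1 0 k
    - frac 1 192 * (theta2Pow q + theta3 q ^ 4) * thetaRow 1 2 0 k
    + frac 1 192 * (theta2Pow q - theta4 q ^ 4) * thetaRow 1 2 1 k)

/-- Discs for the `1`-jet of `B3`. -/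
def rowB3 (k : ℕ) : Disc :=
  frac 81 80 * (h0 1 1 0 ^ 2 * thetaRow 3 1 0 k
    - frac 1 243 * sum 3 fun j => h0 1 3 j ^ 2 * thetaRow 1 3 j k)

/-- Discs for the `1`-jet of `B4`. -/
def rowB4 (k : ℕ) : Disc :=
  frac 16 15 * (theta4 (nome 2 1 0) ^ 4 * (thetaRow 4 1 0 k - frac 1 16 * thetaRow 2 2 1 k)
    - frac 1 1024 * sum 4 fun j => theta2Pow (nome 1 2 j) * thetaRow 1 4 j k)

/-- Discs for the `1`-jet of `B6`. -/
def rowB6 (k : ℕ) : Disc :=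
  frac 9 10 * (h0 1 1 0 ^ 2 * thetaRow 6 1 0 k
    + frac 1 16 * (sum 2 fun j => h0 1 1 j ^ 2 * thetaRow 3 2 (3 * j) k)
    - frac 1 243 * (sum 3 fun j => h0 1 3 j ^ 2 * thetaRow 2 3 (2 * j) k)
    - frac 1 3888 * sum 6 fun j => h0 1 3 j ^ 2 * thetaRow 1 6 j k)

end Disc

section ThetaConstants

variable {c N : ℕ} (hc : 0 < c) (hN : N ∣ 60) (B : ℕ)
include hc hN

lemma heckeArg_baseTau_im_pos : 0 < (heckeArg c N B baseTau).im :=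
  heckeArg_im_pos hc (Nat.pos_of_dvd_of_pos hN (by norm_num)) B baseTau_im_pos

lemma enclosedAt_th2_pow_heckeArg : EnclosedAt (fun τ => th2 0 (heckeArg c N B τ) ^ 4)
    (Disc.theta2Pow (Disc.nome c N B)) :=
  enclosedAt_th2_zero_pow (continuous_heckeArg c N B).continuousAt
    (heckeArg_baseTau_im_pos hc hN B) (enclosedAt_nome_heckeArg c B hN)

lemma enclosedAt_th3_heckeArg : EnclosedAt (fun τ => th3 0 (heckeArg c N B τ))
    (Disc.theta3 (Disc.nome c N B)) :=
  enclosedAt_th3_zero (continuous_heckeArg c N B).continuousAt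
    (heckeArg_baseTau_im_pos hc hN B) (enclosedAt_nome_heckeArg c B hN).mem

lemma enclosedAt_th4_heckeArg : EnclosedAt (fun τ => th4 0 (heckeArg c N B τ))
    (Disc.theta4 (Disc.nome c N B)) :=
  enclosedAt_th4_zero (continuous_heckeArg c N B).continuousAt
    (heckeArg_baseTau_im_pos hc hN B) (enclosedAt_nome_heckeArg c B hN).mem

end ThetaConstants

lemma enclosedAt_div (m n : ℕ) : EnclosedAt (fun _ => m / n) (Disc.frac m n) :=
  .const (Disc.mem_frac m n)

lemma enclosedForm_A1 : EnclosedForm 1 A1 (Disc.thetaRow 1 1 0) :=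
  (enclosedForm_Theta 1 1 0 one_pos (by norm_num) rfl).congr fun τ _ z => by simp [A1, heckeArg]

lemma enclosedForm_A4 : EnclosedForm 4 A4 (Disc.thetaRow 2 2 0) :=
  (enclosedForm_Theta 2 2 0 two_pos (by norm_num) rfl).congr fun τ _ z => by simp [A4, heckeArg]

lemma enclosedForm_AM {m : ℕ} (hm : 0 < m) (hm60 : m ∣ 60) :
    EnclosedForm m (AM m) (Disc.rowA m) := by
  have hsum := EnclosedForm.sum fun j (_ : j < m) =>
    enclosedForm_Theta 1 m j one_pos hm60 (one_mul m)
  refine (((enclosedForm_Theta m 1 0 hm (one_dvd _) (mul_one m)).add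
    (hsum.mul (enclosedAt_div 1 (m ^ 4)))).mul
      (enclosedAt_div (m ^ 3) (m ^ 3 + 1))).congr fun τ _ z => ?_
  simp [AM, heckeArg]

lemma enclosedForm_B2 : EnclosedForm 2 B2 Disc.rowB2 := by
  have h2 := enclosedAt_th2_pow_heckeArg (c := 1) (N := 1) one_pos (one_dvd _) 0
  have h3 := (enclosedAt_th3_heckeArg (c := 1) (N := 1) one_pos (one_dvd _) 0).pow 4
  have h4 := (enclosedAt_th4_heckeArg (c := 1) (N := 1) one_pos (one_dvd _) 0).pow 4
  have hfirst := (enclosedForm_Theta 2 1 0 two_pos (one_dvd _) rfl).mul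
    ((enclosedAt_div 1 12).mul (h3.add h4))
  have hsecond := (enclosedForm_Theta 1 2 0 one_pos (by norm_num) rfl).mul
    ((enclosedAt_div 1 192).mul (h2.add h3))
  have hthird := (enclosedForm_Theta 1 2 1 one_pos (by norm_num) rfl).mul
    ((enclosedAt_div 1 192).mul (h2.sub h4))
  refine (((hfirst.sub hsecond).add hthird).mul (enclosedAt_div 32 5)).congr fun τ _ z => ?_
  simp only [B2, ee1, ee2, ee3, heckeArg]
  norm_num
  ring

lemma enclosedForm_B3 : EnclosedForm 3 B3 Disc.rowB3 := by
  have hsum := EnclosedForm.sum fun j (_ : j < 3) =>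
    (enclosedForm_Theta 1 3 j one_pos (by norm_num) rfl).mul
      ((enclosedAt_h0 one_pos (by norm_num : 3 ∣ 60) j).pow 2)
  refine ((((enclosedForm_Theta 3 1 0 three_pos (one_dvd _) rfl).mul
    ((enclosedAt_h0 one_pos (one_dvd _) 0).pow 2)).sub
      (hsum.mul (enclosedAt_div 1 243))).mul (enclosedAt_div 81 80)).congr fun τ _ z => ?_
  simp only [B3, heckeArg]
  norm_num

lemma enclosedForm_B4 : EnclosedForm 4 B4 Disc.rowB4 := by
  have hsum := EnclosedForm.sum fun j (_ : j < 4) =>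
    (enclosedForm_Theta 1 4 j one_pos (by norm_num) rfl).mul
      (enclosedAt_th2_pow_heckeArg one_pos (by norm_num : 2 ∣ 60) j)
  refine (((((enclosedForm_Theta 4 1 0 four_pos (one_dvd _) rfl).sub
    ((enclosedForm_Theta 2 2 1 two_pos (by norm_num) rfl).mul (enclosedAt_div 1 16))).mul
      ((enclosedAt_th4_heckeArg two_pos (one_dvd _) 0).pow 4)).sub
    (hsum.mul (enclosedAt_div 1 1024))).mul (enclosedAt_div 16 15)).congr fun τ _ z => ?_
  simp only [B4, heckeArg]
  norm_num
  ring_nf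

lemma enclosedForm_B6 : EnclosedForm 6 B6 Disc.rowB6 := by
  have h0sq {N : ℕ} (hN : N ∣ 60) (j : ℕ) := (enclosedAt_h0 one_pos hN j).pow 2
  have hsum2 := EnclosedForm.sum fun j (_ : j < 2) =>
    (enclosedForm_Theta 3 2 (3 * j) three_pos (by norm_num) rfl).mul (h0sq (one_dvd _) j)
  have hsum3 := EnclosedForm.sum fun j (_ : j < 3) =>
    (enclosedForm_Theta 2 3 (2 * j) two_pos (by norm_num) rfl).mul (h0sq (N := 3) (by norm_num) j)
  have hsum6 := EnclosedForm.sum fun j (_ : j < 6) =>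
    (enclosedForm_Theta 1 6 j one_pos (by norm_num) rfl).mul (h0sq (N := 3) (by norm_num) j)
  refine ((((((enclosedForm_Theta 6 1 0 (by norm_num) (one_dvd _) rfl).mul
    (h0sq (one_dvd _) 0)).add (hsum2.mul (enclosedAt_div 1 16))).sub
      (hsum3.mul (enclosedAt_div 1 243))).sub (hsum6.mul (enclosedAt_div 1 3888))).mul
        (enclosedAt_div 9 10)).congr fun τ _ z => ?_
  simp only [B6, heckeArg]
  norm_num

/-! ### The Jacobian matrix at the base point -/

/-- `2 ^ 20` times a Gaussian approximation to the inverse of the Jacobian matrix of the nine forms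
at the base point, obtained by numerical inversion. -/
def inverseData : List (List GaussianInt) :=
  [
    [⟨358442, 40145⟩, ⟨131222, 19260⟩, ⟨46780, 7240⟩, ⟨-122, -18⟩, ⟨638, 92⟩, ⟨173169, 29413⟩,
      ⟨-41232, -1357⟩, ⟨-3269, -463⟩, ⟨-11, -2⟩],
    [⟨636878, 10119⟩, ⟨-15431, 162596⟩, ⟨-66636, 62384⟩, ⟨46, -1382⟩, ⟨-16537, -4885⟩,
      ⟨546638, -62803⟩, ⟨-362429, -71456⟩, ⟨-28903, 13211⟩, ⟨-738, -62⟩],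
    [⟨1220137, 597496⟩, ⟨-385109, -89486⟩, ⟨171881, -284905⟩, ⟨-1515, -708⟩, ⟨-8520, -23372⟩,
      ⟨420111, 997594⟩, ⟨-616349, -232427⟩, ⟨17094, -59291⟩, ⟨-1399, -438⟩],
    [⟨637564, -39376⟩, ⟨280373, 268131⟩, ⟨107903, 76643⟩, ⟨2736, -486⟩, ⟨-14165, -3527⟩,
      ⟨398763, -59593⟩, ⟨-506230, -151039⟩, ⟨-30945, 21916⟩, ⟨245, -1434⟩],
    [⟨352975, -129328⟩, ⟨-80813, 83363⟩, ⟨7287, -70285⟩, ⟨1140, -1720⟩, ⟨-7090, 3625⟩,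
      ⟨408965, -79968⟩, ⟨-417235, 58042⟩, ⟨-5983, -1162⟩, ⟨448, -120⟩],
    [⟨615360, -613836⟩, ⟨-36161, 93949⟩, ⟨41034, -43901⟩, ⟨3944, 886⟩, ⟨-13485, 7687⟩,
      ⟨417670, -673755⟩, ⟨-477876, 502236⟩, ⟨-1963, -5063⟩, ⟨639, -2159⟩],
    [⟨-360324, 1145162⟩, ⟨-100271, -157846⟩, ⟨17543, 38818⟩, ⟨-2136, 431⟩, ⟨3775, -14538⟩,
      ⟨247725, 992784⟩, ⟨13487, -732749⟩, ⟨-22660, 6178⟩, ⟨-1107, 1357⟩],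
    [⟨-696900, -296471⟩, ⟨-340941, 254189⟩, ⟨19580, 232659⟩, ⟨-2597, 442⟩, ⟨13040, -7504⟩,
      ⟨-240169, -259347⟩, ⟨386013, -110177⟩, ⟨50711, 10601⟩, ⟨-302, -340⟩],
    [⟨-351679, -733643⟩, ⟨611931, -2768⟩, ⟨-240448, 140648⟩, ⟨2857, 2527⟩, ⟨1729, 33859⟩,
      ⟨-490620, -1002534⟩, ⟨277364, 398245⟩, ⟨-43991, 48936⟩, ⟨1164, 1046⟩]
  ]

namespace Disc

/-- Discs for the entries of the approximate inverse of the Jacobian matrix. -/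
def inverse (k l : ℕ) : Disc :=
  frac 1 (2 ^ 20) * ofGaussian ((inverseData.getD k []).getD l 0)

/-- Discs for the row of the Jacobian matrix given by a form of index `m` with jet in `r`. -/
def jacobianRow (m : ℕ) (r : ℕ → Disc) : ℕ → Disc
  | 0 => m * r 0
  | k + 1 => r (k + 1)

/-- The test that row `j` of the Jacobian matrix, when it comes from a form of index `m` with jet in
`r`, is mapped by the approximate inverse close to row `j` of the unit matrix. -/
def check (m : ℕ) (r : ℕ → Disc) (j : ℕ) : Prop :=
  ∀ l < 9, near (sum 9 fun k => jacobianRow m r k * inverse k l) (if j = l then 1 else 0)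

instance (m : ℕ) (r : ℕ → Disc) (j : ℕ) : Decidable (check m r j) := by
  unfold check; infer_instance

end Disc

lemma check_A1 : Disc.check 1 (Disc.thetaRow 1 1 0) 0 := by decide +kernel

lemma check_A2 : Disc.check 2 (Disc.rowA 2) 1 := by decide +kernel

lemma check_A3 : Disc.check 3 (Disc.rowA 3) 2 := by decide +kernel

lemma check_A4 : Disc.check 4 (Disc.thetaRow 2 2 0) 3 := by decide +kernel

lemma check_A5 : Disc.check 5 (Disc.rowA 5) 4 := by decide +kernel

lemma check_B2 : Disc.check 2 Disc.rowB2 5 := by decide +kernel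

lemma check_B3 : Disc.check 3 Disc.rowB3 6 := by decide +kernel

lemma check_B4 : Disc.check 4 Disc.rowB4 7 := by decide +kernel

lemma check_B6 : Disc.check 6 Disc.rowB6 8 := by decide +kernel

open Filter Topology

/-- The indices of the nine forms. -/
def formIndex : Fin 9 → ℕ := ![1, 2, 3, 4, 5, 2, 3, 4, 6]

/-- Discs for the `1`-jets of the nine forms. -/
def formDisc : Fin 9 → ℕ → Disc :=
  ![Disc.thetaRow 1 1 0, Disc.rowA 2, Disc.rowA 3, Disc.thetaRow 2 2 0, Disc.rowA 5,
    Disc.rowB2, Disc.rowB3, Disc.rowB4, Disc.rowB6]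

lemma enclosedForm_nineForms : ∀ j, EnclosedForm (formIndex j) (nineForms j) (formDisc j)
  | 0 => enclosedForm_A1
  | 1 => enclosedForm_AM two_pos (by decide)
  | 2 => enclosedForm_AM three_pos (by decide)
  | 3 => enclosedForm_A4
  | 4 => enclosedForm_AM (Nat.succ_pos 4) (by decide)
  | 5 => enclosedForm_B2
  | 6 => enclosedForm_B3
  | 7 => enclosedForm_B4
  | 8 => enclosedForm_B6

lemma check_nineForms : ∀ j : Fin 9, Disc.check (formIndex j) (formDisc j) j
  | 0 => check_A1
  | 1 => check_A2
  | 2 => check_A3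
  | 3 => check_A4
  | 4 => check_A5
  | 5 => check_B2
  | 6 => check_B3
  | 7 => check_B4
  | 8 => check_B6

/-- The row of the Jacobian matrix of `(t, z) ↦ t ^ m * φ z` at `t = 1`, where `φ` has the jet
`v`, up to a common scaling of the derivatives in `z`. -/
def jacobianRow (m : ℕ) (v : ℕ → ℂ) : ℕ → ℂ
  | 0 => m * v 0
  | k + 1 => v (k + 1)

lemma Disc.mem_jacobianRow (m : ℕ) {v : ℕ → ℂ} {r : ℕ → Disc} (h : ∀ k, v k ∈ r k) (k : ℕ) :
    E8Jacobi.jacobianRow m v k ∈ Disc.jacobianRow m r k := by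
  cases k with
  | zero => exact mem_mul (mem_natCast m) (h 0)
  | succ k => exact h (k + 1)

/-- The Jacobian matrix of the nine forms, whose jets are the rows of `v`. -/
def jacobian (v : Fin 9 → ℕ → ℂ) : Matrix (Fin 9) (Fin 9) ℂ :=
  Matrix.of fun j k => jacobianRow (formIndex j) (v j) k

/-- The approximate inverse of the Jacobian matrix at the base point. -/
def approxInverse (k l : ℕ) : ℂ :=
  (1 : ℕ) / (2 ^ 20 : ℕ) * ((inverseData.getD k []).getD l 0).toComplex

lemma mem_inverse (k l : ℕ) : approxInverse k l ∈ Disc.inverse k l :=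
  Disc.mem_mul (Disc.mem_frac _ _) (Disc.mem_ofGaussian _)

lemma det_ne_zero_of_norm_sub_one_le {𝕜 n : Type*} [NormedField 𝕜] [Fintype n] [DecidableEq n]
    {A : Matrix n n 𝕜} {ε : ℝ} (h : ∀ i j, ‖(A - 1) i j‖ ≤ ε) (hε : Fintype.card n * ε < 1) :
    A.det ≠ 0 := by
  refine det_ne_zero_of_sum_row_lt_diag fun i => ?_
  have hdiag : 1 - ‖(A - 1) i i‖ ≤ ‖A i i‖ := by
    have := norm_sub_norm_le 1 (A i i)
    rw [norm_one, norm_sub_rev] at this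
    rw [Matrix.sub_apply, Matrix.one_apply_eq]
    linarith
  have hoff : ∑ j ∈ univ.erase i, ‖A i j‖ = ∑ j ∈ univ.erase i, ‖(A - 1) i j‖ :=
    sum_congr rfl fun j hj => by
      rw [Matrix.sub_apply, Matrix.one_apply_ne (ne_of_mem_erase hj).symm, sub_zero]
  have hrow : ∑ j, ‖(A - 1) i j‖ ≤ Fintype.card n * ε := by
    simpa [nsmul_eq_mul] using sum_le_card_nsmul univ _ ε fun j _ => h i j
  rw [← add_sum_erase univ _ (mem_univ i)] at hrow
  linarith

lemma det_jacobian_ne_zero {v : Fin 9 → ℕ → ℂ} (h : ∀ j k, v j k ∈ formDisc j k) :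
    (jacobian v).det ≠ 0 := by
  set M : Matrix (Fin 9) (Fin 9) ℂ := Matrix.of fun k l => approxInverse k l with hM
  have hnear (j l : Fin 9) : ‖(jacobian v * M - 1) j l‖ ≤ 1 / 20 := by
    have hmem := Disc.mem_sum (n := 9) fun k _ =>
      Disc.mem_mul (Disc.mem_jacobianRow (formIndex j) (h j) k) (mem_inverse k l)
    have hle := Disc.norm_sub_natCast_le_of_near hmem (check_nineForms j l l.2)
    rw [sum_range] at hle
    simpa [Matrix.mul_apply, Matrix.one_apply, jacobian, hM, Fin.ext_iff] using hle
  have hdet : (jacobian v * M).det ≠ 0 := det_ne_zero_of_norm_sub_one_le hnear (by norm_num)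
  rw [Matrix.det_mul] at hdet
  exact left_ne_zero_of_mul hdet

lemma continuousAt_jacobian {X : Type*} [TopologicalSpace X] {g : Fin 9 → ℕ → X → ℂ} {x : X}
    (h : ∀ j k, ContinuousAt (g j k) x) :
    ContinuousAt (fun y => jacobian fun j k => g j k y) x := by
  refine continuousAt_pi.2 fun j => continuousAt_pi.2 fun k => ?_
  refine Fin.cases ?_ (fun k => ?_) k
  · exact continuousAt_const.mul (h j 0)
  · exact h j (k + 1)

lemma continuousAt_det {n R X : Type*} [Fintype n] [DecidableEq n] [CommRing R]
    [TopologicalSpace R] [IsTopologicalRing R] [TopologicalSpace X] {A : X → Matrix n n R} {x : X}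
    (hA : ContinuousAt A x) : ContinuousAt (fun y => (A y).det) x :=
  ContinuousAt.comp (g := Matrix.det) continuous_id.matrix_det.continuousAt hA

lemma exists_jacobian : ∃ g : Fin 9 → ℕ → ℂ → ℂ,
    (∀ τ : ℂ, 0 < τ.im → ∀ j, nineForms j τ basePt = g j 0 τ ∧
      HasStrictFDerivAt (nineForms j τ) (jetMap fun k => g j k τ) basePt) ∧
    ∀ᶠ τ in 𝓝 baseTau, (jacobian fun j k => g j k τ).det ≠ 0 := by
  choose g hg hjet using fun j => (enclosedForm_nineForms j).jet
  refine ⟨g, fun τ hτ j => hjet j τ hτ, ?_⟩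
  have hdet := det_jacobian_ne_zero (v := fun j k => g j k baseTau) fun j k => (hg j k).mem
  have hcont : ContinuousAt (fun τ => (jacobian fun j k => g j k τ).det) baseTau :=
    continuousAt_det (continuousAt_jacobian fun j k => (hg j k).continuousAt)
  exact hcont.eventually_ne hdet

/-! ### Algebraic independence of the nine forms -/

lemma eq_zero_of_eventually_eval_eq_zero {𝕜 σ : Type*} [NontriviallyNormedField 𝕜] [Finite σ]
    {G : MvPolynomial σ 𝕜} {x : σ → 𝕜} (h : ∀ᶠ y in 𝓝 x, MvPolynomial.eval y G = 0) :
    G = 0 := by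
  have := Fintype.ofFinite σ
  obtain ⟨ε, hε, hball⟩ := Metric.eventually_nhds_iff_ball.mp h
  refine MvPolynomial.funext_set (fun i => Metric.ball (x i) ε)
    (fun i => infinite_of_mem_nhds (x i) (Metric.ball_mem_nhds _ hε)) fun y hy => ?_
  rw [map_zero]
  exact hball y (ball_pi x hε ▸ hy)

lemma aeval_pi_apply {R σ X : Type*} [CommSemiring R] (f : σ → X → R) (G : MvPolynomial σ R)
    (x : X) : MvPolynomial.aeval f G x = MvPolynomial.eval (fun j => f j x) G := by
  rw [← MvPolynomial.aeval_eq_eval]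
  exact MvPolynomial.comp_aeval_apply (S₁ := X → R) f (Pi.evalAlgHom R _ x) G

lemma eval_pow_mul_eq_zero_of_unbounded {𝕜 σ : Type*} [NormedField 𝕜] {G : MvPolynomial σ 𝕜}
    {m : σ → ℕ} {x : σ → 𝕜}
    (h : ∀ C : ℝ, ∃ t : 𝕜, C < ‖t‖ ∧ MvPolynomial.eval (fun j => t ^ m j * x j) G = 0) (t : 𝕜) :
    MvPolynomial.eval (fun j => t ^ m j * x j) G = 0 := by
  set H : Polynomial 𝕜 := MvPolynomial.aeval (fun j => Polynomial.X ^ m j * Polynomial.C (x j)) G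
    with hH
  have heval (t : 𝕜) : H.eval t = MvPolynomial.eval (fun j => t ^ m j * x j) G := by
    rw [hH, ← Polynomial.coe_aeval_eq_eval, MvPolynomial.comp_aeval_apply]
    simp only [map_mul, map_pow, Polynomial.aeval_X, Polynomial.aeval_C,
      MvPolynomial.aeval_eq_eval, Algebra.algebraMap_self, RingHom.id_apply]
  have hzero : H = 0 := by
    refine Polynomial.eq_zero_of_infinite_isRoot H fun hfin => ?_
    obtain ⟨C, hC⟩ := hfin.isBounded.exists_norm_le
    obtain ⟨t, hCt, ht⟩ := h C
    exact (hC t ((heval t).trans ht)).not_gt hCt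
  rw [← heval, hzero, Polynomial.eval_zero]

lemma exists_lt_norm_nome {τ : ℂ} (hτ : 0 < τ.im) (w : ℂ) (C : ℝ) :
    ∃ n : ℤ, C < ‖nome (-(4 * n ^ 2 * τ + 4 * n * w))‖ := by
  have hnorm (n : ℕ) : ‖nome (-(4 * (n : ℤ) ^ 2 * τ + 4 * (n : ℤ) * w))‖
      = Real.exp (n * (n * (4 * Real.pi * τ.im) + 4 * Real.pi * w.im)) := by
    rw [norm_nome]
    congr 1
    have him : (-(4 * (n : ℤ) ^ 2 * τ + 4 * (n : ℤ) * w) : ℂ)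
        = ((-(4 * n ^ 2) : ℝ) : ℂ) * τ + ((-(4 * n) : ℝ) : ℂ) * w := by
      push_cast
      ring
    rw [him, add_im, im_ofReal_mul, im_ofReal_mul]
    ring
  have hlin : Tendsto (fun n : ℕ => n * (4 * Real.pi * τ.im) + 4 * Real.pi * w.im) atTop atTop :=
    tendsto_atTop_add_const_right _ _
      (tendsto_natCast_atTop_atTop.atTop_mul_const (by positivity))
  have hexp := Real.tendsto_exp_atTop.comp (tendsto_natCast_atTop_atTop.atTop_mul_atTop₀ hlin)
  obtain ⟨n, hn⟩ := (hexp.eventually_gt_atTop C).exists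
  exact ⟨n, hn.trans_eq (hnorm n).symm⟩

-- The quasi-period `2 * n * τ` multiplies a form of index `m` by the `m`-th power of an unbounded
-- factor, which separates the homogeneous parts of `G` for the grading by the index.
lemma eval_pow_mul_eq_zero_of_hasIndex {σ : Type*} {G : MvPolynomial σ ℂ} {m : σ → ℕ}
    {φ : σ → ℂ → (Fin 8 → ℂ) → ℂ} (hφ : ∀ j, HasIndex (m j) (φ j)) {τ : ℂ} (hτ : 0 < τ.im)
    (h : ∀ z, MvPolynomial.eval (fun j => φ j τ z) G = 0) (t : ℂ) (z : Fin 8 → ℂ) :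
    MvPolynomial.eval (fun j => t ^ m j * φ j τ z) G = 0 := by
  refine eval_pow_mul_eq_zero_of_unbounded (fun C => ?_) t
  obtain ⟨n, hn⟩ := exists_lt_norm_nome hτ (z 0) C
  refine ⟨_, hn, ?_⟩
  simpa only [hφ _ τ hτ] using h (axisShift (n * τ) z)

/-- The derivative at `t = 1` of `(t, z) ↦ t ^ m * φ z`, where `φ` has the jet `v`. -/
def scaledJetMap {n : ℕ} (m : ℕ) (v : ℕ → ℂ) : ℂ × (Fin n → ℂ) →L[ℂ] ℂ :=
  (m * v 0) • ContinuousLinearMap.fst ℂ ℂ (Fin n → ℂ) +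
    (jetMap v).comp (ContinuousLinearMap.snd ℂ ℂ (Fin n → ℂ))

lemma scaledJetMap_apply {n : ℕ} (m : ℕ) (v : ℕ → ℂ) (x : Fin (n + 1) → ℂ) :
    scaledJetMap m v (x 0, fun i => x i.succ / (Real.pi * I))
      = ∑ k : Fin (n + 1), jacobianRow m v k * x k := by
  have hterm (i : Fin n) : Real.pi * I * v (i + 1) * (x i.succ / (Real.pi * I))
      = v (i + 1) * x i.succ := by
    field_simp
  simp only [scaledJetMap, add_apply, smul_apply, ContinuousLinearMap.comp_apply,
    ContinuousLinearMap.coe_fst', ContinuousLinearMap.coe_snd', jetMap_apply, hterm,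
    Fin.sum_univ_succ, Fin.val_zero, Fin.val_succ, jacobianRow, smul_eq_mul]

lemma hasStrictFDerivAt_pow_mul {n : ℕ} {φ : (Fin n → ℂ) → ℂ} {v : ℕ → ℂ} {x : Fin n → ℂ}
    (hval : φ x = v 0) (h : HasStrictFDerivAt φ (jetMap v) x) (m : ℕ) :
    HasStrictFDerivAt (fun p : ℂ × (Fin n → ℂ) => p.1 ^ m * φ p.2) (scaledJetMap m v) (1, x) := by
  have hsnd : HasStrictFDerivAt (fun p : ℂ × (Fin n → ℂ) => φ p.2) _ (1, x) :=
    HasStrictFDerivAt.comp (f := Prod.snd) (1, x) h hasStrictFDerivAt_snd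
  refine ((hasStrictFDerivAt_fst.pow m).mul hsnd).congr_fderiv ?_
  ext <;> simp [scaledJetMap, hval, mul_comm]

lemma range_pi_scaledJetMap_eq_top {v : Fin 9 → ℕ → ℂ} (h : (jacobian v).det ≠ 0) :
    (ContinuousLinearMap.pi fun j => scaledJetMap (n := 8) (formIndex j) (v j)).range = ⊤ := by
  refine LinearMap.range_eq_top.mpr fun y => ?_
  obtain ⟨x, rfl⟩ := Matrix.mulVec_surjective_iff_isUnit.mpr
    ((Matrix.isUnit_iff_isUnit_det _).mpr h.isUnit) y
  exact ⟨_, funext fun j => scaledJetMap_apply (formIndex j) (v j) x⟩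

lemma eventually_algebraicIndependent_nineForms :
    ∀ᶠ τ in 𝓝 baseTau, AlgebraicIndependent ℂ fun j => nineForms j τ := by
  obtain ⟨g, hjet, hdet⟩ := exists_jacobian
  have him : ∀ᶠ τ : ℂ in 𝓝 baseTau, 0 < τ.im :=
    (isOpen_lt continuous_const continuous_im).mem_nhds baseTau_im_pos
  filter_upwards [hdet, him] with τ hdetτ hτ
  rw [algebraicIndependent_iff]
  intro G hG
  have hzero (z : Fin 8 → ℂ) : MvPolynomial.eval (fun j => nineForms j τ z) G = 0 :=
    (aeval_pi_apply _ G z).symm.trans (congrFun hG z)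
  have hF : HasStrictFDerivAt
      (fun (p : ℂ × (Fin 8 → ℂ)) j => p.1 ^ formIndex j * nineForms j τ p.2)
      (ContinuousLinearMap.pi fun j => scaledJetMap (formIndex j) fun k => g j k τ) (1, basePt) :=
    hasStrictFDerivAt_pi.mpr fun j =>
      hasStrictFDerivAt_pow_mul (hjet τ hτ j).1 (hjet τ hτ j).2 (formIndex j)
  refine eq_zero_of_eventually_eval_eq_zero (Eventually.filter_mono
    (hF.map_nhds_eq_of_surj (range_pi_scaledJetMap_eq_top hdetτ)).ge (eventually_map.mpr ?_))
  exact .of_forall fun p => eval_pow_mul_eq_zero_of_hasIndex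
    (fun j => (enclosedForm_nineForms j).hasIndex) hτ hzero p.1 p.2

/-! ### Algebraic independence of `E4` and `E6` -/

section Eisenstein

open UpperHalfPlane ModularForm MatrixGroups

lemma norm_qExp_lt_one (z : ℍ) : ‖qExp z‖ < 1 := by
  simpa only [qExp, πC] using norm_exp_two_pi_I_lt_one z

lemma E4_coe (z : ℍ) : E4 z = E₄ z := by
  rw [E4, tsum_pow_div_one_sub_eq_tsum_sigma (norm_qExp_lt_one z),
    EisensteinSeries.q_expansion_bernoulli (by norm_num : 3 ≤ 4) ⟨2, rfl⟩ z,
    show bernoulli 4 = -1 / 30 by decide +kernel]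
  simp only [zpow_natCast, qExp, πC]
  norm_num

lemma E6_coe (z : ℍ) : E6 z = E₆ z := by
  rw [E6, tsum_pow_div_one_sub_eq_tsum_sigma (norm_qExp_lt_one z),
    EisensteinSeries.q_expansion_bernoulli (by norm_num : 3 ≤ 6) ⟨3, rfl⟩ z,
    show bernoulli 6 = 1 / 42 by decide +kernel]
  simp only [zpow_natCast, qExp, πC]
  norm_num

lemma differentiableOn_of_coe_eq {k : ℤ} {f : ℂ → ℂ} (F : ModularForm 𝒮ℒ k)
    (h : ∀ z : ℍ, f z = F z) : DifferentiableOn ℂ f {τ | 0 < τ.im} := by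
  refine (UpperHalfPlane.mdifferentiable_iff.mp (ModularFormClass.holo F)).congr fun τ hτ => ?_
  rw [Function.comp_apply, ofComplex_apply_of_im_pos hτ]
  exact h ⟨τ, hτ⟩

lemma exists_modularForm_eq_zpow_mul (d : ℤ) (z : ℍ) :
    ∃ w : ℍ, ∀ (k : ℤ) (f : ModularForm 𝒮ℒ k), f w = ((z : ℂ) + d) ^ k * f z := by
  set g : SL(2, ℤ) := ⟨!![0, -1; 1, d], by simp [Matrix.det_fin_two_of]⟩
  refine ⟨Matrix.SpecialLinearGroup.mapGL ℝ g • z, fun k f => ?_⟩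
  have hg : Matrix.SpecialLinearGroup.mapGL ℝ g ∈ 𝒮ℒ := ⟨g, rfl⟩
  rw [SlashInvariantForm.slash_action_eqn' f hg z]
  have h10 : (Matrix.SpecialLinearGroup.mapGL ℝ g) 1 0 = ((1 : ℤ) : ℝ) := rfl
  have h11 : (Matrix.SpecialLinearGroup.mapGL ℝ g) 1 1 = (d : ℝ) := rfl
  rw [h10, h11]
  simp

lemma tendsto_E_atImInfty {k : ℕ} (hk : 3 ≤ k) (hk2 : Even k) :
    Tendsto (E hk) atImInfty (𝓝 1) := by
  have hanal := ModularFormClass.analyticAt_cuspFunction_zero (E hk) one_pos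
    one_mem_strictPeriods_SL
  have hper := SlashInvariantFormClass.periodic_comp_ofComplex (E hk) (h := 1)
    one_mem_strictPeriods_SL
  rw [← EisensteinSeries.E_qExpansion_coeff_zero hk hk2, qExpansion_coeff_zero one_pos hanal hper,
    ← cuspFunction_apply_zero one_pos hanal hper]
  exact (hanal.continuousAt.tendsto.comp (qParam_tendsto_atImInfty one_pos)).congr
    fun τ => SlashInvariantFormClass.eq_cuspFunction (E hk) τ one_mem_strictPeriods_SL one_ne_zero

-- The quotient tends to `1` at the cusp but never equals `1`, because the discriminant has no zero.
lemma infinite_E₆_sq_div_E₄_cube :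
    {w : ℂ | ∃ z : ℍ, E₄ z ≠ 0 ∧ E₆ z ≠ 0 ∧ w = E₆ z ^ 2 / E₄ z ^ 3}.Infinite := by
  intro hfin
  have h4 := tendsto_E_atImInfty (by norm_num : 3 ≤ 4) ⟨2, rfl⟩
  have h6 := tendsto_E_atImInfty (by norm_num : 3 ≤ 6) ⟨3, rfl⟩
  have hquot := (h6.pow 2).div (h4.pow 3) (pow_ne_zero 3 one_ne_zero)
  rw [one_pow, one_pow, div_one] at hquot
  obtain ⟨z, hz, -, h1⟩ := hfin.isClosed.mem_of_tendsto hquot <| by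
    filter_upwards [h4.eventually_ne one_ne_zero, h6.eventually_ne one_ne_zero] with z hz4 hz6
    exact ⟨z, hz4, hz6, rfl⟩
  rw [eq_div_iff (pow_ne_zero 3 hz), one_mul] at h1
  apply discriminant_ne_zero z
  rw [discriminant_eq_E₄_cube_sub_E₆_sq, h1, sub_self, zero_div]

lemma differentiableOn_eval {σ : Type*} (G : MvPolynomial σ ℂ) {f : ℂ → σ → ℂ} {s : Set ℂ}
    (hf : ∀ i, DifferentiableOn ℂ (fun τ => f τ i) s) :
    DifferentiableOn ℂ (fun τ => MvPolynomial.eval (f τ) G) s := by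
  induction G using MvPolynomial.induction_on with
  | C a => simp only [MvPolynomial.eval_C, differentiableOn_const]
  | add p q hp hq =>
    simp only [map_add]
    exact hp.add hq
  | mul_X p i hp =>
    simp only [map_mul, MvPolynomial.eval_X]
    exact hp.mul (hf i)

lemma eval_E4_E6_eq_zero_of_eventually {τ₀ : ℂ} (hτ₀ : 0 < τ₀.im) {G : MvPolynomial (Fin 2) ℂ}
    (h : ∀ᶠ τ in 𝓝 τ₀, MvPolynomial.eval ![E4 τ, E6 τ] G = 0) (z : ℍ) :
    MvPolynomial.eval ![E4 z, E6 z] G = 0 := by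
  have hdiff : DifferentiableOn ℂ (fun τ => MvPolynomial.eval ![E4 τ, E6 τ] G) {τ | 0 < τ.im} :=
    differentiableOn_eval G <| Fin.forall_fin_two.mpr
      ⟨differentiableOn_of_coe_eq E₄ E4_coe, differentiableOn_of_coe_eq E₆ E6_coe⟩
  exact (hdiff.analyticOnNhd (isOpen_lt continuous_const continuous_im))
    |>.eqOn_zero_of_preconnected_of_eventuallyEq_zero (convex_halfSpace_im_gt 0).isPreconnected
      hτ₀ h z.im_pos

lemma eval_pow_mul_E4_E6_eq_zero {G : MvPolynomial (Fin 2) ℂ}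
    (h : ∀ z : ℍ, MvPolynomial.eval ![E4 z, E6 z] G = 0) (z : ℍ) (t : ℂ) :
    MvPolynomial.eval (fun j => t ^ (![2, 3] : Fin 2 → ℕ) j * ![E4 z, E6 z] j) G = 0 := by
  refine eval_pow_mul_eq_zero_of_unbounded (fun C => ?_) t
  have hunbounded : Tendsto (fun n : ℕ => ‖((z : ℂ) + n) ^ 2‖) atTop atTop := by
    simp only [norm_pow]
    refine (tendsto_pow_atTop two_ne_zero).comp
      (tendsto_atTop_mono (fun n => ?_) (tendsto_atTop_add_const_right atTop z.re
        tendsto_natCast_atTop_atTop))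
    simpa [add_comm] using re_le_norm ((z : ℂ) + n)
  obtain ⟨n, hn⟩ := (hunbounded.eventually_gt_atTop C).exists
  obtain ⟨w, hw⟩ := exists_modularForm_eq_zpow_mul n z
  refine ⟨_, hn, (congrArg (MvPolynomial.eval · G) ?_).trans (h w)⟩
  refine funext (Fin.forall_fin_two.mpr ⟨?_, ?_⟩)
  · simpa [E4_coe, ← pow_mul] using (hw 4 E₄).symm
  · simpa [E6_coe, ← pow_mul] using (hw 6 E₆).symm

end Eisenstein

lemma eval_eq_zero_of_sq_div_cube_eq {𝕜 : Type*} [Field 𝕜] {G : MvPolynomial (Fin 2) 𝕜}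
    {a b x y : 𝕜} (ha : a ≠ 0) (hb : b ≠ 0) (hx : x ≠ 0)
    (hG : ∀ t, MvPolynomial.eval (fun j => t ^ (![2, 3] : Fin 2 → ℕ) j * ![a, b] j) G = 0)
    (hxy : y ^ 2 / x ^ 3 = b ^ 2 / a ^ 3) : MvPolynomial.eval ![x, y] G = 0 := by
  rw [div_eq_div_iff (pow_ne_zero 3 hx) (pow_ne_zero 3 ha)] at hxy
  have hxt : (y * a / (x * b)) ^ 2 * a = x := by
    field_simp
    linear_combination hxy
  have hyt : (y * a / (x * b)) ^ 3 * b = y := by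
    field_simp
    linear_combination y * hxy
  rw [← hG (y * a / (x * b))]
  refine congrArg (MvPolynomial.eval · G) (funext (Fin.forall_fin_two.mpr ⟨?_, ?_⟩))
  exacts [hxt.symm, hyt.symm]

lemma eval_vecCons_eq_zero_of_infinite {R : Type*} [CommRing R] [IsDomain R]
    {G : MvPolynomial (Fin 2) R} {x : R}
    {s : Set R} (hs : s.Infinite) (h : ∀ y ∈ s, MvPolynomial.eval ![x, y] G = 0) (y : R) :
    MvPolynomial.eval ![x, y] G = 0 := by
  set H : Polynomial R := MvPolynomial.aeval ![Polynomial.C x, Polynomial.X] G with hH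
  have heval (t : R) : H.eval t = MvPolynomial.eval ![x, t] G := by
    rw [hH, ← Polynomial.coe_aeval_eq_eval, MvPolynomial.comp_aeval_apply,
      ← MvPolynomial.aeval_eq_eval]
    exact congrArg (MvPolynomial.aeval · G) (funext (Fin.forall_fin_two.mpr (by simp)))
  have hzero : H = 0 :=
    Polynomial.eq_zero_of_infinite_isRoot H (hs.mono fun t ht => (heval t).trans (h t ht))
  rw [← heval, hzero, Polynomial.eval_zero]

lemma eq_zero_of_eventually_eval_E4_E6_eq_zero {τ₀ : ℂ} (hτ₀ : 0 < τ₀.im)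
    {G : MvPolynomial (Fin 2) ℂ} (h : ∀ᶠ τ in 𝓝 τ₀, MvPolynomial.eval ![E4 τ, E6 τ] G = 0) :
    G = 0 := by
  have hscale := eval_pow_mul_E4_E6_eq_zero (eval_E4_E6_eq_zero_of_eventually hτ₀ h)
  have hline {x : ℂ} (hx : x ≠ 0) (y : ℂ) : MvPolynomial.eval ![x, y] G = 0 := by
    have hsurj : Function.Surjective fun y : ℂ => y ^ 2 / x ^ 3 := fun w => by
      obtain ⟨y, hy⟩ := IsAlgClosed.exists_pow_nat_eq (w * x ^ 3) two_pos
      exact ⟨y, (div_eq_iff (pow_ne_zero 3 hx)).mpr hy⟩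
    refine eval_vecCons_eq_zero_of_infinite
      (infinite_E₆_sq_div_E₄_cube.preimage (hsurj.range_eq ▸ Set.subset_univ _)) ?_ y
    rintro y ⟨z, hz4, hz6, hyz⟩
    rw [← E4_coe] at hz4 hyz
    rw [← E6_coe] at hz6 hyz
    exact eval_eq_zero_of_sq_div_cube_eq hz4 hz6 hx (hscale z) hyz
  have hne : ∀ᶠ y in 𝓝 (1 : Fin 2 → ℂ), y 0 ≠ 0 :=
    (continuous_apply 0).continuousAt.eventually_ne one_ne_zero
  refine eq_zero_of_eventually_eval_eq_zero (hne.mono fun y hy => ?_)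
  exact (congrArg (MvPolynomial.eval · G) (FinVec.etaExpand_eq y)).symm.trans (hline hy (y 1))

/-! ### Algebraic independence of the generators -/

lemma algebraicIndependent_of_adjoin_range_eq {R A ι : Type*} [CommRing R] [IsDomain R]
    [CommRing A] [Algebra R A] [Finite ι] {x y : ι → A} (hx : AlgebraicIndependent R x)
    (h : Algebra.adjoin R (Set.range y) = Algebra.adjoin R (Set.range x)) :
    AlgebraicIndependent R y := by
  have hmem (i : ι) : y i ∈ (MvPolynomial.aeval (R := R) x).range := by
    rw [← Algebra.adjoin_range_eq_range_aeval, ← h]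
    exact Algebra.subset_adjoin ⟨i, rfl⟩
  choose p hp using hmem
  obtain rfl : MvPolynomial.aeval (R := R) x ∘ p = y := funext hp
  have htop : Algebra.adjoin R (Set.range p) = ⊤ := by
    refine Subalgebra.map_injective (f := MvPolynomial.aeval x) hx ?_
    rw [AlgHom.map_adjoin, ← Set.range_comp, Algebra.map_top,
      ← Algebra.adjoin_range_eq_range_aeval]
    exact h
  have : Algebra.IsAlgebraic (Algebra.adjoin R (Set.range p)) (MvPolynomial ι R) :=
    ⟨fun a => isAlgebraic_algebraMap
      (⟨a, htop ▸ Algebra.mem_top⟩ : Algebra.adjoin R (Set.range p))⟩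
  have hp' : IsTranscendenceBasis R p :=
    Algebra.IsAlgebraic.isTranscendenceBasis_of_lift_le_trdeg_of_finite R p (by simp)
  exact hp'.1.map' hx

section PolynomialFunctions

variable {X R : Type*} [Field R] {S : Subalgebra R (X → R)} {f g : X → R}

lemma fun_mul_mem (hf : f ∈ S) (hg : g ∈ S) : (fun z => f z * g z) ∈ S := S.mul_mem hf hg

lemma fun_pow_mem (hf : f ∈ S) (n : ℕ) : (fun z => f z ^ n) ∈ S := S.pow_mem hf n

lemma fun_const_mem (c : R) : (fun _ => c) ∈ S := S.algebraMap_mem c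

lemma fun_add_mem_iff (hg : g ∈ S) : (fun z => f z + g z) ∈ S ↔ f ∈ S := add_mem_cancel_right hg

lemma fun_sub_mem_iff (hg : g ∈ S) : (fun z => f z - g z) ∈ S ↔ f ∈ S := by
  simp only [sub_eq_add_neg]
  exact fun_add_mem_iff (S.neg_mem hg)

lemma fun_const_mul_mem_iff {c : R} (hc : c ≠ 0) : (fun z => c * f z) ∈ S ↔ f ∈ S :=
  Submodule.smul_mem_iff S.toSubmodule hc

end PolynomialFunctions

section Triangular

variable {τ : ℂ} {S : Subalgebra ℂ ((Fin 8 → ℂ) → ℂ)}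

attribute [local simp] fun_mul_mem fun_pow_mem fun_const_mem fun_add_mem_iff fun_sub_mem_iff
  fun_const_mul_mem_iff

lemma b1f_mem_iff (h4 : E4 τ ≠ 0) : b1f τ ∈ S ↔ A1 τ ∈ S := by
  unfold b1f
  simp [h4]

lemma a2f_mem_iff (h4 : E4 τ ≠ 0) (hd : Dl τ ≠ 0) (hA1 : A1 τ ∈ S) : a2f τ ∈ S ↔ A2 τ ∈ S := by
  unfold a2f
  simp [h4, hd, hA1, -neg_mul]

lemma b2f_mem_iff (h4 : E4 τ ≠ 0) (hd : Dl τ ≠ 0) (hA1 : A1 τ ∈ S) : b2f τ ∈ S ↔ B2 τ ∈ S := by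
  unfold b2f
  simp (maxDischargeDepth := 12) [h4, hd, hA1]

lemma a4f_mem_iff (h4 : E4 τ ≠ 0) (hd : Dl τ ≠ 0) (hA1 : A1 τ ∈ S) (hA2 : A2 τ ∈ S)
    (hB2 : B2 τ ∈ S) (hA3 : A3 τ ∈ S) : a4f τ ∈ S ↔ A4 τ ∈ S := by
  unfold a4f
  simp (maxDischargeDepth := 12) [h4, hd, hA1, hA2, hB2, hA3, -neg_mul]

lemma b4f_mem_iff (h4 : E4 τ ≠ 0) (hd : Dl τ ≠ 0) (hA1 : A1 τ ∈ S) (hA2 : A2 τ ∈ S)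
    (hB2 : B2 τ ∈ S) (hB3 : B3 τ ∈ S) : b4f τ ∈ S ↔ B4 τ ∈ S := by
  unfold b4f
  simp (maxDischargeDepth := 12) [h4, hd, hA1, hA2, hB2, hB3, -neg_mul]

lemma b5f_mem_iff (h4 : E4 τ ≠ 0) (hd : Dl τ ≠ 0) (hA1 : A1 τ ∈ S) (hA2 : A2 τ ∈ S)
    (hB2 : B2 τ ∈ S) (hA3 : A3 τ ∈ S) (hB3 : B3 τ ∈ S) : b5f τ ∈ S ↔ A5 τ ∈ S := by
  unfold b5f
  simp (maxDischargeDepth := 12) [h4, hd, hA1, hA2, hB2, hA3, hB3, -neg_mul]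

lemma b6f_mem_iff (h4 : E4 τ ≠ 0) (hd : Dl τ ≠ 0) (hA1 : A1 τ ∈ S) (hA2 : A2 τ ∈ S)
    (hB2 : B2 τ ∈ S) (hA3 : A3 τ ∈ S) (hB3 : B3 τ ∈ S) (hA4 : A4 τ ∈ S) (hB4 : B4 τ ∈ S)
    (hA5 : A5 τ ∈ S) : b6f τ ∈ S ↔ B6 τ ∈ S := by
  unfold b6f
  simp (maxDischargeDepth := 12) [h4, hd, hA1, hA2, hB2, hA3, hB3, hA4, hB4, hA5, -neg_mul]

lemma mem_and_mem_iff_of_det_ne_zero {R M : Type*} [Field R] [AddCommGroup M] [Module R M]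
    {N : Submodule R M} {a b c d : R} (hdet : a * d - b * c ≠ 0) (x y : M) :
    a • x + b • y ∈ N ∧ c • x + d • y ∈ N ↔ x ∈ N ∧ y ∈ N := by
  refine ⟨fun ⟨h₁, h₂⟩ => ⟨?_, ?_⟩, fun ⟨hx, hy⟩ =>
    ⟨N.add_mem (N.smul_mem a hx) (N.smul_mem b hy), N.add_mem (N.smul_mem c hx) (N.smul_mem d hy)⟩⟩
  · rw [← N.smul_mem_iff hdet]
    convert N.sub_mem (N.smul_mem d h₁) (N.smul_mem b h₂) using 1
    module
  · rw [← N.smul_mem_iff hdet]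
    convert N.sub_mem (N.smul_mem a h₂) (N.smul_mem c h₁) using 1
    module

lemma a3f_mem_and_b3f_mem_iff (h4 : E4 τ ≠ 0) (hd : Dl τ ≠ 0) (hA1 : A1 τ ∈ S)
    (hA2 : A2 τ ∈ S) (hB2 : B2 τ ∈ S) : a3f τ ∈ S ∧ b3f τ ∈ S ↔ A3 τ ∈ S ∧ B3 τ ∈ S := by
  have hdet : (-7 * E4 τ ^ 2 * E6 τ) * (-20 * E4 τ ^ 3 * E6 τ) -
      (-20 * E4 τ ^ 3) * (-7 * E4 τ ^ 5) ≠ 0 := by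
    have hDl : (-7 * E4 τ ^ 2 * E6 τ) * (-20 * E4 τ ^ 3 * E6 τ) -
        (-20 * E4 τ ^ 3) * (-7 * E4 τ ^ 5) = -241920 * E4 τ ^ 5 * Dl τ := by
      rw [Dl]
      ring
    rw [hDl]
    simp [h4, hd]
  refine Iff.trans (and_congr ?_ ?_)
    (mem_and_mem_iff_of_det_ne_zero (N := S.toSubmodule) hdet (A3 τ) (B3 τ))
  · have ha3 : a3f τ = fun z => 1 / (9 * E4 τ ^ 2 * Dl τ ^ 2) *
        (((-7 * E4 τ ^ 2 * E6 τ) • A3 τ + (-20 * E4 τ ^ 3) • B3 τ) z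
          - 9 * E4 τ * E6 τ * A1 τ z * A2 τ z + 30 * E4 τ ^ 2 * A1 τ z * B2 τ z
          + 6 * E6 τ * A1 τ z ^ 3) := by
      funext z
      simp only [a3f, Pi.add_apply, Pi.smul_apply, smul_eq_mul]
      ring
    rw [ha3]
    simp (maxDischargeDepth := 12) [h4, hd, hA1, hA2, hB2, -Pi.add_apply, -Pi.smul_apply]
  · have hb3 : b3f τ = fun z => 1 / (108 * E4 τ ^ 3 * Dl τ ^ 2) *
        (((-7 * E4 τ ^ 5) • A3 τ + (-20 * E4 τ ^ 3 * E6 τ) • B3 τ) z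
          - 9 * E4 τ ^ 4 * A1 τ z * A2 τ z + 30 * E4 τ ^ 2 * E6 τ * A1 τ z * B2 τ z
          + (16 * E4 τ ^ 3 - 10 * E6 τ ^ 2) * A1 τ z ^ 3) := by
      funext z
      simp only [b3f, Pi.add_apply, Pi.smul_apply, smul_eq_mul]
      ring
    rw [hb3]
    simp (maxDischargeDepth := 12) [h4, hd, hA1, hA2, hB2, -Pi.add_apply, -Pi.smul_apply]

end Triangular

/-- The members of `abGens` of positive index, in their order there. -/
def positiveIndexGens : Fin 9 → ℂ → (Fin 8 → ℂ) → ℂ :=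
  ![a2f, a3f, a4f, b1f, b2f, b3f, b4f, b5f, b6f]

lemma forall_positiveIndexGens_mem_iff {τ : ℂ} (h4 : E4 τ ≠ 0) (hd : Dl τ ≠ 0)
    (S : Subalgebra ℂ ((Fin 8 → ℂ) → ℂ)) :
    (∀ j, positiveIndexGens j τ ∈ S) ↔ ∀ j, nineForms j τ ∈ S := by
  have hgens : (∀ j, positiveIndexGens j τ ∈ S) ↔ b1f τ ∈ S ∧ a2f τ ∈ S ∧ b2f τ ∈ S ∧
      (a3f τ ∈ S ∧ b3f τ ∈ S) ∧ a4f τ ∈ S ∧ b4f τ ∈ S ∧ b5f τ ∈ S ∧ b6f τ ∈ S := by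
    simp only [positiveIndexGens, Fin.forall_fin_succ, Matrix.cons_val_zero, Matrix.cons_val_succ,
      IsEmpty.forall_iff, and_true]
    tauto
  have hforms : (∀ j, nineForms j τ ∈ S) ↔ A1 τ ∈ S ∧ A2 τ ∈ S ∧ B2 τ ∈ S ∧
      (A3 τ ∈ S ∧ B3 τ ∈ S) ∧ A4 τ ∈ S ∧ B4 τ ∈ S ∧ A5 τ ∈ S ∧ B6 τ ∈ S := by
    simp only [nineForms, Fin.forall_fin_succ, Matrix.cons_val_zero, Matrix.cons_val_succ,
      IsEmpty.forall_iff, and_true]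
    tauto
  rw [hgens, hforms, b1f_mem_iff h4]
  refine and_congr_right fun hA1 => ?_
  rw [a2f_mem_iff h4 hd hA1]
  refine and_congr_right fun hA2 => ?_
  rw [b2f_mem_iff h4 hd hA1]
  refine and_congr_right fun hB2 => ?_
  rw [a3f_mem_and_b3f_mem_iff h4 hd hA1 hA2 hB2]
  refine and_congr_right fun ⟨hA3, hB3⟩ => ?_
  rw [a4f_mem_iff h4 hd hA1 hA2 hB2 hA3]
  refine and_congr_right fun hA4 => ?_
  rw [b4f_mem_iff h4 hd hA1 hA2 hB2 hB3]
  refine and_congr_right fun hB4 => ?_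
  rw [b5f_mem_iff h4 hd hA1 hA2 hB2 hA3 hB3]
  exact and_congr_right (b6f_mem_iff h4 hd hA1 hA2 hB2 hA3 hB3 hA4 hB4)

lemma algebraicIndependent_positiveIndexGens {τ : ℂ} (h4 : E4 τ ≠ 0) (hd : Dl τ ≠ 0)
    (h : AlgebraicIndependent ℂ fun j => nineForms j τ) :
    AlgebraicIndependent ℂ fun j => positiveIndexGens j τ := by
  refine algebraicIndependent_of_adjoin_range_eq h (le_antisymm ?_ ?_) <;>
    rw [Algebra.adjoin_le_iff, Set.range_subset_iff]
  · exact (forall_positiveIndexGens_mem_iff h4 hd _).mpr fun j => Algebra.subset_adjoin ⟨j, rfl⟩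
  · exact (forall_positiveIndexGens_mem_iff h4 hd _).mp fun j => Algebra.subset_adjoin ⟨j, rfl⟩

/-- Completes nine values, for the generators of positive index, to eleven values ordered as in
`abGens`; `u` and `v` take the places of the index-zero forms `a_0` and `b_0`. -/
def insertIndexZero {R : Type*} (u v : R) (x : Fin 9 → R) : Fin 11 → R :=
  ![u, x 0, x 1, x 2, v, x 3, x 4, x 5, x 6, x 7, x 8]

lemma abGens_eq_insertIndexZero (τ : ℂ) (z : Fin 8 → ℂ) :
    (fun i => abGens i τ z)
      = insertIndexZero (E4 τ / 12) (E6 τ / 216) fun j => positiveIndexGens j τ z := by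
  funext i
  fin_cases i <;> rfl

lemma exists_eq_insertIndexZero {R : Type*} (y : Fin 11 → R) :
    ∃ u v x, y = insertIndexZero u v x := by
  refine ⟨y 0, y 4, ![y 1, y 2, y 3, y 5, y 6, y 7, y 8, y 9, y 10], ?_⟩
  funext i
  fin_cases i <;> rfl

lemma eval_bind₁_insertIndexZero {R σ : Type*} [CommSemiring R] (u v : MvPolynomial σ R)
    (x : Fin 9 → MvPolynomial σ R) (P : MvPolynomial (Fin 11) R) (y : σ → R) :
    MvPolynomial.eval y (MvPolynomial.bind₁ (insertIndexZero u v x) P)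
      = MvPolynomial.eval (insertIndexZero (MvPolynomial.eval y u) (MvPolynomial.eval y v)
          fun j => MvPolynomial.eval y (x j)) P := by
  simp only [← MvPolynomial.aeval_eq_eval, MvPolynomial.aeval_bind₁]
  congr 2
  funext i
  fin_cases i <;> rfl

lemma eval_insertIndexZero_eq_zero {R X : Type*} [CommRing R] {f : Fin 9 → X → R}
    (hf : AlgebraicIndependent R f) {u v : R} {P : MvPolynomial (Fin 11) R}
    (h : ∀ z, MvPolynomial.eval (insertIndexZero u v fun j => f j z) P = 0) (x : Fin 9 → R) :
    MvPolynomial.eval (insertIndexZero u v x) P = 0 := by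
  set Q : MvPolynomial (Fin 9) R :=
    MvPolynomial.bind₁ (insertIndexZero (.C u) (.C v) .X) P with hQ
  have heval (y : Fin 9 → R) :
      MvPolynomial.eval y Q = MvPolynomial.eval (insertIndexZero u v y) P := by
    simp only [hQ, eval_bind₁_insertIndexZero, MvPolynomial.eval_C, MvPolynomial.eval_X]
  have hQ0 : Q = 0 := algebraicIndependent_iff.mp hf Q <| funext fun z => by
    rw [aeval_pi_apply, heval, h z, Pi.zero_apply]
  rw [← heval, hQ0, map_zero]

lemma eq_zero_of_eventually_goodTau_eval_eq_zero {τ₀ : ℂ} (hτ₀ : 0 < τ₀.im)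
    {G : MvPolynomial (Fin 2) ℂ}
    (h : ∀ᶠ τ in 𝓝 τ₀, GoodTau τ → MvPolynomial.eval ![E4 τ, E6 τ] G = 0) : G = 0 := by
  set H : MvPolynomial (Fin 2) ℂ := .X 0 * .X 1 * (.X 0 ^ 3 - .X 1 ^ 2) with hH
  have hH0 : H ≠ 0 := fun h0 => by
    have := congrArg (MvPolynomial.eval ![1, 2]) h0
    norm_num [hH] at this
  refine (mul_eq_zero.mp ?_).resolve_right hH0
  have him : ∀ᶠ τ : ℂ in 𝓝 τ₀, 0 < τ.im := (isOpen_lt continuous_const continuous_im).mem_nhds hτ₀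
  refine eq_zero_of_eventually_eval_E4_E6_eq_zero hτ₀ ?_
  filter_upwards [h, him] with τ hG hτ
  rw [map_mul, mul_eq_zero, or_iff_not_imp_right]
  intro hne
  simp only [hH, map_mul, map_sub, map_pow, MvPolynomial.eval_X, Matrix.cons_val_zero,
    Matrix.cons_val_one, mul_eq_zero, not_or] at hne
  exact hG ⟨hτ, hne.1.1, hne.1.2, div_ne_zero hne.2 (by norm_num)⟩

/-- The eleven meromorphic Jacobi forms a_0, a_2, a_3, a_4, b_0, b_1, …, b_6
are algebraically independent over ℂ. -/
theorem ab_algebraically_independent :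
    ∀ P : MvPolynomial (Fin 11) ℂ,
      (∀ τ : ℂ, GoodTau τ → ∀ z : Fin 8 → ℂ,
        MvPolynomial.eval (fun i => abGens i τ z) P = 0) → P = 0 := by
  intro P hP
  have hrel : ∀ᶠ τ in 𝓝 baseTau, GoodTau τ → ∀ x,
      MvPolynomial.eval (insertIndexZero (E4 τ / 12) (E6 τ / 216) x) P = 0 := by
    filter_upwards [eventually_algebraicIndependent_nineForms] with τ hτ hgood
    have ⟨_, h4, _, hd⟩ := hgood
    have hind := algebraicIndependent_positiveIndexGens h4 hd hτ
    refine eval_insertIndexZero_eq_zero hind fun z => ?_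
    rw [← abGens_eq_insertIndexZero, hP τ hgood z]
  have hsubst (x : Fin 9 → ℂ) : MvPolynomial.bind₁ (insertIndexZero
      (.C (1 / 12) * .X 0) (.C (1 / 216) * .X 1) fun j => .C (x j)) P
      = (0 : MvPolynomial (Fin 2) ℂ) := by
    refine eq_zero_of_eventually_goodTau_eval_eq_zero baseTau_im_pos ?_
    filter_upwards [hrel] with τ hτ hgood
    simpa [eval_bind₁_insertIndexZero, div_eq_inv_mul] using hτ hgood x
  refine MvPolynomial.funext fun y => ?_
  obtain ⟨u, v, x, rfl⟩ := exists_eq_insertIndexZero y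
  simpa [eval_bind₁_insertIndexZero] using
    congrArg (MvPolynomial.eval ![12 * u, 216 * v]) (hsubst x)

end E8Jacobi
end
end

section
/- Each of the nine basic W(E8)-invariant holomorphic Jacobi forms A_1, A_2, A_3, A_4, A_5, B_2, B_3, B_4, B_6 belongs to the polynomial ring ℂ[a_0, a_2, a_3, a_4, b_0, b_1, b_2, b_3, b_4, b_5, b_6]; explicitly, one has the identities A_1 = −3 a_0 b_1, A_2 = (9 a_0 b_1² − 2Δ a_2)/12, B_2 = (135 b_0 b_1² + 12Δ b_2)/10, and Δ = a_0³ − 27 b_0², where Δ = (E4³ − E6²)/1728. -/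
noncomputable section

open Complex Finset

namespace E8Jacobi

/-!
Clearing denominators in the definitions of `a_i` and `b_j` gives a triangular system for the nine
forms: `A₁`, `A₂`, `B₂` are read off directly, the pair `(A₃, B₃)` then solves a linear system
whose determinant is `E₄³ - E₆² = 1728 Δ` up to a constant and a power of `E₄`, and each of `A₄`,
`B₄`, `A₅`, `B₆` enters linearly into the equation of one further coefficient. All denominators
cancel: with `x = A₁ / E₄ = -b₁ / 4` one finds `A_n = E₄ xⁿ + Δ P_n` and `B_n = E₆ xⁿ + Δ Q_n` for
polynomials `P_n`, `Q_n` in the `a_i` and `b_j`.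
-/

section Polynomials

open MvPolynomial

/-- The variable of `ℂ[a_0, a_2, a_3, a_4, b_0, …, b_6]` standing for `a_i`, numbered as in
`abGens`; it is `0` when `i` is not an index of a generator, in accordance with `a_1 = 0`. -/
def aVar : ℕ → MvPolynomial (Fin 11) ℂ
  | 0 => X 0
  | 2 => X 1
  | 3 => X 2
  | 4 => X 3
  | _ => 0

/-- The variable of `ℂ[a_0, a_2, a_3, a_4, b_0, …, b_6]` standing for `b_j`, numbered as in
`abGens`; it is `0` when `j > 6`. -/
def bVar : ℕ → MvPolynomial (Fin 11) ℂ
  | 0 => X 4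
  | 1 => X 5
  | 2 => X 6
  | 3 => X 7
  | 4 => X 8
  | 5 => X 9
  | 6 => X 10
  | _ => 0

/-- The polynomial `a_0³ - 27 b_0²`, which expresses `Δ`. -/
def discPoly : MvPolynomial (Fin 11) ℂ := aVar 0 ^ 3 - 27 * bVar 0 ^ 2

/-- The polynomial `-b_1 / 4`, which expresses `A_1 / E_4`. -/
def ratioPoly : MvPolynomial (Fin 11) ℂ := C (-1 / 4) * bVar 1

/-- The polynomial `P_n` with `A_n = E_4 (A_1 / E_4)ⁿ + Δ P_n`, for `1 ≤ n ≤ 5`. -/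
def quotPolyA : ℕ → MvPolynomial (Fin 11) ℂ
  | 2 => C (-1 / 6) * aVar 2
  | 3 => C (9 / 56) * bVar 0 * aVar 3 - C (3 / 28) * aVar 0 * bVar 3
      - C (3 / 56) * aVar 2 * bVar 1
  | 4 => C (1 / 2) * discPoly * aVar 4 + C (1 / 16) * aVar 0 ^ 2 * aVar 2 ^ 2
      + C (3 / 4) * aVar 0 * bVar 2 ^ 2 - C (3 / 2) * aVar 0 * bVar 1 * bVar 3
      + C (9 / 4) * bVar 0 * aVar 3 * bVar 1 - C (9 / 4) * bVar 0 * aVar 2 * bVar 2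
      + C (9 / 16) * aVar 2 * bVar 1 ^ 2
  | 5 => discPoly * (C (11 / 336) * aVar 3 * bVar 2 - C (1 / 42) * aVar 0 * bVar 5
        - C (1 / 48) * aVar 2 * bVar 3)
      + C (3 / 448) * aVar 0 ^ 2 * aVar 2 ^ 2 * bVar 1
      + C (9 / 224) * aVar 0 * bVar 1 ^ 2 * bVar 3 - C (3 / 112) * aVar 0 * bVar 1 * bVar 2 ^ 2
      + C (165 / 448) * bVar 0 * aVar 3 * bVar 1 ^ 2
      - C (9 / 112) * bVar 0 * aVar 2 * bVar 1 * bVar 2 - C (25 / 1344) * aVar 2 * bVar 1 ^ 3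
  | _ => 0

/-- The polynomial `Q_n` with `B_n = E_6 (A_1 / E_4)ⁿ + Δ Q_n`, for `n = 2, 3, 4, 6`. -/
def quotPolyB : ℕ → MvPolynomial (Fin 11) ℂ
  | 2 => C (6 / 5) * bVar 2
  | 3 => C (27 / 40) * bVar 0 * bVar 3 - C (3 / 80) * aVar 0 ^ 2 * aVar 3
      - C (9 / 20) * bVar 1 * bVar 2
  | 4 => C (-1 / 5) * discPoly * bVar 4 + C (3 / 20) * aVar 0 ^ 2 * aVar 3 * bVar 1
      - C (1 / 10) * aVar 0 ^ 2 * aVar 2 * bVar 2 + C (3 / 40) * aVar 0 * bVar 0 * aVar 2 ^ 2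
      + C (9 / 10) * bVar 0 * bVar 2 ^ 2 - C (27 / 10) * bVar 0 * bVar 1 * bVar 3
      + C (3 / 20) * bVar 1 ^ 2 * bVar 2
  | 6 => C (-9 / 40) * discPoly ^ 2 * bVar 6
      + discPoly * (C (3 / 160) * aVar 0 ^ 2 * aVar 3 * bVar 3
        - C (1 / 40) * aVar 0 ^ 2 * aVar 2 * bVar 4 - C (3 / 80) * aVar 0 ^ 2 * aVar 4 * bVar 2
        + C (9 / 160) * aVar 0 * bVar 0 * aVar 2 * aVar 4
        - C (9 / 640) * aVar 0 * bVar 0 * aVar 3 ^ 2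
        + C (1 / 160) * aVar 0 * aVar 2 * aVar 3 * bVar 1
        - C (1 / 320) * aVar 0 * aVar 2 ^ 2 * bVar 2 + C (3 / 640) * bVar 0 * aVar 2 ^ 3
        + C (9 / 20) * bVar 0 * bVar 2 * bVar 4 - C (81 / 80) * bVar 0 * bVar 1 * bVar 5
        - C (27 / 160) * bVar 0 * bVar 3 ^ 2 - C (3 / 160) * bVar 1 ^ 2 * bVar 4)
      + C (3 / 80) * aVar 0 ^ 3 * bVar 1 ^ 2 * bVar 4
      + C (3 / 160) * aVar 0 ^ 2 * aVar 2 * bVar 1 ^ 2 * bVar 2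
      - C (9 / 160) * aVar 0 ^ 2 * bVar 0 * aVar 4 * bVar 1 ^ 2
      - C (9 / 160) * aVar 0 ^ 2 * aVar 3 * bVar 1 ^ 3
      - C (27 / 640) * aVar 0 * bVar 0 * aVar 2 ^ 2 * bVar 1 ^ 2
      + C (9 / 640) * bVar 1 ^ 4 * bVar 2 - C (27 / 320) * bVar 0 * bVar 1 ^ 3 * bVar 3
  | _ => 0

/-- The polynomial expressing `A_n` in the `a_i` and `b_j`, for `1 ≤ n ≤ 5`. -/
def polyA (n : ℕ) : MvPolynomial (Fin 11) ℂ :=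
  12 * aVar 0 * ratioPoly ^ n + discPoly * quotPolyA n

/-- The polynomial expressing `B_n` in the `a_i` and `b_j`, for `n = 2, 3, 4, 6`. -/
def polyB (n : ℕ) : MvPolynomial (Fin 11) ℂ :=
  216 * bVar 0 * ratioPoly ^ n + discPoly * quotPolyB n

/-- The polynomials expressing the nine basic forms, in the order of `nineForms`. -/
def nineFormsPoly : Fin 9 → MvPolynomial (Fin 11) ℂ :=
  ![polyA 1, polyA 2, polyA 3, polyA 4, polyA 5, polyB 2, polyB 3, polyB 4, polyB 6]

/-- The value at `(τ, z)` of a polynomial in the `a_i` and `b_j`. -/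
abbrev evalAB (τ : ℂ) (z : Fin 8 → ℂ) : MvPolynomial (Fin 11) ℂ →+* ℂ :=
  eval fun i => abGens i τ z

theorem evalAB_aVar (τ : ℂ) (z : Fin 8 → ℂ) (i : ℕ) : evalAB τ z (aVar i) = aSW i τ z := by
  match i with
  | 0 | 2 | 3 | 4 => exact eval_X _
  | 1 | _ + 5 => exact map_zero _

theorem evalAB_bVar (τ : ℂ) (z : Fin 8 → ℂ) (j : ℕ) : evalAB τ z (bVar j) = bSW j τ z := by
  match j with
  | 0 | 1 | 2 | 3 | 4 | 5 | 6 => exact eval_X _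
  | _ + 7 => exact map_zero _

theorem evalAB_discPoly (τ : ℂ) (z : Fin 8 → ℂ) :
    evalAB τ z discPoly = aSW 0 τ z ^ 3 - 27 * bSW 0 τ z ^ 2 := by
  simp only [discPoly, map_sub, map_mul, map_pow, map_ofNat, evalAB_aVar, evalAB_bVar]

theorem evalAB_polyA (τ : ℂ) (z : Fin 8 → ℂ) (n : ℕ) :
    evalAB τ z (polyA n) = 12 * aSW 0 τ z * (-1 / 4 * bSW 1 τ z) ^ n +
      (aSW 0 τ z ^ 3 - 27 * bSW 0 τ z ^ 2) * evalAB τ z (quotPolyA n) := by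
  simp only [polyA, ratioPoly, map_add, map_mul, map_pow, map_ofNat, eval_C, evalAB_aVar,
    evalAB_bVar, evalAB_discPoly]

theorem evalAB_polyB (τ : ℂ) (z : Fin 8 → ℂ) (n : ℕ) :
    evalAB τ z (polyB n) = 216 * bSW 0 τ z * (-1 / 4 * bSW 1 τ z) ^ n +
      (aSW 0 τ z ^ 3 - 27 * bSW 0 τ z ^ 2) * evalAB τ z (quotPolyB n) := by
  simp only [polyB, ratioPoly, map_add, map_mul, map_pow, map_ofNat, eval_C, evalAB_bVar,
    evalAB_discPoly]

end Polynomials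

theorem E4_eq_aSW (τ : ℂ) (z : Fin 8 → ℂ) : E4 τ = 12 * aSW 0 τ z := by
  simp only [aSW, a0f]
  ring

theorem E6_eq_bSW (τ : ℂ) (z : Fin 8 → ℂ) : E6 τ = 216 * bSW 0 τ z := by
  simp only [bSW, b0f]
  ring

theorem Dl_eq_aSW_bSW (τ : ℂ) (z : Fin 8 → ℂ) :
    Dl τ = aSW 0 τ z ^ 3 - 27 * bSW 0 τ z ^ 2 := by
  rw [Dl, E4_eq_aSW τ z, E6_eq_bSW τ z]
  ring

section GoodTau

variable {τ : ℂ}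

theorem GoodTau.E4_ne_zero (hτ : GoodTau τ) : E4 τ ≠ 0 := hτ.2.1

theorem GoodTau.Dl_ne_zero (hτ : GoodTau τ) : Dl τ ≠ 0 := hτ.2.2.2

theorem GoodTau.mul_E4_pow_mul_Dl_pow_ne_zero (hτ : GoodTau τ) {c : ℂ} (hc : c ≠ 0) (m n : ℕ) :
    c * E4 τ ^ m * Dl τ ^ n ≠ 0 :=
  mul_ne_zero (mul_ne_zero hc (pow_ne_zero m hτ.E4_ne_zero)) (pow_ne_zero n hτ.Dl_ne_zero)

theorem A1_eq (hτ : GoodTau τ) (z : Fin 8 → ℂ) : A1 τ z = -3 * aSW 0 τ z * bSW 1 τ z := by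
  have hE4 := hτ.E4_ne_zero
  simp only [aSW, bSW, a0f, b1f]
  field_simp
  ring

theorem A2_eq (hτ : GoodTau τ) (z : Fin 8 → ℂ) :
    A2 τ z = (9 * aSW 0 τ z * bSW 1 τ z ^ 2 - 2 * Dl τ * aSW 2 τ z) / 12 := by
  have hE4 := hτ.E4_ne_zero
  have hDl := hτ.Dl_ne_zero
  simp only [aSW, bSW, a0f, b1f, a2f]
  field_simp
  ring

theorem B2_eq (hτ : GoodTau τ) (z : Fin 8 → ℂ) :
    B2 τ z = (135 * bSW 0 τ z * bSW 1 τ z ^ 2 + 12 * Dl τ * bSW 2 τ z) / 10 := by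
  have hE4 := hτ.E4_ne_zero
  have hDl := hτ.Dl_ne_zero
  simp only [bSW, b0f, b1f, b2f]
  field_simp
  ring

theorem A1_eq_evalAB (hτ : GoodTau τ) (z : Fin 8 → ℂ) :
    A1 τ z = evalAB τ z (polyA 1) := by
  simp only [A1_eq hτ z, evalAB_polyA, quotPolyA, map_zero]
  ring

theorem A2_eq_evalAB (hτ : GoodTau τ) (z : Fin 8 → ℂ) :
    A2 τ z = evalAB τ z (polyA 2) := by
  simp only [A2_eq hτ z, Dl_eq_aSW_bSW τ z, evalAB_polyA, quotPolyA, map_mul,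
    MvPolynomial.eval_C, evalAB_aVar]
  ring

theorem B2_eq_evalAB (hτ : GoodTau τ) (z : Fin 8 → ℂ) :
    B2 τ z = evalAB τ z (polyB 2) := by
  simp only [B2_eq hτ z, Dl_eq_aSW_bSW τ z, evalAB_polyB, quotPolyB, map_mul,
    MvPolynomial.eval_C, evalAB_bVar]
  ring

theorem A3_eq_evalAB (hτ : GoodTau τ) (z : Fin 8 → ℂ) :
    A3 τ z = evalAB τ z (polyA 3) := by
  have ha : aSW 3 τ z = a3f τ z := rfl
  have hb : bSW 3 τ z = b3f τ z := rfl
  rw [a3f, one_div, eq_inv_mul_iff_mul_eq₀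
    (hτ.mul_E4_pow_mul_Dl_pow_ne_zero (by norm_num) _ _)] at ha
  rw [b3f, one_div, eq_inv_mul_iff_mul_eq₀
    (hτ.mul_E4_pow_mul_Dl_pow_ne_zero (by norm_num) _ _)] at hb
  refine mul_left_cancel₀ (hτ.mul_E4_pow_mul_Dl_pow_ne_zero (c := 7 * 1728) (by norm_num) 2 1) ?_
  simp only [E4_eq_aSW τ z, E6_eq_bSW τ z, Dl_eq_aSW_bSW τ z, A1_eq hτ z, A2_eq hτ z, B2_eq hτ z,
    evalAB_polyA, quotPolyA, map_sub, map_mul, MvPolynomial.eval_C, evalAB_aVar,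
    evalAB_bVar] at ha hb ⊢
  linear_combination hb - 216 * bSW 0 τ z * ha

theorem B3_eq_evalAB (hτ : GoodTau τ) (z : Fin 8 → ℂ) :
    B3 τ z = evalAB τ z (polyB 3) := by
  have ha : aSW 3 τ z = a3f τ z := rfl
  have hb : bSW 3 τ z = b3f τ z := rfl
  rw [a3f, one_div, eq_inv_mul_iff_mul_eq₀
    (hτ.mul_E4_pow_mul_Dl_pow_ne_zero (by norm_num) _ _)] at ha
  rw [b3f, one_div, eq_inv_mul_iff_mul_eq₀
    (hτ.mul_E4_pow_mul_Dl_pow_ne_zero (by norm_num) _ _)] at hb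
  refine mul_left_cancel₀ (hτ.mul_E4_pow_mul_Dl_pow_ne_zero (c := 20 * 1728) (by norm_num) 3 1) ?_
  simp only [E4_eq_aSW τ z, E6_eq_bSW τ z, Dl_eq_aSW_bSW τ z, A1_eq hτ z, A2_eq hτ z, B2_eq hτ z,
    evalAB_polyB, quotPolyB, map_sub, map_mul, map_pow, MvPolynomial.eval_C, evalAB_aVar,
    evalAB_bVar] at ha hb ⊢
  linear_combination (12 * aSW 0 τ z) ^ 3 * ha - 216 * bSW 0 τ z * hb

theorem A4_eq_evalAB (hτ : GoodTau τ) (z : Fin 8 → ℂ) :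
    A4 τ z = evalAB τ z (polyA 4) := by
  have h : aSW 4 τ z = a4f τ z := rfl
  rw [a4f, one_div, eq_inv_mul_iff_mul_eq₀
    (hτ.mul_E4_pow_mul_Dl_pow_ne_zero (by norm_num) _ _)] at h
  refine mul_left_cancel₀ (hτ.mul_E4_pow_mul_Dl_pow_ne_zero (c := 576) (by norm_num) 3 1) ?_
  simp only [E4_eq_aSW τ z, E6_eq_bSW τ z, Dl_eq_aSW_bSW τ z, A1_eq hτ z, A2_eq hτ z, B2_eq hτ z,
    A3_eq_evalAB hτ z, evalAB_polyA, quotPolyA, map_add, map_sub, map_mul, map_pow,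
    MvPolynomial.eval_C, evalAB_aVar, evalAB_bVar, evalAB_discPoly] at h ⊢
  linear_combination -h

theorem B4_eq_evalAB (hτ : GoodTau τ) (z : Fin 8 → ℂ) :
    B4 τ z = evalAB τ z (polyB 4) := by
  have h : bSW 4 τ z = b4f τ z := rfl
  rw [b4f, one_div, eq_inv_mul_iff_mul_eq₀
    (hτ.mul_E4_pow_mul_Dl_pow_ne_zero (by norm_num) _ _)] at h
  refine mul_left_cancel₀ (hτ.mul_E4_pow_mul_Dl_pow_ne_zero (c := 8640) (by norm_num) 4 1) ?_
  simp only [E4_eq_aSW τ z, E6_eq_bSW τ z, Dl_eq_aSW_bSW τ z, A1_eq hτ z, A2_eq hτ z, B2_eq hτ z,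
    B3_eq_evalAB hτ z, evalAB_polyB, quotPolyB, map_add, map_sub, map_mul, map_pow,
    MvPolynomial.eval_C, evalAB_aVar, evalAB_bVar, evalAB_discPoly] at h ⊢
  linear_combination h

theorem A5_eq_evalAB (hτ : GoodTau τ) (z : Fin 8 → ℂ) :
    A5 τ z = evalAB τ z (polyA 5) := by
  have h : bSW 5 τ z = b5f τ z := rfl
  rw [b5f, one_div, eq_inv_mul_iff_mul_eq₀
    (hτ.mul_E4_pow_mul_Dl_pow_ne_zero (by norm_num) _ _)] at h
  refine mul_left_cancel₀ (hτ.mul_E4_pow_mul_Dl_pow_ne_zero (c := 36288) (by norm_num) 4 1) ?_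
  simp only [E4_eq_aSW τ z, E6_eq_bSW τ z, Dl_eq_aSW_bSW τ z, A1_eq hτ z, A2_eq hτ z, B2_eq hτ z,
    A3_eq_evalAB hτ z, B3_eq_evalAB hτ z, evalAB_polyA, evalAB_polyB, quotPolyA, quotPolyB, map_add,
    map_sub, map_mul, map_pow, MvPolynomial.eval_C, evalAB_aVar, evalAB_bVar,
    evalAB_discPoly] at h ⊢
  linear_combination h

theorem B6_eq_evalAB (hτ : GoodTau τ) (z : Fin 8 → ℂ) :
    B6 τ z = evalAB τ z (polyB 6) := by
  have h : bSW 6 τ z = b6f τ z := rfl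
  rw [b6f, one_div, eq_inv_mul_iff_mul_eq₀
    (hτ.mul_E4_pow_mul_Dl_pow_ne_zero (by norm_num) _ _)] at h
  refine mul_left_cancel₀ (hτ.mul_E4_pow_mul_Dl_pow_ne_zero (c := 19906560) (by norm_num) 6 2) ?_
  simp only [E4_eq_aSW τ z, E6_eq_bSW τ z, Dl_eq_aSW_bSW τ z, A1_eq hτ z, A2_eq hτ z, B2_eq hτ z,
    A3_eq_evalAB hτ z, B3_eq_evalAB hτ z, A4_eq_evalAB hτ z, B4_eq_evalAB hτ z, A5_eq_evalAB hτ z,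
    evalAB_polyA, evalAB_polyB, quotPolyA, quotPolyB, map_add, map_sub, map_mul, map_pow,
    MvPolynomial.eval_C, evalAB_aVar, evalAB_bVar, evalAB_discPoly] at h ⊢
  linear_combination h

theorem nineForms_eq_evalAB (hτ : GoodTau τ) (z : Fin 8 → ℂ) (i : Fin 9) :
    nineForms i τ z = evalAB τ z (nineFormsPoly i) := by
  fin_cases i
  exacts [A1_eq_evalAB hτ z, A2_eq_evalAB hτ z, A3_eq_evalAB hτ z, A4_eq_evalAB hτ z,
    A5_eq_evalAB hτ z, B2_eq_evalAB hτ z, B3_eq_evalAB hτ z, B4_eq_evalAB hτ z, B6_eq_evalAB hτ z]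

end GoodTau

/-- The nine basic holomorphic Jacobi forms are polynomials in
a_0, a_2, a_3, a_4, b_0, …, b_6; explicitly A_1 = −3a_0b_1,
A_2 = (9a_0b_1² − 2Δa_2)/12, B_2 = (135b_0b_1² + 12Δb_2)/10 and Δ = a_0³ − 27b_0². -/
theorem nineForms_in_R :
    (∀ i : Fin 9, MemR (nineForms i)) ∧
    (∀ τ : ℂ, GoodTau τ → ∀ z : Fin 8 → ℂ,
      A1 τ z = -3 * aSW 0 τ z * bSW 1 τ z ∧
      A2 τ z = (9 * aSW 0 τ z * bSW 1 τ z ^ 2 - 2 * Dl τ * aSW 2 τ z) / 12 ∧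
      B2 τ z = (135 * bSW 0 τ z * bSW 1 τ z ^ 2 + 12 * Dl τ * bSW 2 τ z) / 10 ∧
      Dl τ = aSW 0 τ z ^ 3 - 27 * bSW 0 τ z ^ 2) := by
  refine ⟨fun i => ⟨nineFormsPoly i, fun τ hτ z => nineForms_eq_evalAB hτ z i⟩, fun τ hτ z => ?_⟩
  exact ⟨A1_eq hτ z, A2_eq hτ z, B2_eq hτ z, Dl_eq_aSW_bSW τ z⟩

end E8Jacobi
end
end
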